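/- arXiv:2010.02572 — 3 statements merged into one kernel-verified Lean document; each statement's English description precedes it below -/
import Mathlib

section
/- (Kallin's lemma) Suppose: (1) X₁ and X₂ are polynomially convex compact subsets of ℂⁿ; (2) Y₁ and Y₂ are polynomially convex compact subsets of ℂ such that 0 is a boundary point of both Y₁ and Y₂ and Y₁ ∩ Y₂ = {0}; (3) p is a polynomial such that p(X₁) = Y₁ and p(X₂) = Y₂; (4) p⁻¹(0) ∩ (X₁ ∪ X₂) is polynomially convex. Then X₁ ∪ X₂ is polynomially convex. -/
open Complex MvPolynomial

noncomputable section

/-- `K ⊆ ℂⁿ` is polynomially convex: every point satisfying the maximum inequality over `K`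
for all polynomials already lies in `K`. -/
def PolyConvex {n : ℕ} (K : Set (Fin n → ℂ)) : Prop :=
  ∀ z : Fin n → ℂ,
    (∀ P : MvPolynomial (Fin n) ℂ, ‖eval z P‖ ≤ sSup ((fun w => ‖eval w P‖) '' K)) → z ∈ K

/-- `K ⊆ ℂ` is polynomially convex. -/
def PolyConvex1 (K : Set ℂ) : Prop :=
  ∀ z : ℂ, (∀ P : Polynomial ℂ, ‖P.eval z‖ ≤ sSup ((fun w => ‖P.eval w‖) '' K)) → z ∈ K

/-!
Let `z` lie in the polynomially convex hull of `X₁ ∪ X₂`. By Janiszewski's theorem `Y = Y₁ ∪ Y₂`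
does not separate the plane, hence is polynomially convex and contains `p z`. An estimate
`|q| * |f ∘ p| ≤ c` on `X₁ ∪ X₂`, with `q` a polynomial and `f` a uniform limit of polynomials on
`Y`, persists at `z`, and two functions `f` suffice.

If `p z ≠ 0`, say `p z ∈ Y₁`, take for `f` the function equal to `w` on `Y₁` and to `0` on `Y₂`.
If `z ∉ X₁`, some `q` with `q z = 1` has `|q| ≤ δ < 1` on `X₁`, so that `|p z| ≤ δ ^ m * M` for
every `m`. That `f` is a uniform limit of polynomials comes from the Cauchy–Pompeiu formula:
smooth it out near `0`, where `Y₁` and `Y₂` touch, and split its Cauchy transform into a part with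
density supported off `Y`, which is a superposition of functions `1 / (ζ - w)`, and a small part
near `0`.

If `p z = 0`, take for `f` a function that is not small at `0`, bounded independently of `R` and
`ε`, and at most `ε` outside the disc of radius `R`. It is built from a square root of
`(w - a) / (w - b)`, where `a` and `b` are points off `Y` close to `0` that are joined off `Y`.
Powers of a polynomial `q` with `q z = 1` and `|q| < 1` on the zero fibre of `p` then give the
contradiction.
-/

open Set Filter Topology Metric Bornology MeasureTheory

/-! ### Compact sets without holes -/

section Topology

variable {α : Type*} [TopologicalSpace α]

lemma closure_connectedComponentIn_inter_subset (s : Set α) (x : α) :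
    closure (connectedComponentIn s x) ∩ s ⊆ connectedComponentIn s x := by
  by_cases hx : x ∈ s
  · have hxC : x ∈ connectedComponentIn s x := mem_connectedComponentIn hx
    exact (isPreconnected_connectedComponentIn.subset_closure
      (subset_inter subset_closure (connectedComponentIn_subset s x))
      inter_subset_left).subset_connectedComponentIn
        ⟨subset_closure hxC, hx⟩ inter_subset_right
  · simp [connectedComponentIn_eq_empty hx]

lemma frontier_connectedComponentIn_compl_subset [LocallyConnectedSpace α] {Y : Set α}
    (hY : IsClosed Y) (x : α) : frontier (connectedComponentIn Yᶜ x) ⊆ Y := by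
  intro y hy
  by_contra hyY
  rw [hY.isOpen_compl.connectedComponentIn.frontier_eq] at hy
  exact hy.2 (closure_connectedComponentIn_inter_subset _ _ ⟨hy.1, hyY⟩)

end Topology

/-- `Y ⊆ ℂ` has no holes if its complement has no bounded connected component. For compact `Y`
this is polynomial convexity, see `polyConvex1_iff_hasNoHoles`. -/
def HasNoHoles (Y : Set ℂ) : Prop :=
  ∀ a ∉ Y, ¬ IsBounded (connectedComponentIn Yᶜ a)

lemma PolyConvex1.hasNoHoles {Y : Set ℂ} (hYc : IsCompact Y) (hY : PolyConvex1 Y) :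
    HasNoHoles Y := by
  refine fun a ha hb ↦ ha (hY a fun P ↦ ?_)
  refine norm_le_of_forall_mem_frontier_norm_le hb P.differentiable.diffContOnCl (fun w hw ↦ ?_)
    (subset_closure (mem_connectedComponentIn ha))
  exact le_csSup (hYc.image (by fun_prop)).bddAbove
    ⟨w, frontier_connectedComponentIn_compl_subset hYc.isClosed a hw, rfl⟩

section PolyAlgebra

/-- The uniform algebra `P(Y)` of uniform limits of polynomials on the compact set `Y`. -/
abbrev polyAlgebra (Y : Set ℂ) [CompactSpace Y] : Subalgebra ℂ C(Y, ℂ) :=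
  (polynomialFunctions Y).topologicalClosure

variable (Y : Set ℂ) [CompactSpace Y]

instance : IsClosed (polyAlgebra Y : Set C(Y, ℂ)) :=
  (polynomialFunctions Y).isClosed_topologicalClosure

instance : CompleteSpace (polyAlgebra Y) :=
  (polynomialFunctions Y).isClosed_topologicalClosure.completeSpace_coe

/-- The coordinate function `w ↦ w` as an element of `P(Y)`. -/
def polyAlgebraX : polyAlgebra Y :=
  ⟨Polynomial.toContinuousMapOn .X Y,
    (polynomialFunctions Y).le_topologicalClosure ⟨.X, trivial, rfl⟩⟩

@[simp]
lemma polyAlgebraX_apply (w : Y) : (polyAlgebraX Y).1 w = w := by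
  simp [polyAlgebraX]

variable {Y}

lemma HasNoHoles.spectrum_polyAlgebraX_subset (hY : HasNoHoles Y) :
    spectrum ℂ (polyAlgebraX Y) ⊆ Y := by
  intro a ha
  by_contra haY
  have hspec : spectrum ℂ (polyAlgebraX Y : C(Y, ℂ)) = Y := by
    rw [ContinuousMap.spectrum_eq_range]
    ext; simp
  refine hY a haY ?_
  simpa only [hspec] using Subalgebra.spectrum_isBounded_connectedComponentIn (polyAlgebra Y)
    (polyAlgebraX Y) ha

lemma exists_polynomial_forall_norm_sub_lt (f : polyAlgebra Y) {ε : ℝ} (hε : 0 < ε) :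
    ∃ P : Polynomial ℂ, ∀ w : Y, ‖f.1 w - P.eval (w : ℂ)‖ < ε := by
  obtain ⟨-, ⟨P, -, rfl⟩, hP⟩ := Metric.mem_closure_iff.1 f.2 ε hε
  refine ⟨P, fun w ↦ ?_⟩
  have := (ContinuousMap.dist_lt_iff hε).1 hP w
  simpa [dist_eq_norm] using this

lemma HasNoHoles.resolvent_polyAlgebraX_apply (hY : HasNoHoles Y) {a : ℂ} (ha : a ∉ Y) (w : Y) :
    (resolvent (polyAlgebraX Y) a).1 w = (a - w)⁻¹ := by
  have hunit : IsUnit (algebraMap ℂ (polyAlgebra Y) a - polyAlgebraX Y) := by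
    by_contra h
    exact ha (hY.spectrum_polyAlgebraX_subset h)
  have hmul := congr_arg (fun f : polyAlgebra Y ↦ f.1 w) (Ring.inverse_mul_cancel _ hunit)
  exact eq_inv_of_mul_eq_one_left (by simpa [resolvent] using hmul)

end PolyAlgebra

lemma HasNoHoles.polyConvex1 {Y : Set ℂ} (hYc : IsCompact Y) (hY : HasNoHoles Y) :
    PolyConvex1 Y := by
  have : CompactSpace Y := isCompact_iff_compactSpace.1 hYc
  intro a ha
  by_contra haY
  obtain ⟨M, hM0, hM⟩ := (hYc.image (f := fun w ↦ a - w) (by fun_prop)).isBounded.exists_pos_norm_le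
  obtain ⟨Q, hQ⟩ := exists_polynomial_forall_norm_sub_lt (resolvent (polyAlgebraX Y) a)
    (show 0 < (2 * M)⁻¹ by positivity)
  have hsmall : ∀ w ∈ Y, ‖(1 - (.C a - .X) * Q : Polynomial ℂ).eval w‖ ≤ 1 / 2 := by
    intro w hw
    have hne : a - w ≠ 0 := sub_ne_zero.2 fun h ↦ haY (h ▸ hw)
    have hQw : ‖(a - w)⁻¹ - Q.eval w‖ < (2 * M)⁻¹ := by
      have := hQ ⟨w, hw⟩
      rwa [hY.resolvent_polyAlgebraX_apply haY] at this
    have heval : (1 - (.C a - .X) * Q : Polynomial ℂ).eval w =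
        (a - w) * ((a - w)⁻¹ - Q.eval w) := by
      rw [mul_sub, mul_inv_cancel₀ hne]; simp
    calc ‖(1 - (.C a - .X) * Q : Polynomial ℂ).eval w‖
        = ‖a - w‖ * ‖(a - w)⁻¹ - Q.eval w‖ := by rw [heval, norm_mul]
      _ ≤ M * (2 * M)⁻¹ := mul_le_mul (hM _ ⟨w, hw, rfl⟩) hQw.le (norm_nonneg _) hM0.le
      _ = 1 / 2 := by field_simp
  have hle : ‖(1 - (.C a - .X) * Q : Polynomial ℂ).eval a‖ ≤ 1 / 2 :=
    (ha _).trans (Real.sSup_le (forall_mem_image.2 hsmall) (by norm_num))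
  norm_num at hle

lemma polyConvex1_iff_hasNoHoles {Y : Set ℂ} (hYc : IsCompact Y) :
    PolyConvex1 Y ↔ HasNoHoles Y :=
  ⟨fun hY ↦ hY.hasNoHoles hYc, fun hY ↦ hY.polyConvex1 hYc⟩

/-! ### Logarithms on compact sets without holes -/

lemma eventually_nhds_one_exists_exp_eq {A : Type*} [NormedCommRing A] [NormedAlgebra ℂ A]
    [CompleteSpace A] {ε : ℝ} (hε : 0 < ε) :
    ∀ᶠ u in 𝓝 (1 : A), ∃ l : A, ‖l‖ < ε ∧ NormedSpace.exp l = u := by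
  have hmap : map NormedSpace.exp (𝓝 (0 : A)) = 𝓝 1 := by
    simpa using (hasStrictFDerivAt_exp_zero (𝕂 := ℂ) (𝔸 := A)).map_nhds_eq_of_equiv
      (f' := ContinuousLinearEquiv.refl ℂ A)
  rw [← hmap]
  filter_upwards [image_mem_map (ball_mem_nhds (0 : A) hε)] with _ ⟨l, hl, hlu⟩
  exact ⟨l, by simpa using hl, hlu⟩

lemma algHom_exp {A : Type*} [NormedRing A] [NormedAlgebra ℂ A] [CompleteSpace A]
    (φ : A →ₐ[ℂ] ℂ) (l : A) : φ (NormedSpace.exp l) = exp (φ l) := by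
  rw [exp_eq_exp_ℂ]
  let : NormedAlgebra ℚ A := .restrictScalars ℚ ℂ A
  exact NormedSpace.map_exp φ (map_continuous φ) l

/-- Evaluation at `w ∈ Y` as a character of `P(Y)`. -/
def polyAlgebraEval {Y : Set ℂ} [CompactSpace Y] (w : Y) : polyAlgebra Y →ₐ[ℂ] ℂ :=
  (ContinuousMap.evalAlgHom ℂ ℂ w).comp (polyAlgebra Y).val

lemma polyAlgebra_exp_apply {Y : Set ℂ} [CompactSpace Y] (l : polyAlgebra Y) (w : Y) :
    (NormedSpace.exp l).1 w = exp (l.1 w) :=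
  algHom_exp (polyAlgebraEval w) l

lemma abs_arg_lt_pi_div_two_of_norm_sub_one_lt {z : ℂ} (hz : ‖z - 1‖ < 1) :
    |arg z| < Real.pi / 2 := by
  refine abs_arg_lt_pi_div_two_iff.2 (.inl ?_)
  have := (abs_le.1 (abs_re_le_norm (z - 1))).1
  simp only [sub_re, one_re] at this
  linarith

lemma div_sub_sub_one {a b w : ℂ} (hb : w ≠ b) : (w - a) / (w - b) - 1 = (b - a) / (w - b) := by
  field_simp [sub_ne_zero.2 hb]
  ring

lemma norm_div_sub_one_lt_one {a b w : ℂ} {ρ : ℝ} (ha : ‖a‖ < ρ) (hb : ‖b‖ < ρ)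
    (hw : 3 * ρ ≤ ‖w‖) : ‖(w - a) / (w - b) - 1‖ < 1 := by
  have hab : ‖b - a‖ < 2 * ρ := (norm_sub_le b a).trans_lt (by linarith)
  have hwb : 2 * ρ < ‖w - b‖ := by linarith [norm_sub_norm_le w b]
  have hpos : 0 < ‖w - b‖ := by linarith [norm_nonneg b]
  rw [div_sub_sub_one (sub_ne_zero.1 (norm_pos_iff.1 hpos)), norm_div, div_lt_one hpos]
  exact hab.trans hwb

section Log

variable {Y : Set ℂ} [CompactSpace Y]

lemma HasNoHoles.eventually_exists_exp_eq_div (hY : HasNoHoles Y) {x : ℂ} (hx : x ∉ Y) :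
    ∀ᶠ y in 𝓝 x, ∃ l : polyAlgebra Y, ∀ w : Y, ‖l.1 w‖ < 1 ∧ exp (l.1 w) = (w - y) / (w - x) := by
  have htend : Tendsto (fun y ↦ 1 + (y - x) • resolvent (polyAlgebraX Y) x) (𝓝 x) (𝓝 1) := by
    have : Continuous fun y ↦ 1 + (y - x) • resolvent (polyAlgebraX Y) x := by fun_prop
    simpa using this.tendsto x
  filter_upwards [htend.eventually (eventually_nhds_one_exists_exp_eq one_pos)]
    with y ⟨l, hl, hly⟩
  refine ⟨l, fun w ↦ ⟨(l.1.norm_coe_le_norm w).trans_lt hl, ?_⟩⟩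
  have hwx : (w : ℂ) ≠ x := fun h ↦ hx (h ▸ w.2)
  have happly : (1 + (y - x) • resolvent (polyAlgebraX Y) x).1 w = 1 + (y - x) * (x - w)⁻¹ := by
    rw [← hY.resolvent_polyAlgebraX_apply hx w]
    rfl
  rw [← polyAlgebra_exp_apply, hly, happly, eq_comm, ← sub_eq_iff_eq_add', div_sub_sub_one hwx,
    ← neg_sub x (w : ℂ), div_neg, ← neg_div, neg_sub, div_eq_mul_inv]

/- Requiring the principal branch far away makes the choice of logarithm unique there, so that it
stays small near infinity along the chain of small displacements of the pole. -/
lemma HasNoHoles.exists_exp_eq_div (hY : HasNoHoles Y) {V : Set ℂ} (hV : IsPreconnected V)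
    {ρ : ℝ} (hVY : V ⊆ Yᶜ ∩ ball 0 ρ) {a b : ℂ} (ha : a ∈ V) (hb : b ∈ V) :
    ∃ l : polyAlgebra Y, ∀ w : Y, exp (l.1 w) = (w - a) / (w - b) ∧
      (3 * ρ ≤ ‖(w : ℂ)‖ → l.1 w = log ((w - a) / (w - b))) := by
  have hnorm : ∀ x ∈ V, ‖x‖ < ρ := fun x hx ↦ by simpa using (hVY hx).2
  have hlog : ∀ {z : ℂ}, ‖z‖ < 1 → log (exp z) = z := fun {z} hz ↦ by
    have := abs_le.1 ((abs_im_le_norm z).trans hz.le)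
    exact log_exp (by linarith [Real.pi_gt_three]) (by linarith [Real.pi_gt_three])
  refine hV.induction₂' (fun a b ↦ ∃ l : polyAlgebra Y, ∀ w : Y,
    exp (l.1 w) = (w - a) / (w - b) ∧
      (3 * ρ ≤ ‖(w : ℂ)‖ → l.1 w = log ((w - a) / (w - b)))) ?_ ?_ ha hb
  · intro x hx
    filter_upwards [nhdsWithin_le_nhds (hY.eventually_exists_exp_eq_div (hVY hx).1)]
      with y ⟨l, hl⟩
    have hneg : ∀ w : Y, exp (-l.1 w) = (w - x) / (w - y) := fun w ↦ by
      rw [exp_neg, (hl w).2, inv_div]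
    exact ⟨⟨-l, fun w ↦ ⟨hneg w, fun _ ↦ by rw [← hneg, hlog (by simpa using (hl w).1)]; rfl⟩⟩,
      ⟨l, fun w ↦ ⟨(hl w).2, fun _ ↦ by rw [← (hl w).2, hlog (hl w).1]⟩⟩⟩
  · rintro x y z hx hy hz ⟨l, hl⟩ ⟨l', hl'⟩
    have hne : ∀ v ∈ V, ∀ w : Y, (w : ℂ) - v ≠ 0 := fun v hv w ↦
      sub_ne_zero.2 fun h ↦ (hVY hv).1 (h ▸ w.2)
    have hdiv : ∀ w : Y, ((w : ℂ) - x) / (w - z) = (w - x) / (w - y) * ((w - y) / (w - z)) :=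
      fun w ↦ (div_mul_div_cancel₀ (hne y hy w)).symm
    refine ⟨l + l', fun w ↦ ⟨?_, fun hw ↦ ?_⟩⟩
    · rw [hdiv, ← (hl w).1, ← (hl' w).1, ← exp_add]; rfl
    · have harg := abs_lt.1 <| abs_arg_lt_pi_div_two_of_norm_sub_one_lt <|
        norm_div_sub_one_lt_one (hnorm x hx) (hnorm y hy) hw
      have harg' := abs_lt.1 <| abs_arg_lt_pi_div_two_of_norm_sub_one_lt <|
        norm_div_sub_one_lt_one (hnorm y hy) (hnorm z hz) hw
      rw [hdiv, log_mul (div_ne_zero (hne x hx w) (hne y hy w))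
        (div_ne_zero (hne y hy w) (hne z hz w)) ⟨by linarith, by linarith⟩, ← (hl w).2 hw,
        ← (hl' w).2 hw]
      rfl

end Log

lemma HasNoHoles.exists_mem_connectedComponentIn_inter_ball {Y : Set ℂ} (hY : HasNoHoles Y)
    (hYc : IsClosed Y) {a : ℂ} (ha : a ∉ Y) {s ρ : ℝ} (haρ : ‖a‖ < ρ) (hs : s < ρ) :
    ∃ b ∈ connectedComponentIn (Yᶜ ∩ ball 0 ρ) a, s ≤ ‖b‖ := by
  by_contra! hsmall
  set C := connectedComponentIn (Yᶜ ∩ ball 0 ρ) a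
  have hCball : C ⊆ ball 0 s := fun b hb ↦ by simpa using hsmall b hb
  have hclosure : closure C ⊆ ball 0 ρ :=
    (closure_mono hCball).trans (closure_ball_subset_closedBall.trans (closedBall_subset_ball hs))
  have haC : a ∈ C := mem_connectedComponentIn ⟨ha, by simpa using haρ⟩
  have hsub : connectedComponentIn Yᶜ a ⊆ C :=
    isPreconnected_connectedComponentIn.subset_of_closure_inter_subset
      (hYc.isOpen_compl.inter isOpen_ball).connectedComponentIn
      ⟨a, mem_connectedComponentIn ha, haC⟩ fun x hx ↦
        closure_connectedComponentIn_inter_subset _ _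
          ⟨hx.1, connectedComponentIn_subset _ _ hx.2, hclosure hx.1⟩
  exact hY a ha (isBounded_ball.subset (hsub.trans hCball))

lemma HasNoHoles.exists_continuousOn_exp_eq_sub {Y : Set ℂ} (hYc : IsCompact Y)
    (hY : HasNoHoles Y) {a : ℂ} (ha : a ∉ Y) :
    ∃ u : ℂ → ℂ, ContinuousOn u Y ∧ ∀ w ∈ Y, exp (u w) = w - a := by
  have : CompactSpace Y := isCompact_iff_compactSpace.1 hYc
  obtain ⟨M, hM0, hM⟩ := hYc.isBounded.exists_pos_norm_lt
  have haρ : ‖a‖ < max M ‖a‖ + 1 := (le_max_right _ _).trans_lt (lt_add_one _)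
  obtain ⟨b, hbC, hMb⟩ := hY.exists_mem_connectedComponentIn_inter_ball hYc.isClosed ha haρ
    ((le_max_left M ‖a‖).trans_lt (lt_add_one _))
  obtain ⟨l, hl⟩ := hY.exists_exp_eq_div isPreconnected_connectedComponentIn
    (connectedComponentIn_subset _ _) (mem_connectedComponentIn ⟨ha, by simpa using haρ⟩) hbC
  obtain ⟨L, hL⟩ := ContinuousMap.exists_restrict_eq hYc.isClosed l.1
  have hb0 : b ≠ 0 := norm_pos_iff.1 (hM0.trans_le hMb)
  have hslit : ∀ w ∈ Y, 1 + -w / b ∈ slitPlane := fun w hw ↦ mem_slitPlane_of_norm_lt_one <| by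
    rw [norm_div, norm_neg, div_lt_one (norm_pos_iff.2 hb0)]
    exact (hM w hw).trans_le hMb
  refine ⟨fun w ↦ L w + (log (-b) + log (1 + -w / b)), ?_, fun w hw ↦ ?_⟩
  · exact L.continuous.continuousOn.add
      (continuousOn_const.add (ContinuousOn.clog (by fun_prop) hslit))
  · have hwb : w - b ≠ 0 := sub_ne_zero.2 fun h ↦ (connectedComponentIn_subset _ _ hbC).1 (h ▸ hw)
    have hLw : L w = l.1 ⟨w, hw⟩ := DFunLike.congr_fun hL ⟨w, hw⟩
    have hexp : exp (log (-b) + log (1 + -w / b)) = w - b := by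
      rw [exp_add, exp_log (neg_ne_zero.2 hb0), exp_log (slitPlane_ne_zero (hslit w hw))]
      field_simp
      ring
    rw [exp_add, hexp, hLw, (hl ⟨w, hw⟩).1, div_mul_cancel₀ _ hwb]

lemma eq_of_continuousOn_of_exp_eq {α : Type*} [TopologicalSpace α] {s : Set α}
    (hs : IsPreconnected s) {f : α → ℂ} (hf : ContinuousOn f s) {c : ℂ}
    (hexp : ∀ x ∈ s, exp (f x) = c) {x y : α} (hx : x ∈ s) (hy : y ∈ s) : f x = f y :=
  isCoveringMap_exp.constOn_of_comp hs hf
    (fun x hx y hy ↦ Subtype.ext ((hexp x hx).trans (hexp y hy).symm)) hx hy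

lemma not_exists_continuous_exp_eq_sub {g : ℂ → ℂ} (hg : Continuous g) (a : ℂ) (R : ℝ) :
    ¬ ∀ w, R ≤ ‖w‖ → exp (g w) = w - a := by
  intro hexp
  set ρ : ℝ := |R| + ‖a‖ + 1
  have hρ : 0 < ρ := by positivity
  have hfar : ∀ t : ℝ, R ≤ ‖a + ρ * exp (t * I)‖ := fun t ↦ by
    have hnorm : ‖(ρ : ℂ) * exp (t * I)‖ = ρ := by simp [norm_exp_ofReal_mul_I, abs_of_pos hρ]
    have htri : ‖(ρ : ℂ) * exp (t * I)‖ ≤ ‖a + ρ * exp (t * I)‖ + ‖a‖ := by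
      simpa using norm_sub_le (a + ρ * exp (t * I)) a
    linarith [le_abs_self R]
  -- The angle `t` is a multiple of `2π` on the circle but `g` has a single value at its endpoint.
  have hconst : g (a + ρ * exp ((0 : ℝ) * I)) - (0 : ℝ) * I =
      g (a + ρ * exp ((2 * Real.pi : ℝ) * I)) - (2 * Real.pi : ℝ) * I := by
    refine eq_of_continuousOn_of_exp_eq (c := ρ) isPreconnected_univ
      (f := fun t : ℝ ↦ g (a + ρ * exp (t * I)) - t * I) (by fun_prop) (fun t _ ↦ ?_)
      (mem_univ _) (mem_univ _)
    rw [exp_sub, hexp _ (hfar t), add_sub_cancel_left, mul_div_cancel_right₀ _ (exp_ne_zero _)]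
  have hpi : 2 * Real.pi * I = 0 := by simpa [exp_two_pi_mul_I] using hconst.symm
  simp at hpi

/- A logarithm of `w - a` on `Y` extends over the component of `a`, where it yields a
nonvanishing replacement of `w - a`; if the component is bounded, this replacement has a logarithm
on `ℂ` that agrees with one of `w - a` near infinity. -/
lemma hasNoHoles_of_forall_exists_exp_eq_sub {Y : Set ℂ} (hYc : IsClosed Y)
    (hlog : ∀ a ∉ Y, ∃ u : ℂ → ℂ, ContinuousOn u Y ∧ ∀ w ∈ Y, exp (u w) = w - a) :
    HasNoHoles Y := by
  classical
  intro a ha hbdd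
  obtain ⟨u, huc, hu⟩ := hlog a ha
  obtain ⟨F, hF⟩ := ContinuousMap.exists_restrict_eq hYc
    ⟨Y.domRestrict u, continuousOn_iff_continuous_domRestrict.1 huc⟩
  have hFu : ∀ w ∈ Y, F w = u w := fun w hw ↦ DFunLike.congr_fun hF ⟨w, hw⟩
  set U := connectedComponentIn Yᶜ a
  have haU : a ∈ U := mem_connectedComponentIn ha
  let k : ℂ → ℂ := U.piecewise (fun w ↦ exp (F w)) (fun w ↦ w - a)
  have hk : Continuous k := by
    refine Continuous.piecewise (fun w hw ↦ ?_) (by fun_prop) (by fun_prop)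
    have hwY := frontier_connectedComponentIn_compl_subset hYc a hw
    rw [hFu w hwY, hu w hwY]
  have hk0 : ∀ w, k w ≠ 0 := fun w ↦ by
    by_cases hw : w ∈ U
    · simp [k, hw]
    · simpa [k, hw, sub_eq_zero] using fun h : w = a ↦ hw (h ▸ haU)
  have huniv : IsSimplyConnected (univ : Set ℂ) := by
    have := (convex_univ (𝕜 := ℝ) (E := ℂ)).contractibleSpace univ_nonempty
    exact SimplyConnectedSpace.ofContractible _
  obtain ⟨g, hg, hgk⟩ := exists_continuousOn_eqOn_exp_comp huniv isOpen_univ hk.continuousOn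
    (by simpa using hk0)
  obtain ⟨R, hR⟩ := hbdd.exists_norm_le
  refine not_exists_continuous_exp_eq_sub (continuousOn_univ.1 hg) a (R + 1) fun w hw ↦ ?_
  have hwU : w ∉ U := fun h ↦ by linarith [hR w h]
  simpa [k, hwU] using hgk (mem_univ w)

/- This is Janiszewski's theorem: on the connected intersection two logarithms of `w - a` differ
by a constant, so they can be glued. -/
lemma HasNoHoles.union {Y₁ Y₂ : Set ℂ} (h₁ : HasNoHoles Y₁) (h₂ : HasNoHoles Y₂)
    (hc₁ : IsCompact Y₁) (hc₂ : IsCompact Y₂) (hconn : IsPreconnected (Y₁ ∩ Y₂)) :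
    HasNoHoles (Y₁ ∪ Y₂) := by
  classical
  refine hasNoHoles_of_forall_exists_exp_eq_sub (hc₁.union hc₂).isClosed fun a ha ↦ ?_
  obtain ⟨u₁, hu₁c, hu₁⟩ := h₁.exists_continuousOn_exp_eq_sub hc₁ fun h ↦ ha (.inl h)
  obtain ⟨u₂, hu₂c, hu₂⟩ := h₂.exists_continuousOn_exp_eq_sub hc₂ fun h ↦ ha (.inr h)
  obtain ⟨c, hc, hu⟩ : ∃ c, exp c = 1 ∧ ∀ w ∈ Y₁ ∩ Y₂, u₁ w = u₂ w + c := by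
    have hexp : ∀ w ∈ Y₁ ∩ Y₂, exp (u₁ w - u₂ w) = 1 := fun w hw ↦ by
      have hwa : w ≠ a := ne_of_mem_of_not_mem (mem_union_left Y₂ hw.1) ha
      rw [exp_sub, hu₁ w hw.1, hu₂ w hw.2, div_self (sub_ne_zero.2 hwa)]
    obtain hempty | ⟨w₀, hw₀⟩ := (Y₁ ∩ Y₂).eq_empty_or_nonempty
    · exact ⟨0, exp_zero, by simp [hempty]⟩
    · refine ⟨u₁ w₀ - u₂ w₀, hexp w₀ hw₀, fun w hw ↦ sub_eq_iff_eq_add'.1 ?_⟩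
      exact eq_of_continuousOn_of_exp_eq hconn
        ((hu₁c.mono inter_subset_left).sub (hu₂c.mono inter_subset_right)) hexp hw hw₀
  have hEq₁ : EqOn (Y₁.piecewise u₁ fun w ↦ u₂ w + c) u₁ Y₁ := piecewise_eqOn _ _ _
  have hEq₂ : EqOn (Y₁.piecewise u₁ fun w ↦ u₂ w + c) (fun w ↦ u₂ w + c) Y₂ := fun w hw ↦ by
    by_cases hw₁ : w ∈ Y₁
    · rw [hEq₁ hw₁, hu w ⟨hw₁, hw⟩]
    · exact piecewise_eq_of_notMem _ _ _ hw₁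
  refine ⟨Y₁.piecewise u₁ fun w ↦ u₂ w + c, ?_, ?_⟩
  · exact (hu₁c.congr hEq₁).union_of_isClosed ((hu₂c.add continuousOn_const).congr hEq₂)
      hc₁.isClosed hc₂.isClosed
  · rintro w (hw | hw)
    · rw [hEq₁ hw, hu₁ w hw]
    · rw [hEq₂ hw, exp_add, hu₂ w hw, hc, mul_one]

/-! ### Quasi-peak functions -/

lemma isPreconnected_ball_sdiff_center (c : ℂ) (r : ℝ) : IsPreconnected (ball c r \ {c}) := by
  obtain hr | hr := le_or_gt r 0
  · simpa [ball_eq_empty.2 hr] using isPreconnected_empty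
  have himage : ball c r \ {c} = (fun z ↦ c + exp z) '' {z | z.re < Real.log r} := by
    ext w
    simp only [Set.mem_sdiff, mem_ball, dist_eq_norm, mem_singleton_iff, mem_image, mem_ofPred_eq]
    refine ⟨fun ⟨hw, hwc⟩ ↦ ⟨log (w - c), ?_, ?_⟩, ?_⟩
    · rw [log_re]
      exact Real.log_lt_log (norm_pos_iff.2 (sub_ne_zero.2 hwc)) hw
    · rw [exp_log (sub_ne_zero.2 hwc), add_sub_cancel]
    · rintro ⟨z, hz, rfl⟩
      simpa [norm_exp, ← Real.lt_log_iff_exp_lt hr] using hz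
  rw [himage]
  exact (convex_halfSpace_re_lt _).isPreconnected.image _ (by fun_prop)

lemma mem_closure_compl_union {Y₁ Y₂ : Set ℂ} (hc₁ : IsClosed Y₁) (hc₂ : IsClosed Y₂) {c : ℂ}
    (h₁ : c ∈ frontier Y₁) (h₂ : c ∈ frontier Y₂) (hY : Y₁ ∩ Y₂ = {c}) :
    c ∈ closure (Y₁ ∪ Y₂)ᶜ := by
  by_contra hcon
  rw [closure_compl, notMem_compl_iff, mem_interior_iff_mem_nhds] at hcon
  obtain ⟨r, hr, hball⟩ := Metric.mem_nhds_iff.1 hcon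
  have hnot : ∀ Z : Set ℂ, IsClosed Z → c ∈ frontier Z → ¬ ball c r \ {c} ⊆ Z := by
    intro Z hZc hZ hsub
    refine hZ.2 (mem_interior_iff_mem_nhds.2 (mem_of_superset (ball_mem_nhds c hr) fun x hx ↦ ?_))
    obtain rfl | hxc := eq_or_ne x c
    · exact hZc.frontier_subset hZ
    · exact hsub ⟨hx, hxc⟩
  obtain h | h := isPreconnected_iff_subset_of_disjoint_closed.1
    (isPreconnected_ball_sdiff_center c r) Y₁ Y₂ hc₁ hc₂ (sdiff_subset.trans hball)
    (by rw [hY, sdiff_inter_self])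
  · exact hnot Y₁ hc₁ h₁ h
  · exact hnot Y₂ hc₂ h₂ h

section Cayley

variable {a b w g : ℂ}

lemma one_add_mul_one_sub_eq_div (hab : a ≠ b) (hg : g ^ 2 * (w - b) = w - a) :
    1 + 2 / (b - a) * ((w - b) * (1 - g)) = (g - 1) / (g + 1) := by
  have hba : b - a ≠ 0 := sub_ne_zero.2 hab.symm
  have hprod : (w - b) * (1 - g) * (g + 1) = a - b := by linear_combination -hg
  have hg1 : g + 1 ≠ 0 := fun h ↦ hba (by linear_combination hprod - (w - b) * (1 - g) * h)
  rw [eq_div_iff hg1]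
  field_simp
  linear_combination 2 * hprod

lemma norm_cayley_le_norm_sq_sub_one (hg : 0 ≤ g.re) : ‖(g - 1) / (g + 1)‖ ≤ ‖g ^ 2 - 1‖ := by
  have hone : 1 ≤ ‖g + 1‖ := le_trans (by simpa using hg) (re_le_norm (g + 1))
  calc ‖(g - 1) / (g + 1)‖ = ‖g - 1‖ / ‖g + 1‖ := norm_div _ _
    _ ≤ ‖g - 1‖ := div_le_self (norm_nonneg _) hone
    _ ≤ ‖g - 1‖ * ‖g + 1‖ := le_mul_of_one_le_right (norm_nonneg _) hone
    _ = ‖g ^ 2 - 1‖ := by rw [← norm_mul]; ring_nf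

lemma norm_cayley_mul_norm_le {ρ : ℝ} (hg : g ^ 2 * (w - b) = w - a) (hgre : 0 ≤ g.re)
    (ha : ‖a‖ ≤ ρ) (hb : ‖b‖ ≤ ρ) (hw : 3 * ρ ≤ ‖w‖) :
    ‖(g - 1) / (g + 1)‖ * ‖w‖ ≤ 3 * ρ := by
  have hprod : (g ^ 2 - 1) * (w - b) = b - a := by linear_combination hg
  calc ‖(g - 1) / (g + 1)‖ * ‖w‖ ≤ ‖g ^ 2 - 1‖ * (3 / 2 * ‖w - b‖) := by
        gcongr
        · exact norm_cayley_le_norm_sq_sub_one hgre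
        · linarith [norm_sub_norm_le w b]
    _ = 3 / 2 * ‖b - a‖ := by rw [← hprod, norm_mul]; ring
    _ ≤ 3 * ρ := by linarith [norm_sub_le b a]

lemma half_le_norm_cayley (hg : ‖g‖ ≤ 1 / 10) : 1 / 2 ≤ ‖(g - 1) / (g + 1)‖ := by
  have hsub : 9 / 10 ≤ ‖g - 1‖ := by
    have := norm_sub_norm_le 1 g
    rw [norm_one, norm_sub_rev] at this
    linarith
  have hadd : ‖g + 1‖ ≤ 11 / 10 := (norm_add_le g 1).trans (by rw [norm_one]; linarith)
  have hpos : 0 < ‖g + 1‖ := by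
    have := norm_sub_norm_le 1 (-g)
    rw [norm_one, norm_neg, sub_neg_eq_add, add_comm] at this
    linarith
  rw [norm_div, le_div_iff₀ hpos]
  linarith

lemma norm_mul_le_of_sq_mul_eq {ρ : ℝ} (hg : g ^ 2 * (w - b) = w - a) (hwa : ‖w - a‖ ≤ ρ)
    (hwb : ‖w - b‖ ≤ ρ) : ‖(w - b) * g‖ ≤ ρ := by
  have hsq : ((w - b) * g) ^ 2 = (w - a) * (w - b) := by linear_combination (w - b) * hg
  have hρ : 0 ≤ ρ := (norm_nonneg _).trans hwa
  refine (sq_le_sq₀ (norm_nonneg _) hρ).1 ?_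
  calc ‖(w - b) * g‖ ^ 2 = ‖w - a‖ * ‖w - b‖ := by rw [← norm_pow, hsq, norm_mul]
    _ ≤ ρ ^ 2 := by rw [sq]; gcongr

lemma norm_one_add_mul_le {ρ : ℝ} (hg : g ^ 2 * (w - b) = w - a) (hρ : 0 < ρ) (hw : ‖w‖ ≤ 3 * ρ)
    (ha : ‖a‖ ≤ ρ / 200) (hb : ‖b‖ ≤ ρ) (hb' : ρ / 2 ≤ ‖b‖) :
    ‖1 + 2 / (b - a) * ((w - b) * (1 - g))‖ ≤ 100 := by
  have hwa : ‖w - a‖ ≤ 4 * ρ := (norm_sub_le w a).trans (by linarith)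
  have hwb : ‖w - b‖ ≤ 4 * ρ := (norm_sub_le w b).trans (by linarith)
  have hba : ρ / 3 ≤ ‖b - a‖ := by linarith [norm_sub_norm_le b a]
  have hprod : ‖(w - b) * (1 - g)‖ ≤ 8 * ρ := by
    rw [mul_sub, mul_one]
    linarith [norm_sub_le (w - b) ((w - b) * g), norm_mul_le_of_sq_mul_eq hg hwa hwb]
  calc ‖1 + 2 / (b - a) * ((w - b) * (1 - g))‖
      ≤ 1 + 2 / ‖b - a‖ * ‖(w - b) * (1 - g)‖ := by
        simpa using norm_add_le 1 (2 / (b - a) * ((w - b) * (1 - g)))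
    _ ≤ 1 + 2 / (ρ / 3) * (8 * ρ) := by gcongr
    _ ≤ 100 := by field_simp; norm_num

end Cayley

section QuasiPeak

variable {Y : Set ℂ} [CompactSpace Y]

lemma HasNoHoles.exists_sq_mul_eq_sub (hY : HasNoHoles Y) {V : Set ℂ} (hV : IsPreconnected V)
    {ρ : ℝ} (hVY : V ⊆ Yᶜ ∩ ball 0 ρ) {a b : ℂ} (ha : a ∈ V) (hb : b ∈ V) :
    ∃ g : polyAlgebra Y, ∀ w : Y, g.1 w ^ 2 * (w - b) = w - a ∧
      (3 * ρ ≤ ‖(w : ℂ)‖ → 0 ≤ (g.1 w).re) := by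
  obtain ⟨l, hl⟩ := hY.exists_exp_eq_div hV hVY ha hb
  refine ⟨NormedSpace.exp ((1 / 2 : ℂ) • l), fun w ↦ ?_⟩
  have happly : (NormedSpace.exp ((1 / 2 : ℂ) • l)).1 w = exp (1 / 2 * l.1 w) :=
    polyAlgebra_exp_apply _ w
  rw [happly]
  refine ⟨?_, fun hw ↦ ?_⟩
  · have hwb : (w : ℂ) - b ≠ 0 := sub_ne_zero.2 (ne_of_mem_of_not_mem w.2 (hVY hb).1)
    rw [← exp_nat_mul, Nat.cast_ofNat, ← mul_assoc, mul_one_div_cancel two_ne_zero, one_mul,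
      (hl w).1, div_mul_cancel₀ _ hwb]
  · have him : (1 / 2 * l.1 w).im = arg ((w - a) / (w - b)) / 2 := by
      rw [(hl w).2 hw, one_div, inv_mul_eq_div, div_ofNat_im, log_im]
    rw [exp_re, him]
    have hpi := abs_le.1 (abs_arg_le_pi (((w : ℂ) - a) / (w - b)))
    exact mul_nonneg (Real.exp_pos _).le
      (Real.cos_nonneg_of_mem_Icc ⟨by linarith, by linarith⟩)

/- With `g ^ 2 = (w - a) / (w - b)`, the Cayley transform `(g - 1) / (g + 1)` of `g` is a polynomial
in `w` and `g`, so it lies in `P(Y)`; it decays because `g → 1` at infinity. -/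
lemma HasNoHoles.exists_norm_mul_norm_le (hY : HasNoHoles Y) (h0 : 0 ∈ Y) (h0c : 0 ∈ closure Yᶜ)
    {ρ : ℝ} (hρ : 0 < ρ) :
    ∃ F : polyAlgebra Y, 1 / 2 ≤ ‖F.1 ⟨0, h0⟩‖ ∧
      ∀ w : Y, ‖F.1 w‖ ≤ 100 ∧ (3 * ρ ≤ ‖(w : ℂ)‖ → ‖F.1 w‖ * ‖(w : ℂ)‖ ≤ 3 * ρ) := by
  have hYc : IsClosed Y := (isCompact_iff_compactSpace.2 ‹_›).isClosed
  obtain ⟨a, haY, ha⟩ := Metric.mem_closure_iff.1 h0c (ρ / 200) (by positivity)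
  rw [dist_zero_left] at ha
  have haρ : ‖a‖ < ρ := by linarith
  obtain ⟨b, hbC, hb⟩ := hY.exists_mem_connectedComponentIn_inter_ball hYc haY
    haρ (half_lt_self hρ)
  obtain ⟨hbY, hbρ⟩ := connectedComponentIn_subset _ _ hbC
  rw [mem_ball_zero_iff] at hbρ
  obtain ⟨g, hg⟩ := hY.exists_sq_mul_eq_sub isPreconnected_connectedComponentIn
    (connectedComponentIn_subset _ _)
    (mem_connectedComponentIn ⟨haY, mem_ball_zero_iff.2 haρ⟩) hbC
  have hab : a ≠ b := by rintro rfl; linarith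
  let F : polyAlgebra Y :=
    1 + (2 / (b - a)) • ((polyAlgebraX Y - algebraMap ℂ _ b) * (1 - g))
  have hF : ∀ w : Y, F.1 w = 1 + 2 / (b - a) * ((w - b) * (1 - g.1 w)) := fun w ↦ by
    rw [← polyAlgebraX_apply]; rfl
  have hF' : ∀ w : Y, F.1 w = (g.1 w - 1) / (g.1 w + 1) := fun w ↦ by
    rw [hF, one_add_mul_one_sub_eq_div hab (hg w).1]
  have hfar : ∀ w : Y, 3 * ρ ≤ ‖(w : ℂ)‖ → ‖F.1 w‖ * ‖(w : ℂ)‖ ≤ 3 * ρ := fun w hw ↦ by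
    rw [hF']
    exact norm_cayley_mul_norm_le (hg w).1 ((hg w).2 hw) haρ.le hbρ.le hw
  refine ⟨F, ?_, fun w ↦ ⟨?_, hfar w⟩⟩
  · rw [hF']
    refine half_le_norm_cayley ((sq_le_sq₀ (norm_nonneg _) (by norm_num)).1 ?_)
    have hnorm : ‖g.1 ⟨0, h0⟩‖ ^ 2 * ‖b‖ = ‖a‖ := by
      simpa using congr_arg norm (hg ⟨0, h0⟩).1
    nlinarith [sq_nonneg ‖g.1 ⟨0, h0⟩‖]
  · obtain hw | hw := le_total ‖(w : ℂ)‖ (3 * ρ)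
    · rw [hF]
      exact norm_one_add_mul_le (hg w).1 hρ hw ha.le hbρ.le hb
    · have hone : ‖F.1 w‖ ≤ 1 :=
        le_of_mul_le_mul_right (by linarith [hfar w hw]) (show 0 < ‖(w : ℂ)‖ by linarith)
      linarith

lemma HasNoHoles.exists_quasiPeak (hY : HasNoHoles Y) (h0 : 0 ∈ Y) (h0c : 0 ∈ closure Yᶜ)
    {R ε : ℝ} (hR : 0 < R) (hε : 0 < ε) :
    ∃ F : polyAlgebra Y, 1 / 2 ≤ ‖F.1 ⟨0, h0⟩‖ ∧
      ∀ w : Y, ‖F.1 w‖ ≤ 100 ∧ (R ≤ ‖(w : ℂ)‖ → ‖F.1 w‖ ≤ ε) := by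
  obtain ⟨F, hF0, hF⟩ := hY.exists_norm_mul_norm_le h0 h0c
    (show 0 < min 1 ε * R / 3 by positivity)
  refine ⟨F, hF0, fun w ↦ ⟨(hF w).1, fun hw ↦ ?_⟩⟩
  have hdecay := (hF w).2 <| by
    linarith [mul_le_mul_of_nonneg_right (min_le_left 1 ε) hR.le]
  refine le_of_mul_le_mul_right ?_ (hR.trans_le hw)
  calc ‖F.1 w‖ * ‖(w : ℂ)‖ ≤ min 1 ε * R := by linarith
    _ ≤ ε * ‖(w : ℂ)‖ := by gcongr; exact min_le_right 1 ε

end QuasiPeak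

/-! ### The Cauchy transform -/

section CauchyTransform

lemma add_polarCoord_symm (w : ℂ) (p : ℝ × ℝ) :
    w + Complex.polarCoord.symm p = circleMap w p.1 p.2 := by
  rw [Complex.polarCoord_symm_apply, circleMap, exp_mul_I, ofReal_cos, ofReal_sin]

lemma circleMap_sub_eq_ofReal_mul (w : ℂ) (ρ θ : ℝ) :
    circleMap w ρ θ - w = ρ * circleMap 0 1 θ := by
  simp [circleMap]

lemma lintegral_enorm_div_sub (f : ℂ → ℂ) (w : ℂ) :
    ∫⁻ ζ, ‖f ζ / (ζ - w)‖ₑ =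
      ∫⁻ p in polarCoord.target, ‖f (circleMap w p.1 p.2)‖ₑ := by
  rw [← lintegral_add_left_eq_self _ w, ← Complex.lintegral_comp_polarCoord_symm]
  refine setLIntegral_congr_fun polarCoord.open_target.measurableSet fun p hp ↦ ?_
  have hρ : 0 < p.1 := hp.1
  simp only [add_polarCoord_symm, circleMap_sub_eq_ofReal_mul, ← ofReal_norm, norm_div, norm_mul,
    norm_circleMap_zero, norm_real, Real.norm_of_nonneg hρ.le, abs_one, mul_one, smul_eq_mul]
  rw [← ENNReal.ofReal_mul hρ.le, mul_div_cancel₀ _ hρ.ne']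

lemma integral_div_sub (f : ℂ → ℂ) (w : ℂ) :
    ∫ ζ, f ζ / (ζ - w) =
      ∫ p in polarCoord.target, f (circleMap w p.1 p.2) / circleMap 0 1 p.2 := by
  rw [← integral_add_left_eq_self _ w, ← Complex.integral_comp_polarCoord_symm]
  refine setIntegral_congr_fun polarCoord.open_target.measurableSet fun p hp ↦ ?_
  have hρ : (p.1 : ℂ) ≠ 0 := ofReal_ne_zero.2 (ne_of_gt hp.1)
  simp only [add_polarCoord_symm, circleMap_sub_eq_ofReal_mul, real_smul]
  rw [← mul_div_assoc, mul_div_mul_left _ _ hρ]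

-- Each ray from `w` meets `closedBall 0 s` in a set of length at most `2 * s`.
lemma lintegral_enorm_circleMap_le {f : ℂ → ℂ} {C s : ℝ} (hC : ∀ ζ, ‖f ζ‖ ≤ C)
    (hfs : ∀ ζ, s < ‖ζ‖ → f ζ = 0) (w : ℂ) (θ : ℝ) :
    ∫⁻ ρ, ‖f (circleMap w ρ θ)‖ₑ ≤ ENNReal.ofReal (2 * C * s) := by
  have hC0 : 0 ≤ C := (norm_nonneg _).trans (hC 0)
  set D : Set ℝ := {ρ | ‖circleMap w ρ θ‖ ≤ s}
  have hdiam : ediam D ≤ ENNReal.ofReal (2 * s) := by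
    refine ediam_le_of_forall_dist_le fun ρ hρ ρ' hρ' ↦ ?_
    have hsub : circleMap w ρ θ - circleMap w ρ' θ = ((ρ - ρ' : ℝ) : ℂ) * circleMap 0 1 θ := by
      simp [circleMap, sub_mul]
    have hnorm := norm_sub_le (circleMap w ρ θ) (circleMap w ρ' θ)
    rw [hsub, norm_mul, norm_circleMap_zero, norm_real, abs_one, mul_one] at hnorm
    rw [dist_eq_norm]
    linarith [hρ.out, hρ'.out]
  calc ∫⁻ ρ, ‖f (circleMap w ρ θ)‖ₑ
      ≤ ∫⁻ ρ, D.indicator (fun _ ↦ ENNReal.ofReal C) ρ := by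
        refine lintegral_mono fun ρ ↦ ?_
        by_cases hρ : ρ ∈ D
        · rw [indicator_of_mem hρ, ← ofReal_norm]
          exact ENNReal.ofReal_le_ofReal (hC _)
        · simp [hfs _ (not_le.1 hρ)]
    _ ≤ ENNReal.ofReal C * volume D := lintegral_indicator_const_le _ _
    _ ≤ ENNReal.ofReal C * ENNReal.ofReal (2 * s) := by
        gcongr; exact (Real.volume_le_diam D).trans hdiam
    _ = ENNReal.ofReal (2 * C * s) := by rw [← ENNReal.ofReal_mul hC0]; ring_nf

lemma lintegral_enorm_div_sub_le {f : ℂ → ℂ} (hf : Measurable f) {C s : ℝ}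
    (hs : 0 ≤ s) (hC : ∀ ζ, ‖f ζ‖ ≤ C) (hfs : ∀ ζ, s < ‖ζ‖ → f ζ = 0) (w : ℂ) :
    ∫⁻ ζ, ‖f ζ / (ζ - w)‖ₑ ≤ ENNReal.ofReal (4 * Real.pi * C * s) := by
  have hC0 : 0 ≤ C := (norm_nonneg _).trans (hC 0)
  have hmeas : Measurable fun p : ℝ × ℝ ↦ ‖f (circleMap w p.1 p.2)‖ₑ :=
    (hf.comp (by fun_prop : Continuous fun p : ℝ × ℝ ↦ circleMap w p.1 p.2).measurable).enorm
  calc ∫⁻ ζ, ‖f ζ / (ζ - w)‖ₑ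
      = ∫⁻ θ in Ioo (-Real.pi) Real.pi, ∫⁻ ρ in Ioi 0, ‖f (circleMap w ρ θ)‖ₑ := by
        rw [lintegral_enorm_div_sub, polarCoord_target, Measure.volume_eq_prod,
          setLIntegral_prod_symm _ hmeas.aemeasurable]
    _ ≤ ∫⁻ _ in Ioo (-Real.pi) Real.pi, ENNReal.ofReal (2 * C * s) :=
        lintegral_mono fun θ ↦ (setLIntegral_le_lintegral _ _).trans
          (lintegral_enorm_circleMap_le hC hfs w θ)
    _ = ENNReal.ofReal (4 * Real.pi * C * s) := by
        rw [setLIntegral_const, Real.volume_Ioo, ← ENNReal.ofReal_mul (by positivity)]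
        ring_nf

lemma norm_integral_div_sub_le {f : ℂ → ℂ} (hf : Measurable f) {C s : ℝ}
    (hs : 0 ≤ s) (hC : ∀ ζ, ‖f ζ‖ ≤ C) (hfs : ∀ ζ, s < ‖ζ‖ → f ζ = 0) (w : ℂ) :
    ‖∫ ζ, f ζ / (ζ - w)‖ ≤ 4 * Real.pi * C * s := by
  have hC0 : 0 ≤ C := (norm_nonneg _).trans (hC 0)
  have hle := (enorm_integral_le_lintegral_enorm _).trans
    (lintegral_enorm_div_sub_le hf hs hC hfs w)
  rwa [← ofReal_norm, ENNReal.ofReal_le_ofReal_iff (by positivity)] at hle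

lemma integrable_div_sub {f : ℂ → ℂ} (hf : Continuous f) (hfc : HasCompactSupport f)
    (w : ℂ) : Integrable fun ζ ↦ f ζ / (ζ - w) := by
  obtain ⟨C, hC⟩ := hfc.exists_bound_of_continuous hf
  obtain ⟨s, hs, hfs⟩ := hfc.exists_pos_le_norm
  refine ⟨(hf.measurable.div (by fun_prop)).aestronglyMeasurable, ?_⟩
  exact (lintegral_enorm_div_sub_le hf.measurable hs.le hC (fun ζ hζ ↦ hfs ζ hζ.le) w).trans_lt
    ENNReal.ofReal_lt_top

/-- The Wirtinger derivative `∂G/∂ζ̄ = (∂G/∂x + i ∂G/∂y) / 2`. -/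
def dbar (G : ℂ → ℂ) (ζ : ℂ) : ℂ :=
  (fderiv ℝ G ζ 1 + I * fderiv ℝ G ζ I) / 2

lemma continuous_dbar {G : ℂ → ℂ} (hG : ContDiff ℝ 1 G) : Continuous (dbar G) := by
  have := hG.continuous_fderiv one_ne_zero
  unfold dbar
  fun_prop

lemma dbar_const (c ζ : ℂ) : dbar (fun _ ↦ c) ζ = 0 := by
  simp [dbar]

lemma dbar_id (ζ : ℂ) : dbar id ζ = 0 := by
  simp [dbar]

lemma dbar_mul {f g : ℂ → ℂ} (hf : Differentiable ℝ f) (hg : Differentiable ℝ g) (ζ : ℂ) :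
    dbar (fun z ↦ f z * g z) ζ = f ζ * dbar g ζ + g ζ * dbar f ζ := by
  unfold dbar
  rw [fderiv_fun_mul (hf ζ) (hg ζ)]
  simp only [FunLike.coe_add, FunLike.coe_smul, Pi.add_apply, Pi.smul_apply, smul_eq_mul]
  ring

lemma dbar_congr {f g : ℂ → ℂ} {ζ : ℂ} (h : f =ᶠ[𝓝 ζ] g) :
    dbar f ζ = dbar g ζ := by
  rw [dbar, dbar, h.fderiv_eq]

lemma hasCompactSupport_dbar {G : ℂ → ℂ} (hGc : HasCompactSupport G) :
    HasCompactSupport (dbar G) :=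
  (hGc.fderiv ℝ).mono fun ζ hζ h ↦ hζ (by simp [dbar, h])

lemma dbar_mul_conj (G : ℂ → ℂ) (ζ u : ℂ) :
    dbar G ζ * (starRingEnd ℂ) u = (fderiv ℝ G ζ u + I * fderiv ℝ G ζ (u * I)) / 2 := by
  have hlin : ∀ (L : ℂ →L[ℝ] ℂ) (z : ℂ), L z = z.re * L 1 + z.im * L I := by
    intro L z
    rw [← real_smul, ← real_smul, ← map_smul, ← map_smul, ← map_add]
    simp [re_add_im]
  have hconj : (starRingEnd ℂ) u = u.re - u.im * I := by
    apply Complex.ext <;> simp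
  rw [hlin _ u, hlin _ (u * I), hconj, dbar]
  simp only [mul_re, mul_im, I_re, I_im]
  push_cast
  linear_combination (-u.im * fderiv ℝ G ζ I / 2) * I_sq

lemma integral_Ioi_fderiv_circleMap {G : ℂ → ℂ} (hG : ContDiff ℝ 1 G) (hGc : HasCompactSupport G)
    (w : ℂ) (θ : ℝ) :
    ∫ ρ in Ioi (0 : ℝ), fderiv ℝ G (circleMap w ρ θ) (circleMap 0 1 θ) = -G w := by
  have hray : ∀ ρ : ℝ, HasDerivAt (fun ρ : ℝ ↦ circleMap w ρ θ) (circleMap 0 1 θ) ρ := fun ρ ↦ by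
    simpa [circleMap] using (((hasDerivAt_id ρ).ofReal_comp).mul_const (exp (θ * I))).const_add w
  have hemb : IsClosedEmbedding fun ρ : ℝ ↦ circleMap w ρ θ := by
    refine Isometry.isClosedEmbedding (Isometry.of_dist_eq fun ρ ρ' ↦ ?_)
    simp [circleMap, dist_eq_norm, ← sub_mul, ← ofReal_sub]
  have hGray : ContDiff ℝ 1 (G ∘ fun ρ : ℝ ↦ circleMap w ρ θ) :=
    hG.comp (contDiff_const.add (ofRealCLM.contDiff.mul contDiff_const))
  have hderiv : deriv (G ∘ fun ρ : ℝ ↦ circleMap w ρ θ) =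
      fun ρ ↦ fderiv ℝ G (circleMap w ρ θ) (circleMap 0 1 θ) := funext fun ρ ↦
    ((hG.differentiable one_ne_zero _).hasFDerivAt.comp_hasDerivAt ρ (hray ρ)).deriv
  rw [← hderiv, (hGc.comp_isClosedEmbedding hemb).integral_Ioi_deriv_eq hGray]
  simp

lemma integral_Ioo_fderiv_circleMap {G : ℂ → ℂ} (hG : ContDiff ℝ 1 G) (w : ℂ) {ρ : ℝ}
    (hρ : ρ ≠ 0) :
    ∫ θ in Ioo (-Real.pi) Real.pi, fderiv ℝ G (circleMap w ρ θ) (circleMap 0 1 θ * I) = 0 := by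
  have hderiv : ∀ θ : ℝ, HasDerivAt (fun θ ↦ ρ⁻¹ • G (circleMap w ρ θ))
      (fderiv ℝ G (circleMap w ρ θ) (circleMap 0 1 θ * I)) θ := by
    intro θ
    convert! ((hG.differentiable one_ne_zero _).hasFDerivAt.comp_hasDerivAt θ
      (hasDerivAt_circleMap w ρ θ)).const_smul ρ⁻¹ using 1
    rw [← ContinuousLinearMap.map_smul]
    simp [circleMap, ← mul_assoc, hρ]
  have hcont : Continuous fun θ ↦ fderiv ℝ G (circleMap w ρ θ) (circleMap 0 1 θ * I) := by
    have := hG.continuous_fderiv one_ne_zero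
    fun_prop
  have hper : circleMap w ρ Real.pi = circleMap w ρ (-Real.pi) := by
    convert periodic_circleMap w ρ (-Real.pi) using 2; ring
  rw [← integral_Ioc_eq_integral_Ioo,
    ← intervalIntegral.integral_of_le (by linarith [Real.pi_pos]),
    intervalIntegral.integral_eq_sub_of_hasDerivAt (fun θ _ ↦ hderiv θ)
      (hcont.intervalIntegrable _ _), hper, sub_self]

lemma integrableOn_polarCoord_target {F : ℝ × ℝ → ℂ} (hF : Continuous F) {R : ℝ}
    (hR : ∀ p, R < p.1 → F p = 0) : IntegrableOn F polarCoord.target := by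
  have hcompact : IsCompact (Icc 0 R ×ˢ Icc (-Real.pi) Real.pi) := isCompact_Icc.prod isCompact_Icc
  refine (((hF.continuousOn.integrableOn_compact hcompact).of_forall_sdiff_eq_zero
    (t := Icc 0 R ×ˢ Icc (-Real.pi) Real.pi ∪ polarCoord.target) ?_ ?_)).mono_set
      subset_union_right
  · exact hcompact.measurableSet.union polarCoord.open_target.measurableSet
  · rintro p ⟨hp | hp, hp'⟩
    · exact absurd hp hp'
    · exact hR p (not_le.1 fun h ↦ hp' ⟨⟨hp.1.le, h⟩, hp.2.1.le, hp.2.2.le⟩)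

lemma exists_forall_lt_fderiv_circleMap_eq_zero {G : ℂ → ℂ} (hGc : HasCompactSupport G) (w : ℂ) :
    ∃ R : ℝ, ∀ p : ℝ × ℝ, R < p.1 → fderiv ℝ G (circleMap w p.1 p.2) = 0 := by
  obtain ⟨R, -, hR⟩ := (hGc.fderiv ℝ).exists_pos_le_norm
  refine ⟨R + ‖w‖, fun p hp ↦ hR _ ?_⟩
  have hsub := norm_sub_le (circleMap w p.1 p.2) w
  rw [circleMap_sub_eq_ofReal_mul, norm_mul, norm_circleMap_zero, norm_real, abs_one,
    mul_one] at hsub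
  linarith [Real.le_norm_self p.1]

/- The Cauchy–Pompeiu formula. In polar coordinates about `w`, the integrand is half the sum of a
radial derivative, with integral `-G w` along each ray, and of `I` times an angular derivative,
which integrates to zero along each circle. -/
lemma integral_dbar_div_sub {G : ℂ → ℂ} (hG : ContDiff ℝ 1 G) (hGc : HasCompactSupport G)
    (w : ℂ) : ∫ ζ, dbar G ζ / (ζ - w) = -Real.pi * G w := by
  set A : ℝ × ℝ → ℂ := fun p ↦ fderiv ℝ G (circleMap w p.1 p.2) (circleMap 0 1 p.2)
  set B : ℝ × ℝ → ℂ := fun p ↦ fderiv ℝ G (circleMap w p.1 p.2) (circleMap 0 1 p.2 * I)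
  have hpolar : ∀ p : ℝ × ℝ, dbar G (circleMap w p.1 p.2) / circleMap 0 1 p.2 =
      (A p + I * B p) / 2 := by
    intro p
    rw [← dbar_mul_conj, div_eq_mul_inv, inv_def]
    simp [normSq_eq_norm_sq]
  have := hG.continuous_fderiv one_ne_zero
  obtain ⟨R, hR⟩ := exists_forall_lt_fderiv_circleMap_eq_zero hGc w
  have hAi : IntegrableOn A polarCoord.target :=
    integrableOn_polarCoord_target (R := R) (by fun_prop) fun p hp ↦ by simp [A, hR p hp]
  have hBi : IntegrableOn B polarCoord.target :=
    integrableOn_polarCoord_target (R := R) (by fun_prop) fun p hp ↦ by simp [B, hR p hp]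
  have hA : ∫ p in polarCoord.target, A p = -(2 * Real.pi) * G w := by
    rw [polarCoord_target, Measure.volume_eq_prod, ← setIntegral_prod_swap,
      setIntegral_prod _ (by exact hAi.swap)]
    simp only [A, Prod.swap_prod_mk, integral_Ioi_fderiv_circleMap hG hGc]
    rw [setIntegral_const, Real.volume_real_Ioo_of_le (by linarith [Real.pi_pos]), real_smul]
    push_cast; ring
  have hB : ∫ p in polarCoord.target, B p = 0 := by
    rw [polarCoord_target, Measure.volume_eq_prod, setIntegral_prod _ hBi]
    exact setIntegral_eq_zero_of_forall_eq_zero fun ρ hρ ↦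
      integral_Ioo_fderiv_circleMap hG w (ne_of_gt hρ)
  rw [integral_div_sub]
  simp only [hpolar]
  rw [integral_div, integral_add hAi (hBi.const_mul I), integral_const_mul, hA, hB]
  ring

end CauchyTransform

/-! ### Separating two sets that touch at the origin -/

lemma HasNoHoles.continuousOn_resolvent_polyAlgebraX {Y : Set ℂ} [CompactSpace Y]
    (hY : HasNoHoles Y) : ContinuousOn (resolvent (polyAlgebraX Y)) Yᶜ := by
  intro a ha
  have hmem : a ∈ resolventSet ℂ (polyAlgebraX Y) := by
    by_contra h
    exact ha (hY.spectrum_polyAlgebraX_subset h)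
  exact (spectrum.hasDerivAt_resolvent_const_left hmem).continuousAt.continuousWithinAt

lemma HasNoHoles.exists_polyAlgebra_eq_integral_div_sub {Y : Set ℂ} [CompactSpace Y]
    (hY : HasNoHoles Y) {k : ℂ → ℂ} (hk : Continuous k) (hkc : HasCompactSupport k)
    (hkY : tsupport k ⊆ Yᶜ) : ∃ F : polyAlgebra Y, ∀ w : Y, F.1 w = ∫ ζ, k ζ / (ζ - w) := by
  have hYo : IsOpen Yᶜ := (isCompact_iff_compactSpace.2 inferInstance).isClosed.isOpen_compl
  have hcont : Continuous fun ζ ↦ k ζ • resolvent (polyAlgebraX Y) ζ :=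
    (hk.continuousOn.smul hY.continuousOn_resolvent_polyAlgebraX).continuous_of_tsupport_subset
      hYo ((tsupport_smul_subset_left k _).trans hkY)
  have hint : Integrable fun ζ ↦ k ζ • resolvent (polyAlgebraX Y) ζ :=
    hcont.integrable_of_hasCompactSupport hkc.smul_right
  refine ⟨∫ ζ, k ζ • resolvent (polyAlgebraX Y) ζ, fun w ↦ ?_⟩
  have heval : ∀ ζ, (polyAlgebraEval w).toContinuousLinearMap (k ζ • resolvent (polyAlgebraX Y) ζ) =
      k ζ / (ζ - w) := by
    intro ζ
    by_cases hζ : ζ ∈ Y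
    · simp [image_eq_zero_of_notMem_tsupport fun h ↦ hkY h hζ]
    · rw [map_smul, smul_eq_mul, div_eq_mul_inv, ← hY.resolvent_polyAlgebraX_apply hζ w]
      rfl
  have hcomm := (polyAlgebraEval w).toContinuousLinearMap.integral_comp_comm hint
  simp only [heval] at hcomm
  exact hcomm.symm

lemma HasNoHoles.exists_polyAlgebra_norm_sub_le {Y : Set ℂ} [CompactSpace Y] (hY : HasNoHoles Y)
    {G k : ℂ → ℂ} (hG : ContDiff ℝ 1 G) (hGc : HasCompactSupport G) (hk : Continuous k)
    (hkc : HasCompactSupport k) (hkY : tsupport k ⊆ Yᶜ) {C s : ℝ} (hs : 0 ≤ s)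
    (hC : ∀ ζ, ‖dbar G ζ - k ζ‖ ≤ C) (hGk : ∀ ζ, s < ‖ζ‖ → dbar G ζ - k ζ = 0) :
    ∃ F : polyAlgebra Y, ∀ w : Y, ‖F.1 w - G w‖ ≤ 4 * C * s := by
  obtain ⟨F, hF⟩ := hY.exists_polyAlgebra_eq_integral_div_sub hk hkc hkY
  refine ⟨(-(Real.pi : ℂ)⁻¹) • F, fun w ↦ ?_⟩
  have hpi : (Real.pi : ℂ) ≠ 0 := ofReal_ne_zero.2 Real.pi_ne_zero
  have hsub : ∫ ζ, (dbar G ζ - k ζ) / (ζ - w) = -Real.pi * G w - F.1 w := by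
    simp only [sub_div]
    rw [integral_sub (integrable_div_sub (continuous_dbar hG) (hasCompactSupport_dbar hGc) w)
      (integrable_div_sub hk hkc w), integral_dbar_div_sub hG hGc, hF]
  have hdiff : (-(Real.pi : ℂ)⁻¹ • F).1 w - G w =
      (Real.pi : ℂ)⁻¹ * ∫ ζ, (dbar G ζ - k ζ) / (ζ - w) := by
    rw [hsub]
    change -(Real.pi : ℂ)⁻¹ * F.1 w - G w = _
    field_simp
    ring
  rw [hdiff, norm_mul, norm_inv, norm_real, Real.norm_of_nonneg Real.pi_pos.le,
    inv_mul_le_iff₀ Real.pi_pos]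
  calc ‖∫ ζ, (dbar G ζ - k ζ) / (ζ - w)‖
      ≤ 4 * Real.pi * C * s :=
        norm_integral_div_sub_le ((continuous_dbar hG).sub hk).measurable hs hC hGk w
    _ = Real.pi * (4 * C * s) := by ring

lemma exists_contDiff_cutoff {s t : Set ℂ} (hs : IsClosed s) (ht : IsCompact t)
    (hst : Disjoint s t) :
    ∃ χ : ℂ → ℂ, ContDiff ℝ 1 χ ∧ HasCompactSupport χ ∧ (∀ᶠ z in 𝓝ˢ s, χ z = 0) ∧
      (∀ᶠ z in 𝓝ˢ t, χ z = 1) ∧ ∀ z, ‖χ z‖ ≤ 1 := by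
  obtain ⟨R, hR⟩ := ht.isBounded.subset_ball 0
  obtain ⟨χ, hχs, hχt, hχ⟩ := exists_contMDiffMap_zero_one_nhds_of_isClosed (n := 1)
    (modelWithCornersSelf ℝ ℂ) (hs.union isOpen_ball.isClosed_compl) ht.isClosed
    (disjoint_union_left.2 ⟨hst, disjoint_compl_left_iff_subset.2 hR⟩)
  refine ⟨fun z ↦ χ z, ofRealCLM.contDiff.comp χ.contMDiff.contDiff, ?_, ?_, ?_, fun z ↦ ?_⟩
  · refine .intro (isCompact_closedBall 0 R) fun z hz ↦ ?_
    exact congr_arg _ (hχs.self_of_nhdsSet z (.inr fun h ↦ hz (ball_subset_closedBall h)))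
  · exact (hχs.filter_mono (nhdsSet_mono subset_union_left)).mono fun z hz ↦ by simp [hz]
  · exact hχt.mono fun z hz ↦ by simp [hz]
  · simpa [abs_of_nonneg (hχ z).1] using (hχ z).2

lemma dbar_smul_comp_inv_smul (ψ : ℂ → ℂ) {r : ℝ} (hr : r ≠ 0) (ζ : ℂ) :
    dbar (fun z ↦ r • ψ (r⁻¹ • z)) ζ = dbar ψ (r⁻¹ • ζ) := by
  have hfderiv : fderiv ℝ (fun z ↦ r • ψ (r⁻¹ • z)) ζ = fderiv ℝ ψ (r⁻¹ • ζ) := by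
    change fderiv ℝ (r • fun z ↦ ψ (r⁻¹ • z)) ζ = _
    rw [fderiv_const_smul_field, Pi.smul_apply, fderiv_comp_smul, smul_smul,
      mul_inv_cancel₀ hr, one_smul]
  rw [dbar, dbar, hfderiv]

lemma exists_contDiff_norm_sub_id_le :
    ∃ ψ : ℂ → ℂ, ContDiff ℝ 1 ψ ∧ (∀ z, ‖z‖ < 1 → ψ z = 0) ∧ (∀ z, ‖ψ z - z‖ ≤ 2) ∧
      ∀ z, 2 < ‖z‖ → ψ z = z := by
  let φ : ContDiffBump (0 : ℂ) := ⟨1, 2, one_pos, one_lt_two⟩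
  refine ⟨fun z ↦ (1 - φ z : ℝ) * z, ?_, fun z hz ↦ ?_, fun z ↦ ?_, fun z hz ↦ ?_⟩
  · exact (ofRealCLM.contDiff.comp (contDiff_const.sub φ.contDiff)).mul contDiff_id
  · simp [φ.one_of_mem_closedBall (mem_closedBall_zero_iff.2 hz.le)]
  · have hnorm : ‖((1 - φ z : ℝ) : ℂ) * z - z‖ = φ z * ‖z‖ := by
      rw [show ((1 - φ z : ℝ) : ℂ) * z - z = -(φ z * z) by push_cast; ring, norm_neg, norm_mul,
        norm_real, Real.norm_of_nonneg φ.nonneg]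
    rw [hnorm]
    obtain hz | hz := le_or_gt ‖z‖ 2
    · exact (mul_le_of_le_one_left (norm_nonneg z) φ.le_one).trans hz
    · simp [φ.zero_of_le_dist (by simpa using hz.le : φ.rOut ≤ dist z 0)]
  · simp [φ.zero_of_le_dist (by simpa using hz.le : φ.rOut ≤ dist z 0)]

-- The bound on `∂̄ψ` is uniform in the radius because `∂̄` commutes with dilations.
lemma exists_forall_pos_exists_contDiff_norm_sub_id_le :
    ∃ C : ℝ, 0 ≤ C ∧ ∀ r > 0, ∃ ψ : ℂ → ℂ, ContDiff ℝ 1 ψ ∧ (∀ z, ‖z‖ < r → ψ z = 0) ∧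
      (∀ z, ‖ψ z - z‖ ≤ 2 * r) ∧ (∀ z, ‖dbar ψ z‖ ≤ C) ∧ ∀ z, 2 * r < ‖z‖ → dbar ψ z = 0 := by
  obtain ⟨ψ, hψ, hψ0, hψ1, hψ2⟩ := exists_contDiff_norm_sub_id_le
  have hdbar : ∀ z, 2 < ‖z‖ → dbar ψ z = 0 := by
    intro z hz
    rw [← dbar_id z]
    refine dbar_congr ?_
    filter_upwards [continuous_norm.continuousAt.eventually (lt_mem_nhds hz)] with y hy
    exact hψ2 y hy
  obtain ⟨C, hC⟩ := (isCompact_closedBall (0 : ℂ) 2).exists_bound_of_continuousOn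
    (continuous_dbar hψ).continuousOn
  have hC0 : 0 ≤ C := (norm_nonneg _).trans (hC 0 (by simp))
  refine ⟨C, hC0, fun r hr ↦ ⟨fun z ↦ r • ψ (r⁻¹ • z), ?_, fun z hz ↦ ?_, fun z ↦ ?_, fun z ↦ ?_,
    fun z hz ↦ ?_⟩⟩
  · exact (hψ.comp (contDiff_const_smul _)).const_smul r
  · have hz' : ‖r⁻¹ • z‖ < 1 := by
      rwa [norm_smul, norm_inv, Real.norm_of_nonneg hr.le, inv_mul_lt_one₀ hr]
    simp only [hψ0 _ hz', smul_zero]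
  · calc ‖r • ψ (r⁻¹ • z) - z‖ = ‖r • (ψ (r⁻¹ • z) - r⁻¹ • z)‖ := by
          rw [smul_sub, smul_inv_smul₀ hr.ne']
      _ = r * ‖ψ (r⁻¹ • z) - r⁻¹ • z‖ := by rw [norm_smul, Real.norm_of_nonneg hr.le]
      _ ≤ 2 * r := by rw [mul_comm]; exact mul_le_mul_of_nonneg_right (hψ1 _) hr.le
  · rw [dbar_smul_comp_inv_smul ψ hr.ne']
    obtain hz | hz := le_or_gt ‖r⁻¹ • z‖ 2
    · exact hC _ (mem_closedBall_zero_iff.2 hz)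
    · rwa [hdbar _ hz, norm_zero]
  · rw [dbar_smul_comp_inv_smul ψ hr.ne']
    refine hdbar _ ?_
    rwa [norm_smul, norm_inv, Real.norm_of_nonneg hr.le, lt_inv_mul_iff₀ hr, mul_comm]

lemma exists_contDiff_separating {Y₁ Y₂ : Set ℂ} (hc₁ : IsCompact Y₁) (hc₂ : IsClosed Y₂)
    (hY : Y₁ ∩ Y₂ ⊆ {0}) {r : ℝ} (hr : 0 < r) :
    ∃ χ : ℂ → ℂ, ContDiff ℝ 1 χ ∧ HasCompactSupport χ ∧ (∀ z, ‖χ z‖ ≤ 1) ∧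
      (∀ w ∈ Y₁, r ≤ ‖w‖ → χ =ᶠ[𝓝 w] 1) ∧ ∀ w ∈ Y₂, r ≤ ‖w‖ → χ =ᶠ[𝓝 w] 0 := by
  have hoff : IsClosed (ball (0 : ℂ) r)ᶜ := isOpen_ball.isClosed_compl
  obtain ⟨χ, hχ, hχc, hχ2, hχ1, hχn⟩ := exists_contDiff_cutoff (hc₂.inter hoff)
    (hc₁.inter_right hoff) (disjoint_left.2 fun z hz₂ hz₁ ↦ hz₁.2 <| by
      rw [hY ⟨hz₁.1, hz₂.1⟩]; exact mem_ball_self hr)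
  have hmem : ∀ w : ℂ, r ≤ ‖w‖ → w ∈ (ball (0 : ℂ) r)ᶜ := fun w hw ↦ by simpa using hw
  exact ⟨χ, hχ, hχc, hχn, fun w hw hwr ↦ mem_nhdsSet_iff_forall.1 hχ1 w ⟨hw, hmem w hwr⟩,
    fun w hw hwr ↦ mem_nhdsSet_iff_forall.1 hχ2 w ⟨hw, hmem w hwr⟩⟩

lemma HasNoHoles.exists_polyAlgebra_norm_sub_mul_le {Y : Set ℂ} [CompactSpace Y]
    (hY : HasNoHoles Y) {χ ψ : ℂ → ℂ} (hχ : ContDiff ℝ 1 χ) (hχc : HasCompactSupport χ)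
    (hχ1 : ∀ ζ, ‖χ ζ‖ ≤ 1) (hψ : ContDiff ℝ 1 ψ)
    (hχψ : ∀ w ∈ Y, (fun ζ ↦ ψ ζ * dbar χ ζ) =ᶠ[𝓝 w] 0) {C s : ℝ} (hs : 0 ≤ s)
    (hψC : ∀ ζ, ‖dbar ψ ζ‖ ≤ C) (hψs : ∀ ζ, s < ‖ζ‖ → dbar ψ ζ = 0) :
    ∃ F : polyAlgebra Y, ∀ w : Y, ‖F.1 w - χ w * ψ w‖ ≤ 4 * C * s := by
  have hdbar : ∀ ζ, dbar (fun z ↦ χ z * ψ z) ζ - ψ ζ * dbar χ ζ = χ ζ * dbar ψ ζ := fun ζ ↦ by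
    rw [dbar_mul (hχ.differentiable one_ne_zero) (hψ.differentiable one_ne_zero),
      add_sub_cancel_right]
  refine hY.exists_polyAlgebra_norm_sub_le (k := fun ζ ↦ ψ ζ * dbar χ ζ) (hχ.mul hψ) hχc.mul_right
    (hψ.continuous.mul (continuous_dbar hχ)) (hasCompactSupport_dbar hχc).mul_left
    (fun w hw hwY ↦ notMem_tsupport_iff_eventuallyEq.2 (hχψ w hwY) hw) hs (fun ζ ↦ ?_)
    fun ζ hζ ↦ ?_
  · rw [hdbar, norm_mul]
    exact (mul_le_of_le_one_left (norm_nonneg _) (hχ1 ζ)).trans (hψC ζ)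
  · rw [hdbar, hψs ζ hζ, mul_zero]

lemma HasNoHoles.exists_polyAlgebra_norm_sub_indicator_le {Y₁ Y₂ : Set ℂ}
    [CompactSpace ↥(Y₁ ∪ Y₂)] (h : HasNoHoles (Y₁ ∪ Y₂)) (hc₁ : IsCompact Y₁) (hc₂ : IsClosed Y₂)
    (hY : Y₁ ∩ Y₂ ⊆ {0}) {ε : ℝ} (hε : 0 < ε) :
    ∃ F : polyAlgebra (Y₁ ∪ Y₂), ∀ w : ↥(Y₁ ∪ Y₂), ‖F.1 w - Y₁.indicator id w‖ ≤ ε := by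
  obtain ⟨C, hC0, hC⟩ := exists_forall_pos_exists_contDiff_norm_sub_id_le
  obtain ⟨r, hr, hrε⟩ : ∃ r : ℝ, 0 < r ∧ (8 * C + 2) * r ≤ ε :=
    ⟨ε / (8 * C + 2), by positivity, (mul_div_cancel₀ _ (by positivity)).le⟩
  obtain ⟨ψ, hψ, hψ0, hψid, hψC, hψs⟩ := hC r hr
  obtain ⟨χ, hχ, hχc, hχn, hχ1, hχ2⟩ := exists_contDiff_separating hc₁ hc₂ hY hr
  have hlocal : ∀ w ∈ Y₁ ∪ Y₂, (fun ζ ↦ ψ ζ * dbar χ ζ) =ᶠ[𝓝 w] 0 := by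
    intro w hw
    obtain hwr | hwr := lt_or_ge ‖w‖ r
    · filter_upwards [continuous_norm.continuousAt.eventually (gt_mem_nhds hwr)] with z hz
      simp [hψ0 z hz]
    · obtain ⟨c, hc⟩ : ∃ c : ℂ, χ =ᶠ[𝓝 w] fun _ ↦ c :=
        hw.elim (fun hw ↦ ⟨1, hχ1 w hw hwr⟩) (fun hw ↦ ⟨0, hχ2 w hw hwr⟩)
      filter_upwards [hc.eventuallyEq_nhds] with z hz
      rw [dbar_congr hz, dbar_const, mul_zero, Pi.zero_apply]
  obtain ⟨F, hF⟩ := h.exists_polyAlgebra_norm_sub_mul_le hχ hχc hχn hψ hlocal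
    (mul_nonneg zero_le_two hr.le) hψC hψs
  have hχψ : ∀ w ∈ Y₁ ∪ Y₂, χ w * ψ w = Y₁.indicator ψ w := by
    intro w hw
    obtain hwr | hwr := lt_or_ge ‖w‖ r
    · rw [hψ0 w hwr, mul_zero, indicator_apply_eq_zero.2 fun _ ↦ hψ0 w hwr]
    · by_cases hw₁ : w ∈ Y₁
      · simp [hw₁, (hχ1 w hw₁ hwr).eq_of_nhds]
      · simp [hw₁, (hχ2 w (hw.resolve_left hw₁) hwr).eq_of_nhds]
  refine ⟨F, fun w ↦ ?_⟩
  have hG : ‖χ w * ψ w - Y₁.indicator id (w : ℂ)‖ ≤ 2 * r := by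
    rw [hχψ w w.2, ← Pi.sub_apply, ← indicator_sub']
    exact (norm_indicator_le_norm_self _ _).trans (hψid w)
  calc ‖F.1 w - Y₁.indicator id (w : ℂ)‖
      ≤ ‖F.1 w - χ w * ψ w‖ + ‖χ w * ψ w - Y₁.indicator id (w : ℂ)‖ :=
        norm_sub_le_norm_sub_add_norm_sub _ _ _
    _ ≤ 4 * C * (2 * r) + 2 * r := add_le_add (hF w) hG
    _ = (8 * C + 2) * r := by ring
    _ ≤ ε := hrε

lemma HasNoHoles.exists_polyAlgebra_eq_indicator {Y₁ Y₂ : Set ℂ}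
    [CompactSpace ↥(Y₁ ∪ Y₂)] (h : HasNoHoles (Y₁ ∪ Y₂)) (hc₁ : IsCompact Y₁) (hc₂ : IsClosed Y₂)
    (hY : Y₁ ∩ Y₂ ⊆ {0}) :
    ∃ F : polyAlgebra (Y₁ ∪ Y₂), ∀ w : ↥(Y₁ ∪ Y₂), F.1 w = Y₁.indicator id (w : ℂ) := by
  have hcont : ContinuousOn (Y₁.indicator id) (Y₁ ∪ Y₂) := by
    refine .union_of_isClosed (continuousOn_id.congr fun w hw ↦ indicator_of_mem hw _)
      (continuousOn_const (c := (0 : ℂ)).congr fun w hw ↦ ?_) hc₁.isClosed hc₂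
    exact indicator_apply_eq_zero.2 fun hw₁ ↦ hY ⟨hw₁, hw⟩
  let T : C(↥(Y₁ ∪ Y₂), ℂ) := ⟨fun w ↦ Y₁.indicator id (w : ℂ), hcont.domRestrict⟩
  have hT : T ∈ polyAlgebra (Y₁ ∪ Y₂) := by
    refine (polynomialFunctions _).isClosed_topologicalClosure.closure_subset
      (Metric.mem_closure_iff.2 fun ε hε ↦ ?_)
    obtain ⟨F, hF⟩ := h.exists_polyAlgebra_norm_sub_indicator_le hc₁ hc₂ hY (half_pos hε)
    refine ⟨F.1, F.2, (ContinuousMap.dist_lt_iff hε).2 fun w ↦ ?_⟩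
    rw [dist_comm, dist_eq_norm]
    exact (hF w).trans_lt (half_lt_self hε)
  exact ⟨⟨T, hT⟩, fun w ↦ rfl⟩

/-! ### The polynomially convex hull in several variables -/

section SeveralVariables

variable {n : ℕ}

/-- The polynomially convex hull of `X ⊆ ℂⁿ`. The maximum of `|P|` over `X` is written as a
supremum, as in `PolyConvex`; it has junk value `0` where `P` is unbounded on `X`. -/
def polyHull (X : Set (Fin n → ℂ)) : Set (Fin n → ℂ) :=
  {z | ∀ P : MvPolynomial (Fin n) ℂ, ‖eval z P‖ ≤ sSup ((fun w ↦ ‖eval w P‖) '' X)}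

lemma polyConvex_iff_polyHull_subset {X : Set (Fin n → ℂ)} : PolyConvex X ↔ polyHull X ⊆ X :=
  Iff.rfl

lemma norm_eval_le_of_mem_polyHull {X : Set (Fin n → ℂ)} {z : Fin n → ℂ} (hz : z ∈ polyHull X)
    (P : MvPolynomial (Fin n) ℂ) {c : ℝ} (hc : 0 ≤ c) (hP : ∀ x ∈ X, ‖eval x P‖ ≤ c) :
    ‖eval z P‖ ≤ c :=
  (hz P).trans (Real.sSup_le (forall_mem_image.2 hP) hc)

lemma PolyConvex.exists_eval_eq_one {K : Set (Fin n → ℂ)} (hK : PolyConvex K) (hKc : IsCompact K)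
    {z : Fin n → ℂ} (hz : z ∉ K) :
    ∃ q : MvPolynomial (Fin n) ℂ, eval z q = 1 ∧
      ∃ δ ∈ Ico (0 : ℝ) 1, ∀ x ∈ K, ‖eval x q‖ ≤ δ := by
  obtain ⟨P, hP⟩ : ∃ P : MvPolynomial (Fin n) ℂ,
      sSup ((fun w ↦ ‖eval w P‖) '' K) < ‖eval z P‖ := by
    by_contra! h
    exact hz (hK z h)
  have hS : 0 ≤ sSup ((fun w ↦ ‖eval w P‖) '' K) :=
    Real.sSup_nonneg (forall_mem_image.2 fun _ _ ↦ norm_nonneg _)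
  have hPz : 0 < ‖eval z P‖ := hS.trans_lt hP
  refine ⟨C (eval z P)⁻¹ * P, ?_, _, ⟨div_nonneg hS hPz.le, (div_lt_one hPz).2 hP⟩,
    fun x hx ↦ ?_⟩
  · rw [map_mul, eval_C, inv_mul_cancel₀ (norm_pos_iff.1 hPz)]
  · rw [map_mul, eval_C, norm_mul, norm_inv, inv_mul_eq_div]
    exact div_le_div_of_nonneg_right (le_csSup
      (hKc.bddAbove_image (continuous_eval P).norm.continuousOn) (mem_image_of_mem _ hx)) hPz.le

lemma eval_aeval_polynomial (z : Fin n → ℂ) (p : MvPolynomial (Fin n) ℂ) (P : Polynomial ℂ) :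
    eval z (Polynomial.aeval p P) = P.eval (eval z p) := by
  simpa [coe_aeval_eq_eval] using (Polynomial.aeval_algHom_apply (aeval z) p P).symm

lemma PolyConvex1.eval_mem {Y : Set ℂ} (hY : PolyConvex1 Y) (hYc : IsCompact Y)
    {X : Set (Fin n → ℂ)} {p : MvPolynomial (Fin n) ℂ} (hp : MapsTo (fun x ↦ eval x p) X Y)
    {z : Fin n → ℂ} (hz : z ∈ polyHull X) : eval z p ∈ Y := by
  refine hY _ fun P ↦ ?_
  rw [← eval_aeval_polynomial]
  refine norm_eval_le_of_mem_polyHull hz _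
    (Real.sSup_nonneg (forall_mem_image.2 fun _ _ ↦ norm_nonneg _)) fun x hx ↦ ?_
  rw [eval_aeval_polynomial]
  exact le_csSup (hYc.bddAbove_image P.continuous.norm.continuousOn) (mem_image_of_mem _ (hp hx))

lemma norm_eval_mul_norm_polyAlgebra_le {X : Set (Fin n → ℂ)} (hX : IsCompact X) {Y : Set ℂ}
    [CompactSpace Y] {p : MvPolynomial (Fin n) ℂ} (hp : MapsTo (fun x ↦ eval x p) X Y)
    {z : Fin n → ℂ} (hz : z ∈ polyHull X) (hpz : eval z p ∈ Y) (f : polyAlgebra Y)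
    (q : MvPolynomial (Fin n) ℂ) {c : ℝ} (hc : 0 ≤ c)
    (h : ∀ x (hx : x ∈ X), ‖eval x q‖ * ‖f.1 ⟨eval x p, hp hx⟩‖ ≤ c) :
    ‖eval z q‖ * ‖f.1 ⟨eval z p, hpz⟩‖ ≤ c := by
  obtain ⟨N, hN0, hN⟩ : ∃ N > 0, ∀ x ∈ X, ‖eval x q‖ ≤ N := by
    obtain ⟨N, hN⟩ := hX.exists_bound_of_continuousOn (continuous_eval q).continuousOn
    exact ⟨max N 1, by positivity, fun x hx ↦ (hN x hx).trans (le_max_left _ _)⟩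
  have hNz : ‖eval z q‖ ≤ N := norm_eval_le_of_mem_polyHull hz q hN0.le hN
  refine le_of_forall_pos_le_add fun ε hε ↦ ?_
  obtain ⟨P, hP⟩ := exists_polynomial_forall_norm_sub_lt f (ε := ε / (2 * N)) (by positivity)
  have hNε : N * (ε / (2 * N)) = ε / 2 := by field_simp
  have hmul (x : Fin n → ℂ) (hx : eval x p ∈ Y) (hxN : ‖eval x q‖ ≤ N) :
      |‖eval x q‖ * ‖f.1 ⟨eval x p, hx⟩‖ - ‖eval x (q * Polynomial.aeval p P)‖| ≤ ε / 2 := by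
    rw [map_mul, norm_mul, eval_aeval_polynomial, ← mul_sub, abs_mul, abs_norm, ← hNε]
    exact mul_le_mul hxN ((abs_norm_sub_norm_le _ _).trans (hP ⟨_, hx⟩).le) (abs_nonneg _) hN0.le
  have hX' : ∀ x ∈ X, ‖eval x (q * Polynomial.aeval p P)‖ ≤ c + ε / 2 := fun x hx ↦ by
    linarith [h x hx, (abs_le.1 (hmul x (hp hx) (hN x hx))).1]
  have hz' := norm_eval_le_of_mem_polyHull hz _ (by positivity) hX'
  linarith [(abs_le.1 (hmul z hpz hNz)).2]

lemma PolyConvex.mem_of_mem_polyHull_union {X₁ X₂ : Set (Fin n → ℂ)} (hX₁ : PolyConvex X₁)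
    (hX₁c : IsCompact X₁) (hX₂c : IsCompact X₂) {Y₁ Y₂ : Set ℂ} (hY₁c : IsCompact Y₁)
    (hY₂c : IsCompact Y₂) (hU : HasNoHoles (Y₁ ∪ Y₂)) (hY : Y₁ ∩ Y₂ ⊆ {0})
    {p : MvPolynomial (Fin n) ℂ} (hp₁ : MapsTo (fun x ↦ eval x p) X₁ Y₁)
    (hp₂ : MapsTo (fun x ↦ eval x p) X₂ Y₂) {z : Fin n → ℂ} (hz : z ∈ polyHull (X₁ ∪ X₂))
    (hz0 : eval z p ≠ 0) (hz₁ : eval z p ∈ Y₁) : z ∈ X₁ := by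
  by_contra hzX
  obtain ⟨q, hqz, δ, ⟨hδ0, hδ1⟩, hq⟩ := hX₁.exists_eval_eq_one hX₁c hzX
  have : CompactSpace ↥(Y₁ ∪ Y₂) := isCompact_iff_compactSpace.1 (hY₁c.union hY₂c)
  obtain ⟨F, hF⟩ := hU.exists_polyAlgebra_eq_indicator hY₁c hY₂c.isClosed hY
  obtain ⟨M, hM⟩ := hX₁c.exists_bound_of_continuousOn (continuous_eval p).continuousOn
  have hpow (m : ℕ) : ‖eval z p‖ ≤ δ ^ m * max M 0 := by
    have := norm_eval_mul_norm_polyAlgebra_le (hX₁c.union hX₂c) (hp₁.union_union hp₂) hz (.inl hz₁)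
      F (q ^ m) (c := δ ^ m * max M 0) (by positivity) fun x hx ↦ ?_
    · rwa [map_pow, hqz, one_pow, norm_one, one_mul, hF, indicator_of_mem hz₁] at this
    rw [map_pow, norm_pow, hF]
    obtain hx | hx := hx
    · rw [indicator_of_mem (hp₁ hx)]
      exact mul_le_mul (pow_le_pow_left₀ (norm_nonneg _) (hq x hx) m)
        ((hM x hx).trans (le_max_left _ _)) (norm_nonneg _) (by positivity)
    · have hF0 : Y₁.indicator id (eval x p) = 0 :=
        indicator_apply_eq_zero.2 fun hx₁ ↦ hY ⟨hx₁, hp₂ hx⟩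
      rw [hF0, norm_zero, mul_zero]
      positivity
  have hlim : Tendsto (fun m : ℕ ↦ δ ^ m * max M 0) atTop (𝓝 0) := by
    simpa using (tendsto_pow_atTop_nhds_zero_of_lt_one hδ0 hδ1).mul_const (max M 0)
  exact hz0 (norm_le_zero_iff.1 (ge_of_tendsto' hlim hpow))

lemma exists_pos_forall_norm_lt_imp_norm_lt {α E F : Type*} [TopologicalSpace α]
    [NormedAddCommGroup E] [SeminormedAddCommGroup F] {X : Set α} (hX : IsCompact X)
    {f : α → E} {g : α → F} (hf : Continuous f) (hg : Continuous g) {η : ℝ}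
    (hfg : ∀ x ∈ X, f x = 0 → ‖g x‖ < η) : ∃ R > 0, ∀ x ∈ X, ‖f x‖ < R → ‖g x‖ < η := by
  obtain ⟨R, hR, hle⟩ := (hX.inter_right (isClosed_le continuous_const hg.norm)).exists_forall_le'
    hf.norm.continuousOn (a := 0) fun x hx ↦ norm_pos_iff.2 fun h ↦ (hfg x hx.1 h).not_ge hx.2
  exact ⟨R, hR, fun x hx hxR ↦ lt_of_not_ge fun h ↦ (hle x ⟨hx, h⟩).not_gt hxR⟩

lemma mem_of_mem_polyHull_of_eval_eq_zero {X : Set (Fin n → ℂ)} (hX : IsCompact X)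
    {Y : Set ℂ} (hYc : IsCompact Y) (hY : HasNoHoles Y) (h0 : (0 : ℂ) ∈ Y)
    (h0c : (0 : ℂ) ∈ closure Yᶜ) {p : MvPolynomial (Fin n) ℂ}
    (hp : MapsTo (fun x ↦ eval x p) X Y) (hfib : PolyConvex ({z | eval z p = 0} ∩ X))
    {z : Fin n → ℂ} (hz : z ∈ polyHull X) (hz0 : eval z p = 0) : z ∈ X := by
  by_contra hzX
  obtain ⟨q, hqz, δ, ⟨hδ0, hδ1⟩, hq⟩ := hfib.exists_eval_eq_one
    (hX.inter_left (isClosed_singleton.preimage (continuous_eval p))) fun h ↦ hzX h.2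
  obtain ⟨η, hδη, hη1⟩ := exists_between hδ1
  obtain ⟨R, hR, hRη⟩ := exists_pos_forall_norm_lt_imp_norm_lt hX (continuous_eval p)
    (continuous_eval q) fun x hx hx0 ↦ (hq x ⟨hx0, hx⟩).trans_lt hδη
  obtain ⟨m, hm⟩ : ∃ m : ℕ, η ^ m < 1 / 400 :=
    exists_pow_lt_of_lt_one (by norm_num) hη1
  obtain ⟨N, hN⟩ := hX.exists_bound_of_continuousOn (continuous_eval (q ^ m)).continuousOn
  have hN' : ∀ x ∈ X, ‖eval x (q ^ m)‖ ≤ max N 1 := fun x hx ↦ (hN x hx).trans (le_max_left _ _)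
  have : CompactSpace Y := isCompact_iff_compactSpace.1 hYc
  obtain ⟨F, hF0, hF⟩ := hY.exists_quasiPeak h0 h0c hR (ε := 1 / 4 / max N 1) (by positivity)
  have hle : ‖eval z (q ^ m)‖ * ‖F.1 ⟨eval z p, hz0 ▸ h0⟩‖ ≤ 1 / 4 := by
    refine norm_eval_mul_norm_polyAlgebra_le hX hp hz _ F _ (by norm_num) fun x hx ↦ ?_
    obtain ⟨hF100, hFε⟩ := hF ⟨eval x p, hp hx⟩
    obtain hxR | hxR := lt_or_ge ‖eval x p‖ R
    · have hqx : ‖eval x (q ^ m)‖ ≤ 1 / 400 := by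
        rw [map_pow, norm_pow]
        exact (pow_le_pow_left₀ (norm_nonneg _) (hRη x hx hxR).le m).trans hm.le
      exact (mul_le_mul hqx hF100 (norm_nonneg _) (by norm_num)).trans (by norm_num)
    · calc ‖eval x (q ^ m)‖ * ‖F.1 ⟨eval x p, hp hx⟩‖ ≤ max N 1 * (1 / 4 / max N 1) :=
            mul_le_mul (hN' x hx) (hFε hxR) (norm_nonneg _) (by positivity)
        _ = 1 / 4 := mul_div_cancel₀ _ (by positivity)
  simp only [hz0, map_pow, hqz, one_pow, norm_one, one_mul] at hle
  linarith

theorem stmt4_general {X₁ X₂ : Set (Fin n → ℂ)} (hX₁c : IsCompact X₁) (hX₂c : IsCompact X₂)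
    (hX₁ : PolyConvex X₁) (hX₂ : PolyConvex X₂) {Y₁ Y₂ : Set ℂ} (hY₁c : IsCompact Y₁)
    (hY₂c : IsCompact Y₂) (hY₁ : PolyConvex1 Y₁) (hY₂ : PolyConvex1 Y₂)
    (h0₁ : (0 : ℂ) ∈ frontier Y₁) (h0₂ : (0 : ℂ) ∈ frontier Y₂) (hY : Y₁ ∩ Y₂ = {0})
    {p : MvPolynomial (Fin n) ℂ} (hp₁ : MapsTo (fun z ↦ eval z p) X₁ Y₁)
    (hp₂ : MapsTo (fun z ↦ eval z p) X₂ Y₂)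
    (h4 : PolyConvex ({z | eval z p = 0} ∩ (X₁ ∪ X₂))) : PolyConvex (X₁ ∪ X₂) := by
  have hYc : IsCompact (Y₁ ∪ Y₂) := hY₁c.union hY₂c
  have hU : HasNoHoles (Y₁ ∪ Y₂) := (hY₁.hasNoHoles hY₁c).union (hY₂.hasNoHoles hY₂c) hY₁c hY₂c
    (hY ▸ isPreconnected_singleton)
  refine polyConvex_iff_polyHull_subset.2 fun z hz ↦ ?_
  by_cases hz0 : eval z p = 0
  · have h0 : (0 : ℂ) ∈ Y₁ := (hY.ge rfl).1
    have h0c := mem_closure_compl_union hY₁c.isClosed hY₂c.isClosed h0₁ h0₂ hY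
    exact mem_of_mem_polyHull_of_eval_eq_zero (hX₁c.union hX₂c) hYc hU (.inl h0) h0c
      (hp₁.union_union hp₂) h4 hz hz0
  · obtain hz₁ | hz₂ := ((polyConvex1_iff_hasNoHoles hYc).2 hU).eval_mem hYc
      (hp₁.union_union hp₂) hz
    · exact .inl (hX₁.mem_of_mem_polyHull_union hX₁c hX₂c hY₁c hY₂c hU hY.le hp₁ hp₂ hz hz0 hz₁)
    · rw [union_comm] at hz hU
      rw [inter_comm] at hY
      exact .inr (hX₂.mem_of_mem_polyHull_union hX₂c hX₁c hY₂c hY₁c hU hY.le hp₂ hp₁ hz hz0 hz₂)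

end SeveralVariables

/-- Kallin's lemma. -/
theorem stmt4 {n : ℕ} (X₁ X₂ : Set (Fin n → ℂ)) (hX₁c : IsCompact X₁) (hX₂c : IsCompact X₂)
    -- (1) `X₁, X₂` polynomially convex
    (hX₁ : PolyConvex X₁) (hX₂ : PolyConvex X₂)
    -- (2) `Y₁, Y₂` polynomially convex compacts in `ℂ`, `0` a boundary point of both,
    -- `Y₁ ∩ Y₂ = {0}`
    (Y₁ Y₂ : Set ℂ) (hY₁c : IsCompact Y₁) (hY₂c : IsCompact Y₂)
    (hY₁ : PolyConvex1 Y₁) (hY₂ : PolyConvex1 Y₂)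
    (h0₁ : (0 : ℂ) ∈ frontier Y₁) (h0₂ : (0 : ℂ) ∈ frontier Y₂)
    (hY : Y₁ ∩ Y₂ = {0})
    -- (3) `p` is a polynomial with `p(X₁) = Y₁` and `p(X₂) = Y₂`
    (p : MvPolynomial (Fin n) ℂ)
    (hp₁ : (fun z => eval z p) '' X₁ = Y₁) (hp₂ : (fun z => eval z p) '' X₂ = Y₂)
    -- (4) `p⁻¹(0) ∩ (X₁ ∪ X₂)` polynomially convex
    (h4 : PolyConvex ({z | eval z p = 0} ∩ (X₁ ∪ X₂))) :
    PolyConvex (X₁ ∪ X₂) := by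
  exact stmt4_general hX₁c hX₂c hX₁ hX₂ hY₁c hY₂c hY₁ hY₂ h0₁ h0₂ hY
    (mapsTo_iff_image_subset.2 hp₁.le) (mapsTo_iff_image_subset.2 hp₂.le) h4
end
end

section
/- (Stout's theorem) Suppose: (1) X₁, X₂ are compact subsets of ℂⁿ with P(X₁) = C(X₁) and P(X₂) = C(X₂); (2) Y₁, Y₂ are polynomially convex compact subsets of ℂ such that 0 is a boundary point of both Y₁ and Y₂, and Y₁ ∩ Y₂ = {0}; (3) p is a polynomial such that p(X₁) ⊆ Y₁ and p(X₂) ⊆ Y₂; (4) p⁻¹(0) ∩ (X₁ ∪ X₂) = X₁ ∩ X₂. Then P(X₁ ∪ X₂) = C(X₁ ∪ X₂). -/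
open Complex MvPolynomial

noncomputable section

/-- `P(K) = C(K)` for `K ⊆ ℂⁿ`: every continuous function on `K` is a uniform limit on `K`
of polynomials in the coordinates. -/
def PolyEqC {n : ℕ} (K : Set (Fin n → ℂ)) : Prop :=
  ∀ f : (Fin n → ℂ) → ℂ, ContinuousOn f K → ∀ ε : ℝ, 0 < ε →
    ∃ P : MvPolynomial (Fin n) ℂ, ∀ x ∈ K, ‖f x - eval x P‖ < ε

/-!
The crucial point is that the function equal to `0` on `Y₁` and to `z` on `Y₂` lies in
`P(Y₁ ∪ Y₂)`. By Borsuk's criterion `Y₁ ∪ Y₂` does not separate the plane: continuous logarithms of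
`z - a` on `Y₁` and on `Y₂` can be adjusted to agree at the only common point. Hence `P(Y₁ ∪ Y₂)`
contains `1 / (z - a)` for `a ∉ Y₁ ∪ Y₂`, and the Cauchy–Pompeiu formula approximates the function
by Cauchy transforms: away from `0` it is locally holomorphic near `Y₁ ∪ Y₂`, and since it is `O(z)`
at `0`, cutting it off at scale `δ` costs only `O(δ)`.

Composing with `p` gives `q ∈ P(X₁ ∪ X₂)` whose zero set is `X₁` and whose support lies in `X₂`. As
`P(X₂) = C(X₂)`, all multiples of `q` lie in `P(X₁ ∪ X₂)`; they are dense in the ideal of functions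
vanishing on `X₁`. As `P(X₁) = C(X₁)`, every continuous function is, up to a small error, a member
of `P(X₁ ∪ X₂)` plus an element of that ideal.
-/

namespace Stout

open Set Filter Topology Metric

section Logarithms

variable {X : Type*} [TopologicalSpace X] {f g : X → ℂ} {K L : Set X}

/-- `f` has a continuous logarithm on `K`. For `f z = z - a` on a compact `K ⊆ ℂ` this is Borsuk's
criterion for `a` to lie in no bounded component of the complement of `K`. -/
def HasContLogOn (f : X → ℂ) (K : Set X) : Prop :=
  ∃ l : X → ℂ, ContinuousOn l K ∧ ∀ x ∈ K, exp (l x) = f x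

namespace HasContLogOn

theorem of_mem_slitPlane (hf : ContinuousOn f K) (h : ∀ x ∈ K, f x ∈ slitPlane) :
    HasContLogOn f K :=
  ⟨fun x => log (f x), hf.clog h, fun x hx => exp_log (slitPlane_ne_zero (h x hx))⟩

theorem const {c : ℂ} (hc : c ≠ 0) : HasContLogOn (fun _ => c) K :=
  ⟨fun _ => log c, continuousOn_const, fun _ _ => exp_log hc⟩

theorem mul (hf : HasContLogOn f K) (hg : HasContLogOn g K) :
    HasContLogOn (fun x => f x * g x) K := by
  obtain ⟨k, hk, hkf⟩ := hf
  obtain ⟨l, hl, hlg⟩ := hg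
  exact ⟨fun x => k x + l x, hk.add hl, fun x hx => by rw [exp_add, hkf x hx, hlg x hx]⟩

theorem congr (hf : HasContLogOn f K) (h : EqOn f g K) : HasContLogOn g K := by
  obtain ⟨l, hl, hlf⟩ := hf
  exact ⟨l, hl, fun x hx => (hlf x hx).trans (h hx)⟩

theorem exists_apply_eq {x₀ : X} {w : ℂ} (hf : HasContLogOn f K) (hw : exp w = f x₀)
    (hx₀ : x₀ ∈ K) :
    ∃ l : X → ℂ, ContinuousOn l K ∧ (∀ x ∈ K, exp (l x) = f x) ∧ l x₀ = w := by
  obtain ⟨l, hl, hlf⟩ := hf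
  refine ⟨fun x => l x + (w - l x₀), hl.add continuousOn_const, fun x hx => ?_, by ring⟩
  rw [exp_add, exp_sub, hw, hlf x₀ hx₀, ← hw, div_self (exp_ne_zero w), mul_one, hlf x hx]

theorem union (hf : HasContLogOn f K) (hf' : HasContLogOn f L) (hK : IsClosed K)
    (hL : IsClosed L) (hKL : (K ∩ L).Subsingleton) : HasContLogOn f (K ∪ L) := by
  classical
  obtain ⟨k, hk, hkf⟩ := hf
  obtain ⟨l, hl, hlf, hkl⟩ : ∃ l : X → ℂ, ContinuousOn l L ∧ (∀ x ∈ L, exp (l x) = f x) ∧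
      ∀ x ∈ K ∩ L, k x = l x := by
    rcases hKL.eq_empty_or_singleton with hempty | ⟨x₀, hx₀⟩
    · obtain ⟨l, hl, hlf⟩ := hf'
      exact ⟨l, hl, hlf, by simp [hempty]⟩
    · have hmem : x₀ ∈ K ∩ L := hx₀ ▸ mem_singleton x₀
      obtain ⟨l, hl, hlf, hl₀⟩ := hf'.exists_apply_eq (hkf x₀ hmem.1) hmem.2
      exact ⟨l, hl, hlf, by simp [hx₀, hl₀]⟩
  have hK_eq : EqOn (K.piecewise k l) k K := piecewise_eqOn K k l
  have hL_eq : EqOn (K.piecewise k l) l L := fun x hxL => by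
    by_cases hxK : x ∈ K
    · rw [piecewise_eq_of_mem K k l hxK, hkl x ⟨hxK, hxL⟩]
    · exact piecewise_eq_of_notMem K k l hxK
  refine ⟨K.piecewise k l, (hk.congr hK_eq).union_of_isClosed (hl.congr hL_eq) hK hL, ?_⟩
  rintro x (hx | hx)
  · rw [hK_eq hx, hkf x hx]
  · rw [hL_eq hx, hlf x hx]

end HasContLogOn

end Logarithms

section Holes

variable {K H : Set ℂ} {a : ℂ}

theorem HasContLogOn.sub_of_dist_lt {b : ℂ} (ha : HasContLogOn (fun z => z - a) K)
    (hb : ∀ z ∈ K, dist a b < dist z a) : HasContLogOn (fun z => z - b) K := by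
  have hne : ∀ z ∈ K, z - a ≠ 0 := fun z hz =>
    sub_ne_zero.2 (dist_pos.1 (dist_nonneg.trans_lt (hb z hz)))
  have hslit : ∀ z ∈ K, 1 + (a - b) / (z - a) ∈ slitPlane := fun z hz => by
    apply mem_slitPlane_of_norm_lt_one
    rw [norm_div, ← dist_eq_norm, ← dist_eq_norm]
    exact (div_lt_one (dist_nonneg.trans_lt (hb z hz))).2 (hb z hz)
  have hcont : ContinuousOn (fun z => 1 + (a - b) / (z - a)) K :=
    continuousOn_const.add (continuousOn_const.div (by fun_prop) hne)
  refine (ha.mul (.of_mem_slitPlane hcont hslit)).congr fun z hz => ?_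
  have := hne z hz
  field_simp
  ring

theorem eventually_hasContLogOn_sub_iff (hK : IsClosed K) (ha : a ∉ K) :
    ∀ᶠ b in 𝓝 a, HasContLogOn (fun z => z - b) K ↔ HasContLogOn (fun z => z - a) K := by
  obtain ⟨δ, hδ, hball⟩ := Metric.isOpen_iff.1 hK.isOpen_compl a ha
  filter_upwards [ball_mem_nhds a (half_pos hδ)] with b hb
  have hab : dist a b < δ / 2 := mem_ball'.1 hb
  have hKa : ∀ z ∈ K, δ ≤ dist z a := fun z hz => not_lt.1 fun h => hball h hz
  refine ⟨fun h => h.sub_of_dist_lt fun z hz => ?_, fun h => h.sub_of_dist_lt fun z hz => ?_⟩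
  · rw [dist_comm b a]
    linarith [hKa z hz, dist_triangle_right z a b]
  · linarith [hKa z hz]

theorem hasContLogOn_sub_of_forall_norm_lt (ha : ∀ z ∈ K, ‖z‖ < ‖a‖) :
    HasContLogOn (fun z => z - a) K := by
  rcases eq_or_ne a 0 with rfl | ha₀
  · exact ⟨0, continuousOn_const, fun z hz => absurd (ha z hz) (by simp)⟩
  have hslit : ∀ z ∈ K, 1 + -z / a ∈ slitPlane := fun z hz => by
    apply mem_slitPlane_of_norm_lt_one
    rw [norm_div, norm_neg]
    exact (div_lt_one (norm_pos_iff.2 ha₀)).2 (ha z hz)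
  refine ((HasContLogOn.const (neg_ne_zero.2 ha₀)).mul
    (.of_mem_slitPlane (by fun_prop) hslit)).congr fun z _ => ?_
  field_simp
  ring

theorem norm_eval_le_sSup_of_frontier_subset (hK : IsCompact K) (hH : Bornology.IsBounded H)
    (hHK : frontier H ⊆ K) (ha : a ∈ H) (P : Polynomial ℂ) :
    ‖P.eval a‖ ≤ sSup ((fun w => ‖P.eval w‖) '' K) := by
  have hbdd : BddAbove ((fun w => ‖P.eval w‖) '' K) :=
    (hK.image P.continuous.norm).bddAbove
  exact Complex.norm_le_of_forall_mem_frontier_norm_le hH P.differentiable.diffContOnCl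
    (fun z hz => le_csSup hbdd (mem_image_of_mem _ (hHK hz))) (subset_closure ha)

theorem hasContLogOn_sub_of_polyConvex1 (hK : IsCompact K) (hconv : PolyConvex1 K) (ha : a ∉ K) :
    HasContLogOn (fun z => z - a) K := by
  set W : Set ℂ := {w | w ∉ K ∧ ¬ HasContLogOn (fun z => z - w) K}
  have hbounded : Bornology.IsBounded W := by
    obtain ⟨M, hM⟩ := hK.isBounded.exists_norm_le
    refine isBounded_iff_forall_norm_le.2 ⟨M, fun w hw => not_lt.1 fun hMw => hw.2 ?_⟩
    exact hasContLogOn_sub_of_forall_norm_lt fun z hz => (hM z hz).trans_lt hMw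
  have hfrontier : frontier W ⊆ K := by
    intro x hx
    by_contra hxK
    have hlocal : ∀ᶠ y in 𝓝 x, y ∈ W ↔ x ∈ W := by
      filter_upwards [hK.isClosed.isOpen_compl.mem_nhds hxK,
        eventually_hasContLogOn_sub_iff hK.isClosed hxK] with y hyK hy
      exact and_congr (iff_of_true hyK hxK) (not_congr hy)
    by_cases hxW : x ∈ W
    · exact hx.2 (mem_interior_iff_mem_nhds.2 (hlocal.mono fun y hy => hy.2 hxW))
    · exact mem_closure_iff_frequently.1 hx.1 (hlocal.mono fun y hy => mt hy.1 hxW)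
  by_contra hlog
  exact ha (hconv a (norm_eval_le_sSup_of_frontier_subset hK hbounded hfrontier ⟨ha, hlog⟩))

theorem not_hasContLogOn_sphere {r : ℝ} (hr : 0 < r) :
    ¬ HasContLogOn (fun z => z - a) (sphere a r) := by
  rintro ⟨l, hl, hexp : ∀ z ∈ sphere a r, exp (l z) = z - a⟩
  have hmem (θ : ℝ) : circleMap a r θ ∈ sphere a r := circleMap_mem_sphere a hr.le θ
  have hcont : Continuous fun θ : ℝ => l (circleMap a r θ) - θ * I :=
    (hl.comp_continuous (continuous_circleMap a r) hmem).sub (by fun_prop)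
  have hconst (θ : ℝ) : exp (l (circleMap a r θ) - θ * I) = r := by
    rw [exp_sub, hexp _ (hmem θ), circleMap_sub_center, circleMap_zero,
      mul_div_cancel_right₀ _ (exp_ne_zero _)]
  have hturn := isCoveringMap_exp.const_of_comp hcont
    (fun θ θ' => Subtype.ext ((hconst θ).trans (hconst θ').symm)) 0 (2 * Real.pi)
  have hclosed : circleMap a r (2 * Real.pi) = circleMap a r 0 := by
    simpa using periodic_circleMap a r 0
  rw [hclosed] at hturn
  apply two_pi_I_ne_zero
  push_cast at hturn
  linear_combination hturn

theorem hasContLogOn_of_continuous {F : ℂ → ℂ} (hF : Continuous F) (hF₀ : ∀ z, F z ≠ 0)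
    (K : Set ℂ) : HasContLogOn F K := by
  obtain ⟨G, ⟨-, hG⟩, -⟩ := isCoveringMapOn_exp.existsUnique_continuousMap_lifts ⟨F, hF⟩
    (exp_log (hF₀ 0)) hF₀
  exact ⟨G, G.continuous.continuousOn, fun z _ => congrFun hG z⟩

-- A logarithm on `K` extends by Tietze; `exp` of it on `H`, glued to `z - a` off `H`, would be a
-- zero-free continuous function on `ℂ` winding once around `a`.
theorem not_hasContLogOn_sub_of_frontier_subset (hK : IsClosed K) (hH : Bornology.IsBounded H)
    (hHK : frontier H ⊆ K) (ha : a ∈ H) : ¬ HasContLogOn (fun z => z - a) K := by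
  classical
  rintro ⟨l, hl, hexp : ∀ z ∈ K, exp (l z) = z - a⟩
  obtain ⟨l', hl'⟩ := ContinuousMap.exists_restrict_eq hK ⟨K.domRestrict l, hl.domRestrict⟩
  have hexp' : ∀ z ∈ K, exp (l' z) = z - a := fun z hz => by
    rw [← hexp z hz]
    exact congrArg exp (DFunLike.congr_fun hl' ⟨z, hz⟩)
  set F : ℂ → ℂ := H.piecewise (fun z => exp (l' z)) (fun z => z - a) with hF_def
  have hF : Continuous F :=
    continuous_piecewise (fun z hz => hexp' z (hHK hz)) (by fun_prop) (by fun_prop)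
  have hF₀ (z : ℂ) : F z ≠ 0 := by
    by_cases hz : z ∈ H
    · rw [hF_def, piecewise_eq_of_mem _ _ _ hz]
      exact exp_ne_zero _
    · rw [hF_def, piecewise_eq_of_notMem _ _ _ hz]
      exact sub_ne_zero.2 fun h => hz (h ▸ ha)
  obtain ⟨r, hr, hball⟩ := hH.subset_ball_lt 0 a
  refine not_hasContLogOn_sphere hr
    ((hasContLogOn_of_continuous hF hF₀ (sphere a r)).congr fun z hz => ?_)
  exact piecewise_eq_of_notMem _ _ _ fun hzH => (mem_ball.1 (hball hzH)).ne (mem_sphere.1 hz)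

end Holes

section Runge

variable {K : Set ℂ} [CompactSpace K]

/-- The algebra `P(K)` of uniform limits on `K ⊆ ℂ` of polynomials. -/
abbrev polyAlgebra (K : Set ℂ) [CompactSpace K] : Subalgebra ℂ C(K, ℂ) :=
  (polynomialFunctions K).topologicalClosure

theorem restrict_id_mem_polyAlgebra : (ContinuousMap.id ℂ).restrict K ∈ polyAlgebra K := by
  rw [← Polynomial.toContinuousMapOn_X_eq_restrict_id]
  exact Subalgebra.le_topologicalClosure _ ⟨Polynomial.X, trivial, rfl⟩

theorem spectrum_restrict_id_subset (hlog : ∀ a ∉ K, HasContLogOn (fun z => z - a) K) :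
    spectrum ℂ (⟨_, restrict_id_mem_polyAlgebra⟩ : polyAlgebra K) ⊆ K := by
  have hclosed : IsClosed (polyAlgebra K : Set C(K, ℂ)) :=
    Subalgebra.isClosed_topologicalClosure _
  have hcomplete : CompleteSpace (polyAlgebra K) := hclosed.completeSpace_coe
  have hfrontier :
      frontier (spectrum ℂ (⟨_, restrict_id_mem_polyAlgebra⟩ : polyAlgebra K)) ⊆ K := by
    refine (Subalgebra.frontier_spectrum (polyAlgebra K) _).trans ?_
    rw [ContinuousMap.spectrum_eq_range]
    rintro _ ⟨z, rfl⟩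
    exact z.2
  intro a ha
  by_contra haK
  exact not_hasContLogOn_sub_of_frontier_subset (isCompact_iff_compactSpace.2 ‹_›).isClosed
    (spectrum.isBounded _) hfrontier ha (hlog a haK)

theorem mem_polyAlgebra_of_mul_sub_eq_one (hlog : ∀ a ∉ K, HasContLogOn (fun z => z - a) K)
    {a : ℂ} (ha : a ∉ K) {f : C(K, ℂ)} (hf : ∀ z : K, (a - z) * f z = 1) : f ∈ polyAlgebra K := by
  obtain ⟨u, hu⟩ := spectrum.notMem_iff.1 (mt (@spectrum_restrict_id_subset K _ hlog a) ha)
  have hval (z : K) : (a - z) * ((↑u⁻¹ : polyAlgebra K) : C(K, ℂ)) z = 1 := by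
    have h := congrArg (fun v : polyAlgebra K => (v : C(K, ℂ)) z) u.mul_inv
    rw [hu] at h
    exact h
  suffices f = ((↑u⁻¹ : polyAlgebra K) : C(K, ℂ)) from this ▸ (↑u⁻¹ : polyAlgebra K).2
  ext z
  exact mul_left_cancel₀ (left_ne_zero_of_mul_eq_one (hf z)) ((hf z).trans (hval z).symm)

end Runge

section Pompeiu

open MeasureTheory

open scoped ComplexConjugate

variable {h k : ℂ → ℂ} {z ζ : ℂ}

/-- The Wirtinger derivative `∂h/∂ζ̄`. -/
def dbar (h : ℂ → ℂ) (ζ : ℂ) : ℂ :=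
  (fderiv ℝ h ζ 1 + I * fderiv ℝ h ζ I) / 2

theorem dbar_eq_zero_of_differentiableAt (hh : DifferentiableAt ℂ h ζ) : dbar h ζ = 0 := by
  have hI : fderiv ℂ h ζ I = I * fderiv ℂ h ζ 1 := by
    simp
  rw [dbar, hh.fderiv_restrictScalars ℝ, ContinuousLinearMap.coe_restrictScalars', hI,
    ← mul_assoc, I_mul_I, neg_one_mul, add_neg_cancel, zero_div]

theorem dbar_mul {f g : ℂ → ℂ} (hf : DifferentiableAt ℝ f ζ) (hg : DifferentiableAt ℝ g ζ) :
    dbar (fun w => f w * g w) ζ = f ζ * dbar g ζ + g ζ * dbar f ζ := by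
  simp only [dbar, fderiv_fun_mul hf hg, add_apply, smul_apply, smul_eq_mul]
  ring

theorem dbar_one_sub : dbar (fun w => 1 - h w) ζ = -dbar h ζ := by
  simp only [dbar, fderiv_const_sub, neg_apply]
  ring

theorem dbar_congr {f g : ℂ → ℂ} (hfg : f =ᶠ[𝓝 ζ] g) : dbar f ζ = dbar g ζ := by
  rw [dbar, hfg.fderiv_eq, dbar]

theorem dbar_eventuallyEq_zero {g : ℂ → ℂ} (hhg : h =ᶠ[𝓝 z] g) (hg : Differentiable ℂ g) :
    dbar h =ᶠ[𝓝 z] 0 := by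
  filter_upwards [hhg.eventually_nhds] with w hw
  exact (dbar_congr hw).trans (dbar_eq_zero_of_differentiableAt (hg w))

theorem norm_dbar_le (h : ℂ → ℂ) (ζ : ℂ) : ‖dbar h ζ‖ ≤ ‖fderiv ℝ h ζ‖ := by
  have h₁ : ‖fderiv ℝ h ζ 1‖ ≤ ‖fderiv ℝ h ζ‖ := by simpa using (fderiv ℝ h ζ).le_opNorm 1
  have hI : ‖fderiv ℝ h ζ I‖ ≤ ‖fderiv ℝ h ζ‖ := by simpa using (fderiv ℝ h ζ).le_opNorm I
  have hsum : ‖fderiv ℝ h ζ 1 + I * fderiv ℝ h ζ I‖ ≤ ‖fderiv ℝ h ζ 1‖ + ‖fderiv ℝ h ζ I‖ := by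
    simpa using norm_add_le (fderiv ℝ h ζ 1) (I * fderiv ℝ h ζ I)
  rw [dbar, norm_div, Complex.norm_two]
  linarith

theorem continuous_dbar (hh : ContDiff ℝ 1 h) : Continuous (dbar h) := by
  have := hh.continuous_fderiv one_ne_zero
  unfold dbar
  fun_prop

theorem hasCompactSupport_dbar (hh : HasCompactSupport h) : HasCompactSupport (dbar h) :=
  (hh.fderiv (𝕜 := ℝ)).mono fun ζ hζ hfderiv => hζ (by simp [dbar, hfderiv])

theorem dbar_div_of_norm_eq_one {u : ℂ} (hu : ‖u‖ = 1) :
    dbar h ζ / u = (fderiv ℝ h ζ u + I * fderiv ℝ h ζ (u * I)) / 2 := by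
  have hmap (v : ℂ) : fderiv ℝ h ζ v = v.re * fderiv ℝ h ζ 1 + v.im * fderiv ℝ h ζ I := by
    conv_lhs => rw [← re_add_im v, ← mul_one (v.re : ℂ), ← real_smul, ← real_smul, map_add,
      map_smul, map_smul, real_smul, real_smul]
  have hconj : u⁻¹ = u.re - u.im * I := by
    rw [inv_eq_conj hu]
    apply Complex.ext <;> simp
  rw [dbar, div_eq_mul_inv _ u, hconj, hmap u, hmap (u * I), mul_I_re, mul_I_im]
  push_cast
  linear_combination (-(u.im : ℂ) * fderiv ℝ h ζ I / 2) * I_sq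

theorem integral_Ioi_fderiv_add_smul {E : Type*} [NormedAddCommGroup E] [NormedSpace ℝ E]
    {h : E → ℂ} (hh : ContDiff ℝ 1 h) (hs : HasCompactSupport h) (z : E) {u : E} (hu : u ≠ 0) :
    ∫ r in Ioi (0 : ℝ), fderiv ℝ h (z + r • u) u = -h z := by
  have hray : IsClosedEmbedding fun r : ℝ => z + r • u :=
    (Homeomorph.addLeft z).isClosedEmbedding.comp (isClosedEmbedding_smul_left hu)
  have hderiv (r : ℝ) : deriv (fun r : ℝ => h (z + r • u)) r = fderiv ℝ h (z + r • u) u := by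
    have hline : HasDerivAt (fun r : ℝ => z + r • u) u r := by
      simpa using ((hasDerivAt_id r).smul_const u).const_add z
    exact ((hh.differentiable one_ne_zero _).hasFDerivAt.comp_hasDerivAt r hline).deriv
  have hint := HasCompactSupport.integral_Ioi_deriv_eq (hh.comp (by fun_prop))
    (hs.comp_isClosedEmbedding hray) 0
  simpa only [Function.comp_def, hderiv, zero_smul, add_zero] using hint

theorem integral_fderiv_circleMap (hh : ContDiff ℝ 1 h) (z : ℂ) {r : ℝ} (hr : r ≠ 0) :
    ∫ θ in Ioo (-Real.pi) Real.pi, fderiv ℝ h (circleMap z r θ) (exp (θ * I) * I) = 0 := by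
  have hderiv (θ : ℝ) : HasDerivAt (fun θ => (r : ℂ)⁻¹ * h (circleMap z r θ))
      (fderiv ℝ h (circleMap z r θ) (exp (θ * I) * I)) θ := by
    have hcomp := ((hh.differentiable one_ne_zero _).hasFDerivAt.comp_hasDerivAt θ
      (hasDerivAt_circleMap z r θ)).const_mul (r : ℂ)⁻¹
    rwa [circleMap_zero, mul_assoc, ← real_smul, map_smul, real_smul,
      inv_mul_cancel_left₀ (ofReal_ne_zero.2 hr)] at hcomp
  have hcont : Continuous fun θ : ℝ => fderiv ℝ h (circleMap z r θ) (exp (θ * I) * I) :=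
    ((hh.continuous_fderiv one_ne_zero).comp (continuous_circleMap z r)).clm_apply (by fun_prop)
  have hperiod : circleMap z r Real.pi = circleMap z r (-Real.pi) := by
    have := periodic_circleMap z r (-Real.pi)
    rwa [show -Real.pi + 2 * Real.pi = Real.pi by ring] at this
  rw [← integral_Ioc_eq_integral_Ioo,
    ← intervalIntegral.integral_of_le (neg_le_self Real.pi_pos.le),
    intervalIntegral.integral_eq_sub_of_hasDerivAt (fun θ _ => hderiv θ)
      (hcont.intervalIntegrable _ _), hperiod, sub_self]

theorem integrableOn_polarCoord_target {L : ℂ → ℂ →L[ℝ] ℂ} (hL : Continuous L)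
    (hs : HasCompactSupport L) (z : ℂ) {u : ℝ → ℂ} (hu : Continuous u) :
    IntegrableOn (fun p : ℝ × ℝ => L (circleMap z p.1 p.2) (u p.2)) polarCoord.target := by
  obtain ⟨R, hR⟩ := hs.isCompact.isBounded.subset_closedBall z
  have hcont : Continuous fun p : ℝ × ℝ => L (circleMap z p.1 p.2) (u p.2) := by
    unfold circleMap
    fun_prop
  have hcompact : IntegrableOn (fun p : ℝ × ℝ => L (circleMap z p.1 p.2) (u p.2))
      (Icc 0 R ×ˢ Icc (-Real.pi) Real.pi) :=
    hcont.continuousOn.integrableOn_compact (isCompact_Icc.prod isCompact_Icc)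
  refine hcompact.of_forall_sdiff_eq_zero polarCoord.open_target.measurableSet ?_
  rintro ⟨r, θ⟩ ⟨⟨hr, hθ⟩, hout⟩
  have hr : 0 < r := hr
  have hnotMem : circleMap z r θ ∉ tsupport L := fun hmem => by
    have hle := mem_closedBall.1 (hR hmem)
    rw [dist_eq_norm, circleMap_sub_center, norm_circleMap_zero, abs_of_pos hr] at hle
    exact hout ⟨⟨hr.le, hle⟩, Ioo_subset_Icc_self hθ⟩
  simp [image_eq_zero_of_notMem_tsupport hnotMem]

theorem integral_polarCoord_fderiv_radial (hh : ContDiff ℝ 1 h) (hs : HasCompactSupport h)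
    (z : ℂ) :
    ∫ p in polarCoord.target, fderiv ℝ h (circleMap z p.1 p.2) (exp (p.2 * I)) =
      -(2 * Real.pi * h z) := by
  have hint := integrableOn_polarCoord_target (hh.continuous_fderiv one_ne_zero)
    (hs.fderiv (𝕜 := ℝ)) z (u := fun θ => exp (θ * I)) (by fun_prop)
  have hradial (θ : ℝ) :
      ∫ r in Ioi (0 : ℝ), fderiv ℝ h (circleMap z r θ) (exp (θ * I)) = -h z := by
    simpa only [circleMap, real_smul] using
      integral_Ioi_fderiv_add_smul hh hs z (exp_ne_zero (θ * I))
  rw [polarCoord_target, Measure.volume_eq_prod] at hint ⊢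
  rw [← setIntegral_prod_swap]
  refine (setIntegral_prod _ hint.swap).trans ?_
  simp only [Function.comp_apply, Prod.swap_prod_mk, hradial, setIntegral_const,
    Real.volume_real_Ioo, real_smul]
  rw [max_eq_left (by linarith [Real.pi_pos])]
  push_cast
  ring

theorem integral_polarCoord_fderiv_angular (hh : ContDiff ℝ 1 h) (hs : HasCompactSupport h)
    (z : ℂ) :
    ∫ p in polarCoord.target, fderiv ℝ h (circleMap z p.1 p.2) (exp (p.2 * I) * I) = 0 := by
  have hint := integrableOn_polarCoord_target (hh.continuous_fderiv one_ne_zero)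
    (hs.fderiv (𝕜 := ℝ)) z (u := fun θ => exp (θ * I) * I) (by fun_prop)
  rw [polarCoord_target, Measure.volume_eq_prod] at hint ⊢
  rw [setIntegral_prod _ hint]
  exact setIntegral_eq_zero_of_forall_eq_zero fun r hr =>
    integral_fderiv_circleMap hh z (ne_of_gt hr)

/-- The Cauchy transform of `k`, normalized so that `cauchyTransform (dbar h) = h` for compactly
supported `h`. -/
def cauchyTransform (k : ℂ → ℂ) (z : ℂ) : ℂ :=
  (Real.pi : ℂ)⁻¹ * ∫ ζ, k ζ / (z - ζ)

theorem cauchyTransform_eq_integral_polarCoord (k : ℂ → ℂ) (z : ℂ) :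
    cauchyTransform k z = -(Real.pi : ℂ)⁻¹ *
      ∫ p in polarCoord.target, k (circleMap z p.1 p.2) / exp (p.2 * I) := by
  have htranslate : ∫ ζ, k ζ / (z - ζ) = -∫ w, k (z + w) / w := by
    rw [← integral_add_left_eq_self _ z, ← integral_neg]
    simp only [sub_add_cancel_left, div_neg]
  rw [cauchyTransform, htranslate, ← Complex.integral_comp_polarCoord_symm, mul_neg, neg_mul]
  congr 2
  refine setIntegral_congr_fun polarCoord.open_target.measurableSet ?_
  rintro ⟨r, θ⟩ ⟨hr, -⟩
  have hr : (r : ℂ) ≠ 0 := ofReal_ne_zero.2 (ne_of_gt hr)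
  have hpolar : Complex.polarCoord.symm (r, θ) = r * exp (θ * I) := by
    rw [Complex.polarCoord_symm_apply, exp_mul_I, ofReal_cos, ofReal_sin]
  simp only [hpolar, circleMap, real_smul]
  field_simp

theorem cauchyTransform_dbar (hh : ContDiff ℝ 1 h) (hs : HasCompactSupport h) :
    cauchyTransform (dbar h) = h := by
  ext z
  have hint (u : ℝ → ℂ) (hu : Continuous u) :=
    integrableOn_polarCoord_target (hh.continuous_fderiv one_ne_zero) (hs.fderiv (𝕜 := ℝ)) z
      hu
  have hradial := hint (fun θ => exp (θ * I)) (by fun_prop)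
  have hangular := (hint (fun θ => exp (θ * I) * I) (by fun_prop)).const_mul I
  have hsum : ∫ p in polarCoord.target, dbar h (circleMap z p.1 p.2) / exp (p.2 * I) =
      -(Real.pi * h z) := by
    simp only [dbar_div_of_norm_eq_one (norm_exp_ofReal_mul_I _)]
    rw [integral_div, integral_add hradial hangular, integral_const_mul,
      integral_polarCoord_fderiv_radial hh hs, integral_polarCoord_fderiv_angular hh hs]
    ring
  have hpi : (Real.pi : ℂ) ≠ 0 := ofReal_ne_zero.2 Real.pi_ne_zero
  rw [cauchyTransform_eq_integral_polarCoord, hsum]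
  field_simp

section Kernel

variable {ρ : ℝ}

theorem smul_indicator_Iio_inv :
    EqOn (fun r => r ^ (Module.finrank ℝ ℂ - 1) • (Iio ρ).indicator (·⁻¹) r)
      ((Iio ρ).indicator 1) (Ioi 0) := fun r (hr : 0 < r) => by
  by_cases h : r < ρ <;> simp [finrank_real_complex, hr.ne', h]

theorem integrable_indicator_Iio_inv_norm (ρ : ℝ) :
    Integrable fun w : ℂ => (Iio ρ).indicator (·⁻¹) ‖w‖ := by
  rw [integrable_fun_norm_addHaar, integrableOn_congr_fun smul_indicator_Iio_inv measurableSet_Ioi,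
    integrableOn_indicator_iff measurableSet_Iio, inter_comm, Ioi_inter_Iio]
  exact integrableOn_const measure_Ioo_lt_top.ne

theorem integral_indicator_Iio_inv_norm (hρ : 0 ≤ ρ) :
    ∫ w : ℂ, (Iio ρ).indicator (·⁻¹) ‖w‖ = 2 * Real.pi * ρ := by
  rw [integral_fun_norm_addHaar, setIntegral_congr_fun measurableSet_Ioi smul_indicator_Iio_inv,
    setIntegral_indicator measurableSet_Iio, Ioi_inter_Iio]
  simp [finrank_real_complex, Measure.real, hρ, mul_assoc]

/-- A majorant of `ζ ↦ ‖z - ζ‖⁻¹` on `closedBall 0 ρ` whose integral does not depend on `z`. -/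
def kernelMajorant (ρ : ℝ) (z ζ : ℂ) : ℝ :=
  (Iio ρ).indicator (·⁻¹) ‖z - ζ‖ + (closedBall (0 : ℂ) ρ).indicator (fun _ => ρ⁻¹) ζ

theorem integrable_closedBall_indicator_const (ρ c : ℝ) :
    Integrable ((closedBall (0 : ℂ) ρ).indicator fun _ => c) :=
  (integrable_indicator_iff measurableSet_closedBall).2
    (integrableOn_const measure_closedBall_lt_top.ne)

theorem integrable_kernelMajorant (ρ : ℝ) (z : ℂ) : Integrable (kernelMajorant ρ z) :=
  ((integrable_indicator_Iio_inv_norm ρ).comp_sub_left z).add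
    (integrable_closedBall_indicator_const ρ ρ⁻¹)

theorem integral_kernelMajorant (hρ : 0 < ρ) (z : ℂ) :
    ∫ ζ, kernelMajorant ρ z ζ = 3 * Real.pi * ρ := by
  have hfar : ∫ ζ, (closedBall (0 : ℂ) ρ).indicator (fun _ => ρ⁻¹) ζ = Real.pi * ρ := by
    rw [integral_indicator measurableSet_closedBall, setIntegral_const, Measure.real,
      Complex.volume_closedBall, ENNReal.toReal_mul, ENNReal.toReal_pow,
      ENNReal.toReal_ofReal hρ.le, ENNReal.coe_toReal, NNReal.coe_real_pi, smul_eq_mul]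
    field_simp
  unfold kernelMajorant
  rw [integral_add ((integrable_indicator_Iio_inv_norm ρ).comp_sub_left z)
      (integrable_closedBall_indicator_const ρ ρ⁻¹),
    integral_sub_left_eq_self (fun w : ℂ => (Iio ρ).indicator (·⁻¹) ‖w‖),
    integral_indicator_Iio_inv_norm hρ.le, hfar]
  ring

theorem inv_norm_sub_le_kernelMajorant (hρ : 0 < ρ) {z ζ : ℂ} (hζ : ‖ζ‖ ≤ ρ) :
    ‖z - ζ‖⁻¹ ≤ kernelMajorant ρ z ζ := by
  rw [kernelMajorant, indicator_of_mem (mem_closedBall_zero_iff.2 hζ)]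
  by_cases hz : ‖z - ζ‖ < ρ
  · rw [indicator_of_mem (mem_Iio.2 hz)]
    exact le_add_of_nonneg_right (inv_nonneg.2 hρ.le)
  · rw [indicator_of_notMem (notMem_Iio.2 (not_lt.1 hz)), zero_add]
    exact inv_anti₀ hρ (not_lt.1 hz)

theorem kernelMajorant_nonneg (hρ : 0 ≤ ρ) (z ζ : ℂ) : 0 ≤ kernelMajorant ρ z ζ :=
  add_nonneg (indicator_apply_nonneg fun _ => inv_nonneg.2 (norm_nonneg _))
    (indicator_apply_nonneg fun _ => inv_nonneg.2 hρ)

theorem norm_div_sub_le_kernelMajorant {C : ℝ} (hρ : 0 < ρ) (hkC : ∀ ζ, ‖k ζ‖ ≤ C)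
    (hk₀ : ∀ ζ, ρ < ‖ζ‖ → k ζ = 0) (z ζ : ℂ) :
    ‖k ζ / (z - ζ)‖ ≤ C * kernelMajorant ρ z ζ := by
  have hC : 0 ≤ C := (norm_nonneg _).trans (hkC 0)
  rcases le_or_gt ‖ζ‖ ρ with hζ | hζ
  · rw [norm_div, div_eq_mul_inv]
    exact mul_le_mul (hkC ζ) (inv_norm_sub_le_kernelMajorant hρ hζ) (by positivity) hC
  · rw [hk₀ ζ hζ, zero_div, norm_zero]
    exact mul_nonneg hC (kernelMajorant_nonneg hρ.le z ζ)

end Kernel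

theorem integrable_div_sub (hk : Continuous k) (hs : HasCompactSupport k) (z : ℂ) :
    Integrable fun ζ => k ζ / (z - ζ) := by
  obtain ⟨C, hC⟩ := hs.exists_bound_of_continuous hk
  obtain ⟨ρ, hρ, hsub⟩ := hs.isCompact.isBounded.subset_closedBall_lt 0 0
  have hk₀ : ∀ ζ, ρ < ‖ζ‖ → k ζ = 0 := fun ζ hζ =>
    image_eq_zero_of_notMem_tsupport fun h => hζ.not_ge (mem_closedBall_zero_iff.1 (hsub h))
  refine ((integrable_kernelMajorant ρ z).const_mul C).mono'
    (hk.measurable.div (by fun_prop)).aestronglyMeasurable ?_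
  exact .of_forall (norm_div_sub_le_kernelMajorant hρ hC hk₀ z)

theorem norm_cauchyTransform_le {C ρ : ℝ} (hρ : 0 < ρ) (hkC : ∀ ζ, ‖k ζ‖ ≤ C)
    (hk₀ : ∀ ζ, ρ < ‖ζ‖ → k ζ = 0) (z : ℂ) : ‖cauchyTransform k z‖ ≤ 3 * C * ρ := by
  have hbound : ‖∫ ζ, k ζ / (z - ζ)‖ ≤ C * (3 * Real.pi * ρ) := by
    rw [← integral_kernelMajorant hρ z, ← integral_const_mul]
    exact norm_integral_le_of_norm_le ((integrable_kernelMajorant ρ z).const_mul C)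
      (.of_forall (norm_div_sub_le_kernelMajorant hρ hkC hk₀ z))
  calc ‖cauchyTransform k z‖ = Real.pi⁻¹ * ‖∫ ζ, k ζ / (z - ζ)‖ := by
        rw [cauchyTransform, norm_mul, norm_inv, norm_real, Real.norm_of_nonneg Real.pi_pos.le]
    _ ≤ Real.pi⁻¹ * (C * (3 * Real.pi * ρ)) := by gcongr
    _ = 3 * C * ρ := by field_simp

theorem cauchyTransform_sub {k' : ℂ → ℂ} (hk : Continuous k) (hs : HasCompactSupport k)
    (hk' : Continuous k') (hs' : HasCompactSupport k') (z : ℂ) :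
    cauchyTransform (fun ζ => k ζ - k' ζ) z = cauchyTransform k z - cauchyTransform k' z := by
  simp only [cauchyTransform, sub_div]
  rw [integral_sub (integrable_div_sub hk hs z) (integrable_div_sub hk' hs' z), mul_sub]

section CauchyTransform

variable {K : Set ℂ}

theorem continuous_div_sub (hk : Continuous k) (hkK : ∀ y ∈ K, k =ᶠ[𝓝 y] 0) :
    Continuous fun q : ℂ × K => k q.1 / (q.2 - q.1) := by
  rw [continuous_iff_continuousAt]
  rintro ⟨ζ, z⟩
  by_cases hζ : ζ ∈ K
  · have hzero : (fun q : ℂ × K => k q.1 / (q.2 - q.1)) =ᶠ[𝓝 (ζ, z)] fun _ => 0 := by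
      filter_upwards [(continuous_fst.tendsto (ζ, z)).eventually (hkK ζ hζ)] with q hq
      rw [hq, Pi.zero_apply, zero_div]
    exact continuousAt_const.congr hzero.symm
  · exact .div (by fun_prop) (by fun_prop) (sub_ne_zero.2 fun h : (z : ℂ) = ζ => hζ (h ▸ z.2))

variable [CompactSpace K]

theorem exists_mem_polyAlgebra_div_sub (hlog : ∀ a ∉ K, HasContLogOn (fun z => z - a) K)
    (hkK : ∀ y ∈ K, k y = 0) (ζ : ℂ) :
    ∃ f ∈ polyAlgebra K, ∀ z : K, f z = k ζ / (z - ζ) := by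
  by_cases hζ : ζ ∈ K
  · exact ⟨0, zero_mem _, fun z => by simp [hkK ζ hζ]⟩
  have hne (z : K) : ζ - (z : ℂ) ≠ 0 := sub_ne_zero.2 fun h => hζ (h ▸ z.2)
  let r : C(K, ℂ) := ⟨fun z => (ζ - (z : ℂ))⁻¹, Continuous.inv₀ (by fun_prop) hne⟩
  have hr : r ∈ polyAlgebra K :=
    mem_polyAlgebra_of_mul_sub_eq_one hlog hζ fun z => mul_inv_cancel₀ (hne z)
  refine ⟨-k ζ • r, Subalgebra.smul_mem _ hr _, fun z => ?_⟩
  rw [← neg_sub, div_neg, div_eq_mul_inv, ← neg_mul]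
  rfl

theorem exists_mem_polyAlgebra_cauchyTransform
    (hlog : ∀ a ∉ K, HasContLogOn (fun z => z - a) K) (hk : Continuous k)
    (hs : HasCompactSupport k) (hkK : ∀ y ∈ K, k =ᶠ[𝓝 y] 0) :
    ∃ f ∈ polyAlgebra K, ∀ z : K, f z = cauchyTransform k z := by
  have hclosed : IsClosed (polyAlgebra K : Set C(K, ℂ)) :=
    Subalgebra.isClosed_topologicalClosure _
  have hcomplete : CompleteSpace (polyAlgebra K) := hclosed.completeSpace_coe
  choose Ψ hΨ_mem hΨ using
    exists_mem_polyAlgebra_div_sub hlog fun y hy => (hkK y hy).self_of_nhds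
  let Ψ' : ℂ → polyAlgebra K := fun ζ => ⟨Ψ ζ, hΨ_mem ζ⟩
  have hcont : Continuous Ψ' := by
    refine (ContinuousMap.continuous_of_continuous_uncurry Ψ ?_).subtype_mk _
    exact (continuous_div_sub hk hkK).congr fun q => (hΨ q.1 q.2).symm
  have hsupp : HasCompactSupport Ψ' := hs.mono fun ζ hζ hkζ => hζ <| Subtype.ext <|
    ContinuousMap.ext fun z => by simp [Ψ', hΨ, hkζ]
  have hint : Integrable Ψ' := hcont.integrable_of_hasCompactSupport hsupp
  refine ⟨(Real.pi : ℂ)⁻¹ • (∫ ζ, Ψ' ζ : polyAlgebra K),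
    Subalgebra.smul_mem _ (∫ ζ, Ψ' ζ).2 _, fun z => ?_⟩
  let evalAt : polyAlgebra K →L[ℂ] ℂ :=
    (ContinuousMap.evalCLM ℂ z).comp (Subalgebra.toSubmodule (polyAlgebra K)).subtypeL
  have heval := evalAt.integral_comp_comm hint
  have hΨz : ∫ ζ, evalAt (Ψ' ζ) = ∫ ζ, k ζ / (z - ζ) := by
    congr 1
    ext ζ
    exact hΨ ζ z
  rw [cauchyTransform, ← hΨz, heval]
  rfl

end CauchyTransform

end Pompeiu

section Localization

theorem exists_cutoff :
    ∃ C : ℝ, ∀ δ > 0, ∃ b : ℂ → ℂ, ContDiff ℝ 1 b ∧ (∀ ζ, ‖ζ‖ ≤ δ → b ζ = 1) ∧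
      (∀ ζ, 2 * δ ≤ ‖ζ‖ → b ζ = 0) ∧ (∀ ζ, ‖b ζ‖ ≤ 1) ∧ ∀ ζ, ‖dbar b ζ‖ ≤ C / δ := by
  let bump : ContDiffBump (0 : ℂ) := ⟨1, 2, one_pos, one_lt_two⟩
  set β : ℂ → ℂ := fun ζ => (bump ζ : ℝ) with hβ_def
  have hβ : ContDiff ℝ 1 β := ofRealCLM.contDiff.comp bump.contDiff
  have hβ_supp : HasCompactSupport β := bump.hasCompactSupport.comp_left ofReal_zero
  obtain ⟨C, hC⟩ :=
    (hβ_supp.fderiv (𝕜 := ℝ)).exists_bound_of_continuous (hβ.continuous_fderiv one_ne_zero)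
  refine ⟨C, fun δ hδ => ⟨fun ζ => β (δ⁻¹ • ζ), hβ.comp (contDiff_const_smul δ⁻¹),
    fun ζ hζ => ?_, fun ζ hζ => ?_, fun ζ => ?_, fun ζ => ?_⟩⟩
  · have hmem : δ⁻¹ • ζ ∈ closedBall (0 : ℂ) bump.rIn := by
      rwa [mem_closedBall_zero_iff, norm_smul_of_nonneg (by positivity), inv_mul_le_one₀ hδ]
    simp only [hβ_def, bump.one_of_mem_closedBall hmem, ofReal_one]
  · have hdist : bump.rOut ≤ dist (δ⁻¹ • ζ) 0 := by
      rwa [dist_zero_right, norm_smul_of_nonneg (by positivity), inv_mul_eq_div, le_div_iff₀ hδ]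
    simp only [hβ_def, bump.zero_of_le_dist hdist, ofReal_zero]
  · rw [norm_real, Real.norm_of_nonneg bump.nonneg]
    exact bump.le_one
  · calc ‖dbar (fun ζ => β (δ⁻¹ • ζ)) ζ‖ ≤ ‖fderiv ℝ (fun ζ => β (δ⁻¹ • ζ)) ζ‖ := norm_dbar_le _ _
      _ = δ⁻¹ * ‖fderiv ℝ β (δ⁻¹ • ζ)‖ := by
        rw [fderiv_comp_smul, norm_smul_of_nonneg (by positivity)]
      _ ≤ δ⁻¹ * C := by gcongr; exact hC _
      _ = C / δ := inv_mul_eq_div δ C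

variable {K : Set ℂ} [CompactSpace K] {φ b : ℂ → ℂ} {C δ : ℝ}

theorem dbar_eq_zero_of_lt_norm {R : ℝ} (hb₀ : ∀ ζ, R ≤ ‖ζ‖ → b ζ = 0) {ζ : ℂ} (hζ : R < ‖ζ‖) :
    dbar b ζ = 0 := by
  have hb : b =ᶠ[𝓝 ζ] 0 := by
    filter_upwards [(isOpen_lt continuous_const continuous_norm).mem_nhds hζ] with w hw
    exact hb₀ w (le_of_lt hw)
  exact (dbar_eventuallyEq_zero hb (differentiable_const 0)).self_of_nhds

theorem norm_mul_dbar_le (hδ : 0 < δ) (hφ_le : ∀ ζ, ‖φ ζ‖ ≤ ‖ζ‖)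
    (hb₀ : ∀ ζ, 2 * δ ≤ ‖ζ‖ → b ζ = 0) (hbC : ∀ ζ, ‖dbar b ζ‖ ≤ C / δ) (ζ : ℂ) :
    ‖φ ζ * dbar b ζ‖ ≤ 2 * C := by
  have hC : 0 ≤ C / δ := (norm_nonneg _).trans (hbC 0)
  calc ‖φ ζ * dbar b ζ‖ ≤ 2 * δ * (C / δ) := by
        rcases lt_or_ge (2 * δ) ‖ζ‖ with hζ | hζ
        · rw [dbar_eq_zero_of_lt_norm hb₀ hζ, mul_zero, norm_zero]
          positivity
        · rw [norm_mul]
          exact mul_le_mul ((hφ_le ζ).trans hζ) (hbC ζ) (norm_nonneg _) (by positivity)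
    _ = 2 * C := by field_simp

theorem exists_mem_polyAlgebra_norm_sub_one_sub_mul_le
    (hlog : ∀ a ∉ K, HasContLogOn (fun z => z - a) K) (hδ : 0 < δ)
    (hφ : ContDiff ℝ 1 φ) (hs : HasCompactSupport φ) (hφ_le : ∀ ζ, ‖φ ζ‖ ≤ ‖ζ‖)
    (hφK : ∀ y ∈ K, δ ≤ ‖y‖ → dbar φ =ᶠ[𝓝 y] 0)
    (hb : ContDiff ℝ 1 b) (hb₁ : ∀ ζ, ‖ζ‖ ≤ δ → b ζ = 1) (hb₀ : ∀ ζ, 2 * δ ≤ ‖ζ‖ → b ζ = 0)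
    (hbC : ∀ ζ, ‖dbar b ζ‖ ≤ C / δ) :
    ∃ f ∈ polyAlgebra K, ∀ z : K, ‖f z - (1 - b z) * φ z‖ ≤ 12 * C * δ := by
  have hb' : ContDiff ℝ 1 fun ζ => 1 - b ζ := contDiff_const.sub hb
  set k₁ : ℂ → ℂ := fun ζ => (1 - b ζ) * dbar φ ζ
  set k₂ : ℂ → ℂ := fun ζ => φ ζ * dbar b ζ
  have hk₁ : Continuous k₁ := hb'.continuous.mul (continuous_dbar hφ)
  have hk₁_supp : HasCompactSupport k₁ := (hasCompactSupport_dbar hs).mul_left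
  have hk₁K : ∀ y ∈ K, k₁ =ᶠ[𝓝 y] 0 := fun y hy => by
    rcases lt_or_ge ‖y‖ δ with hyδ | hyδ
    · filter_upwards [(isOpen_lt continuous_norm continuous_const).mem_nhds hyδ] with w hw
      simp [k₁, hb₁ w (le_of_lt hw)]
    · filter_upwards [hφK y hy hyδ] with w hw
      simp [k₁, hw]
  have hk₂ : Continuous k₂ := hφ.continuous.mul (continuous_dbar hb)
  have hdbar : dbar (fun ζ => (1 - b ζ) * φ ζ) = fun ζ => k₁ ζ - k₂ ζ := funext fun ζ => by
    rw [dbar_mul (hb'.differentiable one_ne_zero ζ) (hφ.differentiable one_ne_zero ζ),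
      dbar_one_sub]
    ring
  have hrepr : cauchyTransform (fun ζ => k₁ ζ - k₂ ζ) = fun ζ => (1 - b ζ) * φ ζ :=
    hdbar ▸ cauchyTransform_dbar (hb'.mul hφ) hs.mul_left
  have hk₂_zero : ∀ ζ, 2 * δ < ‖ζ‖ → k₂ ζ = 0 := fun ζ hζ => by
    simp only [k₂, dbar_eq_zero_of_lt_norm hb₀ hζ, mul_zero]
  have hk₂_le : ∀ ζ, ‖k₂ ζ‖ ≤ 2 * C := norm_mul_dbar_le hδ hφ_le hb₀ hbC
  obtain ⟨f, hf, hfT⟩ := exists_mem_polyAlgebra_cauchyTransform hlog hk₁ hk₁_supp hk₁K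
  refine ⟨f, hf, fun z => ?_⟩
  calc ‖f z - (1 - b z) * φ z‖ = ‖cauchyTransform k₂ z‖ := by
        rw [hfT, ← congrFun hrepr z, cauchyTransform_sub hk₁ hk₁_supp hk₂ hs.mul_right,
          sub_sub_cancel]
    _ ≤ 3 * (2 * C) * (2 * δ) := norm_cauchyTransform_le (by positivity) hk₂_le hk₂_zero z
    _ = 12 * C * δ := by ring

theorem exists_forall_exists_mem_polyAlgebra_norm_sub_le
    (hlog : ∀ a ∉ K, HasContLogOn (fun z => z - a) K) :
    ∃ C : ℝ, ∀ δ > 0, ∀ φ : ℂ → ℂ, ContDiff ℝ 1 φ → HasCompactSupport φ → (∀ ζ, ‖φ ζ‖ ≤ ‖ζ‖) →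
      (∀ y ∈ K, δ ≤ ‖y‖ → dbar φ =ᶠ[𝓝 y] 0) →
      ∃ f ∈ polyAlgebra K, ∀ z : K, ‖f z - φ z‖ ≤ C * δ := by
  obtain ⟨C, hcutoff⟩ := exists_cutoff
  refine ⟨12 * C + 2, fun δ hδ φ hφ hs hφ_le hφK => ?_⟩
  obtain ⟨b, hb, hb₁, hb₀, hb_le, hbC⟩ := hcutoff δ hδ
  obtain ⟨f, hf, hfφ⟩ := exists_mem_polyAlgebra_norm_sub_one_sub_mul_le hlog hδ hφ hs hφ_le hφK hb
    hb₁ hb₀ hbC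
  refine ⟨f, hf, fun z => ?_⟩
  have hbφ : ‖b z * φ z‖ ≤ 2 * δ := by
    rcases le_total (2 * δ) ‖(z : ℂ)‖ with hz | hz
    · rw [hb₀ z hz, zero_mul, norm_zero]
      positivity
    · rw [norm_mul]
      exact (mul_le_of_le_one_left (norm_nonneg _) (hb_le z)).trans ((hφ_le z).trans hz)
  calc ‖f z - φ z‖ = ‖(f z - (1 - b z) * φ z) - b z * φ z‖ := by ring_nf
    _ ≤ 12 * C * δ + 2 * δ := norm_sub_le_of_le (hfφ z) hbφ
    _ = (12 * C + 2) * δ := by ring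

end Localization

section Gluing

variable {Y₁ Y₂ : Set ℂ}

theorem exists_contDiff_eventuallyEq_zero_eventuallyEq_id (hY₁ : IsClosed Y₁)
    (hY₂ : IsCompact Y₂) (hY : Y₁ ∩ Y₂ ⊆ {0}) {δ : ℝ} (hδ : 0 < δ) :
    ∃ φ : ℂ → ℂ, ContDiff ℝ 1 φ ∧ HasCompactSupport φ ∧ (∀ ζ, ‖φ ζ‖ ≤ ‖ζ‖) ∧
      (∀ y ∈ Y₁, δ ≤ ‖y‖ → φ =ᶠ[𝓝 y] 0) ∧ ∀ y ∈ Y₂, δ ≤ ‖y‖ → φ =ᶠ[𝓝 y] id := by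
  obtain ⟨M, hM⟩ := hY₂.isBounded.subset_ball 0
  have hdisj : Disjoint (Y₁ \ ball 0 δ ∪ (ball 0 M)ᶜ) (Y₂ \ ball 0 δ) := by
    refine disjoint_left.2 ?_
    rintro x (⟨hx₁, hxδ⟩ | hxM) ⟨hx₂, -⟩
    · exact hxδ (hY ⟨hx₁, hx₂⟩ ▸ mem_ball_self hδ)
    · exact hxM (hM hx₂)
  obtain ⟨Φ, hΦ₀, hΦ₁, hΦ⟩ := exists_contMDiffMap_zero_one_nhds_of_isClosed
    (modelWithCornersSelf ℝ ℂ) (n := 1) ((hY₁.sdiff isOpen_ball).union isOpen_ball.isClosed_compl)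
    (hY₂.isClosed.sdiff isOpen_ball) hdisj
  rw [eventually_nhdsSet_iff_forall] at hΦ₀ hΦ₁
  have hnotMem {y : ℂ} (hy : δ ≤ ‖y‖) : y ∉ ball 0 δ := fun h =>
    hy.not_gt (mem_ball_zero_iff.1 h)
  refine ⟨fun ζ => Φ ζ * ζ, (ofRealCLM.contDiff.comp Φ.contMDiff.contDiff).mul contDiff_id, ?_,
    fun ζ => ?_, fun y hy hyδ => ?_, fun y hy hyδ => ?_⟩
  · refine HasCompactSupport.intro (isCompact_closedBall 0 M) fun ζ hζ => ?_
    have hζM : ζ ∈ (ball 0 M)ᶜ := fun h => hζ (ball_subset_closedBall h)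
    rw [(hΦ₀ ζ (.inr hζM)).self_of_nhds, ofReal_zero, zero_mul]
  · rw [norm_mul, norm_real, Real.norm_of_nonneg (hΦ ζ).1]
    exact mul_le_of_le_one_left (norm_nonneg _) (hΦ ζ).2
  · filter_upwards [hΦ₀ y (.inl ⟨hy, hnotMem hyδ⟩)] with w hw
    rw [hw, ofReal_zero, zero_mul, Pi.zero_apply]
  · filter_upwards [hΦ₁ y ⟨hy, hnotMem hyδ⟩] with w hw
    rw [hw, ofReal_one, one_mul, id]

theorem mem_polyAlgebra_union [CompactSpace ↥(Y₁ ∪ Y₂)]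
    (hlog : ∀ a ∉ Y₁ ∪ Y₂, HasContLogOn (fun z => z - a) (Y₁ ∪ Y₂)) (hY₁ : IsClosed Y₁)
    (hY₂ : IsCompact Y₂) (hY : Y₁ ∩ Y₂ ⊆ {0}) {η : C(↥(Y₁ ∪ Y₂), ℂ)}
    (hη₁ : ∀ z : ↥(Y₁ ∪ Y₂), z.1 ∈ Y₁ → η z = 0)
    (hη₂ : ∀ z : ↥(Y₁ ∪ Y₂), z.1 ∈ Y₂ → η z = z) : η ∈ polyAlgebra (Y₁ ∪ Y₂) := by
  obtain ⟨C, hC⟩ := exists_forall_exists_mem_polyAlgebra_norm_sub_le hlog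
  rw [← SetLike.mem_coe, ← (Subalgebra.isClosed_topologicalClosure _).closure_eq]
  refine Metric.mem_closure_iff.2 fun ε hε => ?_
  obtain ⟨δ, hδ, hδε⟩ := exists_pos_mul_lt hε (C + 2)
  obtain ⟨φ, hφ, hs, hφ_le, hφ₁, hφ₂⟩ :=
    exists_contDiff_eventuallyEq_zero_eventuallyEq_id hY₁ hY₂ hY hδ
  have hdbar : ∀ y ∈ Y₁ ∪ Y₂, δ ≤ ‖y‖ → dbar φ =ᶠ[𝓝 y] 0 := by
    rintro y (hy | hy) hyδ
    · exact dbar_eventuallyEq_zero (hφ₁ y hy hyδ) (differentiable_const 0)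
    · exact dbar_eventuallyEq_zero (hφ₂ y hy hyδ) differentiable_id
  have hη_le (z : ↥(Y₁ ∪ Y₂)) : ‖η z‖ ≤ ‖(z : ℂ)‖ := by
    rcases z.2 with hz | hz
    · simp [hη₁ z hz]
    · simp [hη₂ z hz]
  have hφη (z : ↥(Y₁ ∪ Y₂)) : ‖φ z - η z‖ ≤ 2 * δ := by
    rcases le_total δ ‖(z : ℂ)‖ with hzδ | hzδ
    · have heq : φ z = η z := by
        rcases z.2 with hz | hz
        · exact (hφ₁ z hz hzδ).self_of_nhds.trans (hη₁ z hz).symm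
        · exact (hφ₂ z hz hzδ).self_of_nhds.trans (hη₂ z hz).symm
      rw [heq, sub_self, norm_zero]
      positivity
    · exact (norm_sub_le_of_le ((hφ_le z).trans hzδ) ((hη_le z).trans hzδ)).trans_eq
        (two_mul δ).symm
  obtain ⟨f, hf, hfφ⟩ := hC δ hδ φ hφ hs hφ_le hdbar
  refine ⟨f, hf, (ContinuousMap.dist_lt_iff hε).2 fun z => ?_⟩
  calc dist (η z) (f z) = ‖f z - η z‖ := dist_comm _ _ |>.trans (dist_eq_norm _ _)
    _ ≤ C * δ + 2 * δ := norm_sub_le_norm_sub_add_norm_sub _ _ _ |>.trans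
      (add_le_add (hfφ z) (hφη z))
    _ = (C + 2) * δ := by ring
    _ < ε := hδε

theorem exists_mem_polyAlgebra_union (hY₁ : IsCompact Y₁) (hY₂ : IsCompact Y₂)
    [CompactSpace ↥(Y₁ ∪ Y₂)] (hconv₁ : PolyConvex1 Y₁) (hconv₂ : PolyConvex1 Y₂)
    (hY : Y₁ ∩ Y₂ ⊆ {0}) :
    ∃ η ∈ polyAlgebra (Y₁ ∪ Y₂), (∀ z : ↥(Y₁ ∪ Y₂), z.1 ∈ Y₁ → η z = 0) ∧
      ∀ z : ↥(Y₁ ∪ Y₂), z.1 ∈ Y₂ → η z = z := by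
  classical
  have hlog : ∀ a ∉ Y₁ ∪ Y₂, HasContLogOn (fun z => z - a) (Y₁ ∪ Y₂) := fun a ha =>
    (hasContLogOn_sub_of_polyConvex1 hY₁ hconv₁ fun h => ha (.inl h)).union
      (hasContLogOn_sub_of_polyConvex1 hY₂ hconv₂ fun h => ha (.inr h))
      hY₁.isClosed hY₂.isClosed (subsingleton_singleton.anti hY)
  have heq₁ : EqOn (Y₁.piecewise 0 id) 0 Y₁ := piecewise_eqOn _ _ _
  have heq₂ : EqOn (Y₁.piecewise 0 id) id Y₂ := fun z hz₂ => by
    by_cases hz₁ : z ∈ Y₁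
    · rw [heq₁ hz₁, hY ⟨hz₁, hz₂⟩, id, Pi.zero_apply]
    · exact piecewise_eq_of_notMem _ _ _ hz₁
  have hcont : ContinuousOn (Y₁.piecewise 0 id) (Y₁ ∪ Y₂) :=
    (continuousOn_const.congr heq₁).union_of_isClosed (continuousOn_id.congr heq₂)
      hY₁.isClosed hY₂.isClosed
  have hη₁ : ∀ z : ↥(Y₁ ∪ Y₂), z.1 ∈ Y₁ → Y₁.piecewise 0 id z.1 = 0 := fun z hz => heq₁ hz
  have hη₂ : ∀ z : ↥(Y₁ ∪ Y₂), z.1 ∈ Y₂ → Y₁.piecewise 0 id z.1 = z.1 := fun z hz => heq₂ hz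
  exact ⟨⟨_, hcont.domRestrict⟩, mem_polyAlgebra_union hlog hY₁.isClosed hY₂ hY hη₁ hη₂, hη₁, hη₂⟩

end Gluing

section DenseOn

variable {X 𝕜 : Type*} [TopologicalSpace X] [RCLike 𝕜]
  {A : Subalgebra 𝕜 C(X, 𝕜)} {q : C(X, 𝕜)} {E : Set X}

/-- `DenseOn A E` means that every continuous function on `X` can be uniformly approximated on `E`
by members of `A`; the approximation need not be good off `E`. -/
def DenseOn (A : Subalgebra 𝕜 C(X, 𝕜)) (E : Set X) : Prop :=
  ∀ f : C(X, 𝕜), ∀ ε > 0, ∃ a ∈ A, ∀ x ∈ E, ‖f x - a x‖ < ε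

theorem DenseOn.mono {F : Set X} (hE : DenseOn A E) (hFE : F ⊆ E) : DenseOn A F := fun f ε hε =>
  let ⟨a, ha, hfa⟩ := hE f ε hε
  ⟨a, ha, fun x hx => hfa x (hFE hx)⟩

variable [CompactSpace X]

theorem mem_of_forall_exists_norm_sub_le (hA : IsClosed (A : Set C(X, 𝕜))) {f : C(X, 𝕜)}
    (hf : ∀ ε > 0, ∃ a ∈ A, ‖f - a‖ ≤ ε) : f ∈ A := by
  rw [← SetLike.mem_coe, ← hA.closure_eq]
  refine Metric.mem_closure_iff.2 fun ε hε => ?_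
  obtain ⟨a, ha, hfa⟩ := hf (ε / 2) (half_pos hε)
  exact ⟨a, ha, (dist_eq_norm f a).trans_lt (hfa.trans_lt (half_lt_self hε))⟩

theorem mul_mem_of_denseOn_support (hA : IsClosed (A : Set C(X, 𝕜))) (hq : q ∈ A)
    (hdense : DenseOn A (Function.support q)) (f : C(X, 𝕜)) : f * q ∈ A := by
  refine mem_of_forall_exists_norm_sub_le hA fun ε hε => ?_
  obtain ⟨δ, hδ, hδε⟩ := exists_pos_mul_lt hε ‖q‖
  obtain ⟨a, ha, hfa⟩ := hdense f δ hδ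
  refine ⟨a * q, A.mul_mem ha hq, (ContinuousMap.norm_le _ hε.le).2 fun x => ?_⟩
  calc ‖(f * q - a * q) x‖ = ‖q x‖ * ‖f x - a x‖ := by
        rw [← sub_mul, ContinuousMap.mul_apply, norm_mul, mul_comm, ContinuousMap.sub_apply]
    _ ≤ ‖q‖ * δ := by
      by_cases hx : q x = 0
      · rw [hx, norm_zero, zero_mul]
        positivity
      · exact mul_le_mul (q.norm_coe_le_norm x) (hfa x hx).le (norm_nonneg _) (norm_nonneg _)
    _ ≤ ε := hδε.le

variable [T2Space X]

theorem mem_of_forall_eq_zero (hA : IsClosed (A : Set C(X, 𝕜))) (hqA : ∀ g, g * q ∈ A)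
    {f : C(X, 𝕜)} (hf : ∀ x, q x = 0 → f x = 0) : f ∈ A := by
  have hmem : f ∈ (Ideal.span {q}).closure := by
    rw [← ContinuousMap.idealOfSet_ofIdeal_eq_closure, ContinuousMap.mem_idealOfSet]
    exact fun x hx => hf x (ContinuousMap.notMem_setOfIdeal.1 hx (Ideal.mem_span_singleton_self q))
  refine closure_minimal (fun g hg => ?_) hA hmem
  obtain ⟨h, rfl⟩ := Ideal.mem_span_singleton'.1 hg
  exact hqA h

theorem eq_top_of_denseOn (hA : IsClosed (A : Set C(X, 𝕜))) (hE : IsClosed E)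
    (hvanish : ∀ f : C(X, 𝕜), (∀ x ∈ E, f x = 0) → f ∈ A) (hdense : DenseOn A E) : A = ⊤ := by
  refine eq_top_iff.2 fun f _ => mem_of_forall_exists_norm_sub_le hA fun ε hε => ?_
  obtain ⟨a, ha, hfa⟩ := hdense f ε hε
  obtain ⟨g, hg, hgE⟩ := BoundedContinuousFunction.exists_norm_eq_domRestrict_eq hE 𝕜
    ((BoundedContinuousFunction.mkOfCompact (f - a)).domRestrict E)
  have hg_eq : ∀ x ∈ E, g x = f x - a x := fun x hx => DFunLike.congr_fun hgE ⟨x, hx⟩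
  have hmem : f - a - g.toContinuousMap ∈ A := hvanish _ fun x hx => sub_eq_zero.2 (hg_eq x hx).symm
  refine ⟨f - g.toContinuousMap, ?_, ?_⟩
  · convert A.add_mem hmem ha using 1
    abel
  · rw [sub_sub_cancel]
    refine (ContinuousMap.norm_le _ hε.le).2 fun x => (g.norm_coe_le_norm x).trans (hg.trans_le ?_)
    exact (BoundedContinuousFunction.norm_le hε.le).2 fun y => (hfa y y.2).le

theorem eq_top_of_denseOn_support (hA : IsClosed (A : Set C(X, 𝕜))) (hq : q ∈ A)
    (hzero : DenseOn A (q ⁻¹' {0})) (hsupport : DenseOn A (Function.support q)) : A = ⊤ :=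
  eq_top_of_denseOn hA (isClosed_singleton.preimage q.continuous)
    (fun _ hf => mem_of_forall_eq_zero hA (mul_mem_of_denseOn_support hA hq hsupport) hf) hzero

end DenseOn

section Composition

theorem comp_mem_of_mem_polyAlgebra {X : Type*} [TopologicalSpace X] {A : Subalgebra ℂ C(X, ℂ)}
    (hA : IsClosed (A : Set C(X, ℂ))) {Y : Set ℂ} [CompactSpace Y] {g : C(X, Y)}
    (hg : ((ContinuousMap.id ℂ).restrict Y).comp g ∈ A) {η : C(Y, ℂ)} (hη : η ∈ polyAlgebra Y) :
    η.comp g ∈ A := by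
  suffices polyAlgebra Y ≤ A.comap (ContinuousMap.compRightAlgHom ℂ ℂ g) from this hη
  refine Subalgebra.topologicalClosure_minimal ?_
    (hA.preimage (ContinuousMap.compRightAlgHom_continuous ℂ ℂ g))
  rw [polynomialFunctions.eq_adjoin_X, Algebra.adjoin_le_iff, singleton_subset_iff]
  simpa [Polynomial.toContinuousMapOn_X_eq_restrict_id] using hg

variable {σ : Type*} {X : Set (σ → ℂ)}

/-- The restriction to `X ⊆ ℂ^σ` of polynomials in the coordinates, as an algebra homomorphism. -/
def mvPolynomialRestrict (X : Set (σ → ℂ)) : MvPolynomial σ ℂ →ₐ[ℂ] C(X, ℂ) :=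
  aeval fun i => (ContinuousMap.eval i).restrict X

theorem mvPolynomialRestrict_apply (P : MvPolynomial σ ℂ) (x : X) :
    mvPolynomialRestrict X P x = eval x.1 P := by
  have h : (ContinuousMap.evalAlgHom ℂ ℂ x).comp (mvPolynomialRestrict X) = aeval x.1 :=
    algHom_ext fun i => by simp [mvPolynomialRestrict]
  exact (DFunLike.congr_fun h P).trans (aeval_eq_eval x.1 ▸ rfl)

/-- The algebra `P(X)` of uniform limits on `X ⊆ ℂ^σ` of polynomials in the coordinates. -/
abbrev mvPolyAlgebra (X : Set (σ → ℂ)) [CompactSpace X] : Subalgebra ℂ C(X, ℂ) :=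
  (mvPolynomialRestrict X).range.topologicalClosure

end Composition

section PolyEqC

variable {n : ℕ} {X E : Set (Fin n → ℂ)} [CompactSpace X]

theorem denseOn_of_polyEqC (hE : PolyEqC E) (hEX : E ⊆ X) :
    DenseOn (mvPolyAlgebra X) (Subtype.val ⁻¹' E) := fun f ε hε => by
  have hext (x : X) : Function.extend Subtype.val f 0 x.1 = f x :=
    Subtype.val_injective.extend_apply f 0 x
  have hcont : ContinuousOn (Function.extend Subtype.val f 0) X :=
    continuousOn_iff_continuous_domRestrict.2 (f.continuous.congr fun x => (hext x).symm)
  obtain ⟨P, hP⟩ := hE _ (hcont.mono hEX) ε hε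
  refine ⟨mvPolynomialRestrict X P, Subalgebra.le_topologicalClosure _ ⟨P, rfl⟩, fun x hx => ?_⟩
  rw [mvPolynomialRestrict_apply, ← hext]
  exact hP x hx

theorem polyEqC_of_mvPolyAlgebra_eq_top (h : mvPolyAlgebra X = ⊤) : PolyEqC X :=
  fun f hf ε hε => by
  have hmem : ⟨_, hf.domRestrict⟩ ∈ closure ((mvPolynomialRestrict X).range : Set C(X, ℂ)) :=
    (SetLike.ext_iff.1 h _).2 trivial
  obtain ⟨_, ⟨P, rfl⟩, hP⟩ := Metric.mem_closure_iff.1 hmem ε hε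
  refine ⟨P, fun x hx => ?_⟩
  have hPx := (ContinuousMap.dist_lt_iff hε).1 hP ⟨x, hx⟩
  rw [dist_eq_norm] at hPx
  exact (mvPolynomialRestrict_apply P ⟨x, hx⟩) ▸ hPx

end PolyEqC

section Union

variable {n : ℕ} {X₁ X₂ : Set (Fin n → ℂ)} {Y₁ Y₂ : Set ℂ} {p : MvPolynomial (Fin n) ℂ}

theorem exists_mem_mvPolyAlgebra_union [CompactSpace ↥(X₁ ∪ X₂)] (hY₁ : IsCompact Y₁)
    (hY₂ : IsCompact Y₂) (hconv₁ : PolyConvex1 Y₁) (hconv₂ : PolyConvex1 Y₂)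
    (hY : Y₁ ∩ Y₂ ⊆ {0}) (hp₁ : ∀ x ∈ X₁, eval x p ∈ Y₁) (hp₂ : ∀ x ∈ X₂, eval x p ∈ Y₂) :
    ∃ q ∈ mvPolyAlgebra (X₁ ∪ X₂), (∀ x : ↥(X₁ ∪ X₂), x.1 ∈ X₁ → q x = 0) ∧
      ∀ x : ↥(X₁ ∪ X₂), x.1 ∈ X₂ → q x = eval x.1 p := by
  have : CompactSpace ↥(Y₁ ∪ Y₂) := isCompact_iff_compactSpace.1 (hY₁.union hY₂)
  obtain ⟨η, hη, hη₁, hη₂⟩ := exists_mem_polyAlgebra_union hY₁ hY₂ hconv₁ hconv₂ hY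
  let g : C(↥(X₁ ∪ X₂), ↥(Y₁ ∪ Y₂)) :=
    ⟨MapsTo.restrict (fun x => eval x p) _ _ (MapsTo.union_union hp₁ hp₂),
      (MvPolynomial.continuous_eval p).restrict _⟩
  refine ⟨η.comp g, comp_mem_of_mem_polyAlgebra (Subalgebra.isClosed_topologicalClosure _) ?_ hη,
    fun x hx => hη₁ (g x) (hp₁ x hx), fun x hx => hη₂ (g x) (hp₂ x hx)⟩
  exact Subalgebra.le_topologicalClosure _ ⟨p, ContinuousMap.ext (mvPolynomialRestrict_apply p)⟩

end Union

end Stout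

theorem stmt5_general {n : ℕ} {X₁ X₂ : Set (Fin n → ℂ)} (hX₁ : IsCompact X₁) (hX₂ : IsCompact X₂)
    (h₁ : PolyEqC X₁) (h₂ : PolyEqC X₂) {Y₁ Y₂ : Set ℂ} (hY₁ : IsCompact Y₁) (hY₂ : IsCompact Y₂)
    (hconv₁ : PolyConvex1 Y₁) (hconv₂ : PolyConvex1 Y₂) (hY : Y₁ ∩ Y₂ ⊆ {0})
    {p : MvPolynomial (Fin n) ℂ} (hp₁ : ∀ x ∈ X₁, eval x p ∈ Y₁) (hp₂ : ∀ x ∈ X₂, eval x p ∈ Y₂)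
    (hp : ∀ x ∈ X₂, eval x p = 0 → x ∈ X₁) : PolyEqC (X₁ ∪ X₂) := by
  have : CompactSpace ↥(X₁ ∪ X₂) := isCompact_iff_compactSpace.1 (hX₁.union hX₂)
  obtain ⟨q, hq, hq₁, hq₂⟩ :=
    Stout.exists_mem_mvPolyAlgebra_union hY₁ hY₂ hconv₁ hconv₂ hY hp₁ hp₂
  have hzero : ∀ x : ↥(X₁ ∪ X₂), q x = 0 → x.1 ∈ X₁ := fun x hx =>
    x.2.elim id fun hx₂ => hp x hx₂ (hq₂ x hx₂ ▸ hx)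
  have hsupport : ∀ x : ↥(X₁ ∪ X₂), q x ≠ 0 → x.1 ∈ X₂ := fun x hx =>
    x.2.resolve_left fun hx₁ => hx (hq₁ x hx₁)
  have hdense₁ := Stout.denseOn_of_polyEqC h₁ (Set.subset_union_left (t := X₂))
  have hdense₂ := Stout.denseOn_of_polyEqC h₂ (Set.subset_union_right (s := X₁))
  exact Stout.polyEqC_of_mvPolyAlgebra_eq_top <|
    Stout.eq_top_of_denseOn_support (Subalgebra.isClosed_topologicalClosure _) hq
      (hdense₁.mono hzero) (hdense₂.mono hsupport)

/-- Stout's theorem. -/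
theorem stmt5 {n : ℕ} (X₁ X₂ : Set (Fin n → ℂ)) (hX₁c : IsCompact X₁) (hX₂c : IsCompact X₂)
    -- (1) `P(Xᵢ) = C(Xᵢ)`
    (h₁ : PolyEqC X₁) (h₂ : PolyEqC X₂)
    -- (2) `Y₁, Y₂` polynomially convex compacts in `ℂ`, `0` a boundary point of both,
    -- `Y₁ ∩ Y₂ = {0}`
    (Y₁ Y₂ : Set ℂ) (hY₁c : IsCompact Y₁) (hY₂c : IsCompact Y₂)
    (hY₁ : PolyConvex1 Y₁) (hY₂ : PolyConvex1 Y₂)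
    (h0₁ : (0 : ℂ) ∈ frontier Y₁) (h0₂ : (0 : ℂ) ∈ frontier Y₂)
    (hY : Y₁ ∩ Y₂ = {0})
    -- (3) `p` is a polynomial with `p(X₁) ⊆ Y₁` and `p(X₂) ⊆ Y₂`
    (p : MvPolynomial (Fin n) ℂ)
    (hp₁ : ∀ x ∈ X₁, eval x p ∈ Y₁) (hp₂ : ∀ x ∈ X₂, eval x p ∈ Y₂)
    -- (4) `p⁻¹(0) ∩ (X₁ ∪ X₂) = X₁ ∩ X₂`
    (h4 : {z | eval z p = 0} ∩ (X₁ ∪ X₂) = X₁ ∩ X₂) :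
    PolyEqC (X₁ ∪ X₂) := by
  refine stmt5_general hX₁c hX₂c h₁ h₂ hY₁c hY₂c hY₁ hY₂ hY.le hp₁ hp₂ fun x hx hx₀ => ?_
  exact (h4.le ⟨hx₀, .inr hx⟩).1
end
end

section
/- If K is a compact, polynomially convex subset of the complex plane, then every boundary point of K is a peak point for the algebra P(K); that is, for every x in the topological boundary of K there exists f ∈ P(K) with f(x) = 1 and |f(y)| < 1 for all y ∈ K with y ≠ x. -/
open Complex

noncomputable section

/-- `f` belongs to `P(K)` for a compact set `K ⊆ ℂ`: `f` is continuous on `K` and is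
a uniform limit on `K` of polynomials in one complex variable. -/
def MemPolyAlg (K : Set ℂ) (f : ℂ → ℂ) : Prop :=
  ContinuousOn f K ∧
    ∀ ε : ℝ, 0 < ε → ∃ P : Polynomial ℂ, ∀ x ∈ K, ‖f x - P.eval x‖ < ε

/-!
By Bishop's criterion it suffices to find functions in `P(K)` with value `1` at `x` that are bounded
by a fixed constant and are at most `1 / 2` off an arbitrarily small disc about `x`. Let `a ∉ K` be
close to `x`. By the maximum principle the component of `a` in `ball x r \ K` cannot be small: it
contains a point `b` whose distance to `a` is comparable to `r`. As this component is connected and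
misses `K`, the function `(z - a) / (z - b)` has a logarithm in `P(K)`, hence a square root, and
therefore `P(K)` contains a branch `w` of the inverse of the Joukowski map
`w ↦ d * (w + w⁻¹) + (a + b) / 2`, where `d = (b - a) / 4`. Far from `x`, where `‖w‖ < 1`, it
behaves like `d / (z - x)`, and near `x` it is bounded independently of `r`; so
`1 - (z - x) * w / d` is as required.
-/

open Filter Metric Set Topology

section Bishop

variable {𝕜 X : Type*} [RCLike 𝕜] [TopologicalSpace X]

/-- `x` is a peak point of the family `A` of continuous functions. -/
def IsPeakPoint (A : Set C(X, 𝕜)) (x : X) : Prop :=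
  ∃ f ∈ A, f x = 1 ∧ ∀ y, y ≠ x → ‖f y‖ < 1

variable [CompactSpace X]

/-- The hypothesis of Bishop's peak point criterion: near `x` the family `A` contains functions
with value `1` at `x` which are uniformly bounded by `M`, and by `c` off an arbitrarily small
neighbourhood of `x`. -/
def HasBoundedPeaking (A : Set C(X, 𝕜)) (x : X) (M c : ℝ) : Prop :=
  ∀ V ∈ 𝓝 x, ∃ F ∈ A, F x = 1 ∧ ‖F‖ ≤ M ∧ ∀ y ∉ V, ‖F y‖ ≤ c

/-- A partial sum of the series defining a peak function at `x` in Bishop's criterion; the number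
`t` is the part of the value `1` at `x` that is still missing. -/
structure IsPartialPeak (A : Set C(X, 𝕜)) (x : X) (c t : ℝ) (S : C(X, 𝕜)) : Prop where
  mem : S ∈ A
  apply_eq : S x = ((1 - t : ℝ) : 𝕜)
  norm_apply_lt : ∀ y, ‖S y‖ < 1 - c * t

theorem HasBoundedPeaking.one_le {A : Set C(X, 𝕜)} {x : X} {M c : ℝ}
    (h : HasBoundedPeaking A x M c) : 1 ≤ M := by
  obtain ⟨F, -, hFx, hFM, -⟩ := h univ univ_mem
  calc 1 = ‖F x‖ := by rw [hFx, norm_one]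
    _ ≤ M := (F.norm_coe_le_norm x).trans hFM

-- The correction is `μ t F`: near `x` the sum `S` leaves room for it since `μ ‖F‖ ≤ (1 - c) / 2`,
-- and elsewhere `F` is at most `c`, which is exactly what the bound on `S` allows for.
theorem IsPartialPeak.exists_next {A : Submodule 𝕜 C(X, 𝕜)} {x : X} {M c t μ : ℝ} {S : C(X, 𝕜)}
    (hS : IsPartialPeak (A : Set C(X, 𝕜)) x c t S) (hA : HasBoundedPeaking (A : Set C(X, 𝕜)) x M c)
    (hc : 0 ≤ c) (hc1 : c < 1) (hμ : μ * M = (1 - c) / 2) (ht : 0 < t) (ht1 : t ≤ 1)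
    {V : Set X} (hV : V ∈ 𝓝 x) :
    ∃ S', IsPartialPeak (A : Set C(X, 𝕜)) x c ((1 - μ) * t) S' ∧ ‖S' - S‖ ≤ M * μ * t ∧
      ∀ y ∉ V, ‖S' y - S y‖ ≤ c * μ * t := by
  have hμ0 : 0 ≤ μ := by nlinarith [hA.one_le]
  have hμt : ‖((μ * t : ℝ) : 𝕜)‖ = μ * t := RCLike.norm_of_nonneg (by positivity)
  set W : Set X := {y | ‖S y‖ < 1 - t + (1 - c) / 2 * t}
  have hW : W ∈ 𝓝 x := by
    refine (isOpen_lt (by fun_prop) continuous_const).mem_nhds ?_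
    change ‖S x‖ < _
    rw [hS.apply_eq, RCLike.norm_of_nonneg (by linarith)]
    nlinarith
  obtain ⟨F, hFA, hFx, hFM, hFc⟩ := hA (W ∩ V) (inter_mem hW hV)
  have apply_next (y : X) : (S + ((μ * t : ℝ) : 𝕜) • F) y = S y + ((μ * t : ℝ) : 𝕜) * F y := rfl
  have norm_next_le {y : X} {r : ℝ} (hr : ‖F y‖ ≤ r) :
      ‖(S + ((μ * t : ℝ) : 𝕜) • F) y‖ ≤ ‖S y‖ + μ * t * r := by
    rw [apply_next]
    refine (norm_add_le _ _).trans ?_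
    rw [norm_mul, hμt]
    gcongr
  refine ⟨S + ((μ * t : ℝ) : 𝕜) • F, ⟨A.add_mem hS.mem (A.smul_mem _ hFA), ?_, fun y ↦ ?_⟩, ?_,
    fun y hy ↦ ?_⟩
  · rw [apply_next, hS.apply_eq, hFx]
    push_cast
    ring
  · by_cases hy : y ∈ W ∩ V
    · have hSy : ‖S y‖ < 1 - t + (1 - c) / 2 * t := hy.1
      have hcμt : 0 ≤ c * (μ * t) := by positivity
      calc _ ≤ ‖S y‖ + μ * t * M := norm_next_le ((F.norm_coe_le_norm y).trans hFM)
        _ = ‖S y‖ + (1 - c) / 2 * t := by rw [← hμ]; ring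
        _ < 1 - c * ((1 - μ) * t) := by linarith
    · linarith [norm_next_le (hFc y hy), hS.norm_apply_lt y]
  · rw [add_sub_cancel_left, norm_smul, hμt]
    calc μ * t * ‖F‖ ≤ μ * t * M := by gcongr
      _ = M * μ * t := by ring
  · rw [apply_next, add_sub_cancel_left, norm_mul, hμt]
    calc μ * t * ‖F y‖ ≤ μ * t * c := by gcongr; exact hFc y fun h ↦ hy h.2
      _ = c * μ * t := by ring

theorem exists_partialPeak_seq {A : Submodule 𝕜 C(X, 𝕜)} {x : X} {M c l : ℝ}
    (hA : HasBoundedPeaking (A : Set C(X, 𝕜)) x M c) (hc : 0 ≤ c) (hc1 : c < 1)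
    (hl : (1 - l) * M = (1 - c) / 2) {V : ℕ → Set X} (hV : ∀ n, V n ∈ 𝓝 x) :
    ∃ S : ℕ → C(X, 𝕜), ∀ n, IsPartialPeak (A : Set C(X, 𝕜)) x c (l ^ n) (S n) ∧
      ‖S (n + 1) - S n‖ ≤ M * (1 - l) * l ^ n ∧
      ∀ y ∉ V n, ‖S (n + 1) y - S n y‖ ≤ c * (1 - l) * l ^ n := by
  have hl0 : 0 < l := by nlinarith [hA.one_le]
  have hl1 : l ≤ 1 := by nlinarith [hA.one_le]
  have next (n : ℕ) (S : C(X, 𝕜)) (hS : IsPartialPeak (A : Set C(X, 𝕜)) x c (l ^ n) S) :=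
    hS.exists_next hA hc hc1 hl (pow_pos hl0 n) (pow_le_one₀ hl0.le hl1) (hV n)
  simp only [sub_sub_cancel, ← pow_succ'] at next
  choose! g hg hgA hgV using next
  set S : ℕ → C(X, 𝕜) := fun n ↦ Nat.rec 0 g n
  have hS (n : ℕ) : IsPartialPeak (A : Set C(X, 𝕜)) x c (l ^ n) (S n) := by
    induction n with
    | zero => exact ⟨A.zero_mem, by simp [S], by simp [S, hc1]⟩
    | succ n ih => exact hg n _ ih
  exact ⟨S, fun n ↦ ⟨hS n, hgA n _ (hS n), hgV n _ (hS n)⟩⟩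

theorem HasBoundedPeaking.isPeakPoint [T1Space X] {A : Submodule 𝕜 C(X, 𝕜)}
    (hAc : IsClosed (A : Set C(X, 𝕜))) {x : X} [(𝓝 x).IsCountablyGenerated] {M c : ℝ}
    (hA : HasBoundedPeaking (A : Set C(X, 𝕜)) x M c) (hc : 0 ≤ c) (hc1 : c < 1) :
    IsPeakPoint (A : Set C(X, 𝕜)) x := by
  have hM := hA.one_le
  obtain ⟨l, hl⟩ : ∃ l : ℝ, (1 - l) * M = (1 - c) / 2 :=
    ⟨1 - (1 - c) / 2 / M, by field_simp; ring⟩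
  have hl0 : 0 < l := by nlinarith
  have hl1 : l < 1 := by nlinarith
  obtain ⟨V, hV⟩ := (𝓝 x).exists_antitone_basis
  obtain ⟨S, hS⟩ := exists_partialPeak_seq hA hc hc1 hl hV.mem
  have hcauchy : CauchySeq S := cauchySeq_of_le_geometric l (M * (1 - l)) hl1 fun n ↦ by
    rw [dist_comm, dist_eq_norm]
    exact (hS n).2.1
  obtain ⟨f, hf⟩ := cauchySeq_tendsto_of_complete hcauchy
  have hfy (y : X) : Tendsto (fun n ↦ S n y) atTop (𝓝 (f y)) :=
    ((continuous_eval_const y).tendsto f).comp hf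
  refine ⟨f, hAc.mem_of_tendsto hf (.of_forall fun n ↦ (hS n).1.mem), ?_, fun y hy ↦ ?_⟩
  · refine tendsto_nhds_unique (hfy x) ?_
    simp_rw [fun n ↦ (hS n).1.apply_eq]
    have hpow : Tendsto (fun n ↦ 1 - l ^ n) atTop (𝓝 (1 - 0)) :=
      (tendsto_pow_atTop_nhds_zero_of_lt_one hl0.le hl1).const_sub 1
    have hlim := ((RCLike.continuous_ofReal (K := 𝕜)).tendsto _).comp hpow
    rwa [sub_zero, RCLike.ofReal_one] at hlim
  · obtain ⟨N, hN⟩ : ∃ N, V N ⊆ {y}ᶜ := hV.mem_iff.1 (compl_singleton_mem_nhds hy.symm)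
    have hyV (n : ℕ) (hn : N ≤ n) : y ∉ V n := fun h ↦ hN (hV.antitone hn h) rfl
    have hdist : dist (S N y) (f y) ≤ c * (1 - l) * l ^ N / (1 - l) := by
      rw [← zero_add N]
      refine dist_le_of_le_geometric_of_tendsto₀ l _ hl1 (fun n ↦ ?_)
        ((tendsto_add_atTop_iff_nat N).2 (hfy y))
      rw [zero_add, dist_comm, dist_eq_norm, add_right_comm, mul_assoc, ← pow_add, add_comm N n]
      exact (hS (n + N)).2.2 y (hyV _ (Nat.le_add_left N n))
    have hnorm : ‖f y‖ ≤ ‖S N y‖ + dist (S N y) (f y) := by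
      rw [dist_eq_norm]
      exact norm_le_norm_add_norm_sub _ _
    have hgeom : c * (1 - l) * l ^ N / (1 - l) = c * l ^ N := by
      field_simp [(sub_pos.2 hl1).ne']
    linarith [(hS N).1.norm_apply_lt y]

end Bishop

section ClosedSubalgebra

variable {X : Type*} [TopologicalSpace X] [CompactSpace X] {A : Subalgebra ℂ C(X, ℂ)}

theorem exists_mem_eq_log_one_add (hA : IsClosed (A : Set C(X, ℂ))) {u : C(X, ℂ)} (hu : u ∈ A)
    (hu1 : ‖u‖ < 1) : ∃ L ∈ A, ∀ z, L z = log (1 + u z) := by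
  set term : ℕ → C(X, ℂ) := fun n ↦ ((-1) ^ (n + 1) / n : ℂ) • u ^ n
  have hsum : Summable term := by
    refine .of_norm_bounded_eventually_nat (summable_geometric_of_lt_one (norm_nonneg u) hu1) ?_
    filter_upwards [eventually_gt_atTop 0] with n hn
    have hcoeff : ‖((-1) ^ (n + 1) / n : ℂ)‖ ≤ 1 := by
      simpa using Nat.cast_inv_le_one n
    calc ‖term n‖ ≤ 1 * ‖u‖ ^ n := by
          rw [norm_smul]
          gcongr
          exact norm_pow_le' u hn
      _ = ‖u‖ ^ n := one_mul _
  refine ⟨∑' n, term n, tsum_mem hA fun n ↦ A.smul_mem (A.pow_mem hu n) _, fun z ↦ ?_⟩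
  have hz : ‖u z‖ < 1 := (u.norm_coe_le_norm z).trans_lt hu1
  rw [← ContinuousMap.tsum_apply hsum, ← (hasSum_taylorSeries_log hz).tsum_eq]
  exact tsum_congr fun n ↦ (div_mul_eq_mul_div _ _ _)

theorem exists_mem_eq_exp (hA : IsClosed (A : Set C(X, ℂ))) {L : C(X, ℂ)} (hL : L ∈ A) :
    ∃ E ∈ A, ∀ z, E z = exp (L z) := by
  refine ⟨NormedSpace.exp L, NormedSpace.exp_mem (R := ℂ) hA hL, fun z ↦ ?_⟩
  rw [exp_eq_exp_ℂ]
  exact NormedSpace.map_exp (ContinuousMap.evalAlgHom ℂ ℂ z) (continuous_eval_const z) L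

end ClosedSubalgebra

section Complex

theorem log_mul_of_re_pos {u v : ℂ} (hu : 0 < u.re) (hv : 0 < v.re) :
    log (u * v) = log u + log v := by
  have hu' := abs_lt.1 (abs_arg_lt_pi_div_two_iff.2 (.inl hu))
  have hv' := abs_lt.1 (abs_arg_lt_pi_div_two_iff.2 (.inl hv))
  refine log_mul ?_ ?_ ⟨by linarith, by linarith⟩
  · rintro rfl
    simp at hu
  · rintro rfl
    simp at hv

theorem log_inv_of_re_pos {u : ℂ} (hu : 0 < u.re) : log u⁻¹ = -log u :=
  log_inv u (mem_slitPlane_iff_arg.1 (.inl hu)).1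

theorem re_exp_log_div_two_pos {u : ℂ} (hu : u ∈ slitPlane) : 0 < (exp (log u / 2)).re := by
  rw [exp_re, div_ofNat_im, log_im]
  have harg : u.arg < Real.pi := (arg_le_pi u).lt_of_ne (mem_slitPlane_iff_arg.1 hu).1
  exact mul_pos (Real.exp_pos _)
    (Real.cos_pos_of_mem_Ioo ⟨by linarith [neg_pi_lt_arg u], by linarith⟩)

theorem norm_sub_one_lt_norm_add_one {s : ℂ} (hs : 0 < s.re) : ‖s - 1‖ < ‖s + 1‖ := by
  refine lt_of_pow_lt_pow_left₀ 2 (norm_nonneg _) ?_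
  rw [← normSq_eq_norm_sq, ← normSq_eq_norm_sq, normSq_apply, normSq_apply]
  simp only [sub_re, sub_im, add_re, add_im, one_re, one_im]
  nlinarith

theorem re_sub_div_sub_pos {z a b : ℂ} (h : ‖b - a‖ < ‖z - b‖) :
    0 < ((z - a) / (z - b)).re := by
  have hzb : 0 < ‖z - b‖ := (norm_nonneg _).trans_lt h
  have hratio : (z - a) / (z - b) = 1 + (b - a) / (z - b) := by
    field_simp [norm_pos_iff.1 hzb]
    ring
  have hnorm : ‖(b - a) / (z - b)‖ < 1 := by rwa [norm_div, div_lt_one hzb]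
  rw [hratio, add_re, one_re]
  linarith [(abs_lt.1 ((abs_re_le_norm _).trans_lt hnorm)).1]

/-- `w` is one of the two preimages of `v` under the Joukowski map `w ↦ d * (w + w⁻¹)`; the equation
is multiplied by `w`, which avoids the junk value of `w⁻¹` at `0`. -/
def IsJoukowskiPreimage (d v w : ℂ) : Prop :=
  d * (w ^ 2 + 1) = v * w

variable {d v w : ℂ}

theorem IsJoukowskiPreimage.norm_le (h : IsJoukowskiPreimage d v w) (hd : d ≠ 0) {T : ℝ}
    (hT : ‖v‖ ≤ T * ‖d‖) : ‖w‖ ≤ T + 1 := by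
  have hd0 : 0 < ‖d‖ := norm_pos_iff.2 hd
  have hT0 : 0 ≤ T := nonneg_of_mul_nonneg_left ((norm_nonneg v).trans hT) hd0
  have hsq_eq : d * w ^ 2 = v * w - d := by
    rw [← show d * (w ^ 2 + 1) = v * w from h]
    ring
  have hsq : ‖w‖ ^ 2 ≤ T * ‖w‖ + 1 := by
    refine le_of_mul_le_mul_left ?_ hd0
    calc ‖d‖ * ‖w‖ ^ 2 = ‖v * w - d‖ := by
          rw [← norm_pow, ← norm_mul, hsq_eq]
      _ ≤ ‖v‖ * ‖w‖ + ‖d‖ := (norm_sub_le _ _).trans_eq (by rw [norm_mul])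
      _ ≤ T * ‖d‖ * ‖w‖ + ‖d‖ := by gcongr
      _ = ‖d‖ * (T * ‖w‖ + 1) := by ring
  by_contra! hlt
  nlinarith

theorem IsJoukowskiPreimage.norm_mul_le (h : IsJoukowskiPreimage d v w) (hw : ‖w‖ ≤ 1) :
    ‖v‖ * ‖w‖ ≤ 2 * ‖d‖ := by
  have hsq : ‖w ^ 2 + 1‖ ≤ 2 := by
    refine (norm_add_le _ _).trans ?_
    rw [norm_pow, norm_one]
    linarith [pow_le_one₀ (norm_nonneg w) hw (n := 2)]
  calc ‖v‖ * ‖w‖ = ‖d‖ * ‖w ^ 2 + 1‖ := by rw [← norm_mul, ← h, norm_mul]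
    _ ≤ ‖d‖ * 2 := by gcongr
    _ = 2 * ‖d‖ := mul_comm _ _

theorem IsJoukowskiPreimage.norm_one_sub_le (h : IsJoukowskiPreimage d v w) (hd : d ≠ 0) (e : ℂ) :
    ‖1 - d⁻¹ * ((v + e) * w)‖ ≤ ‖w‖ * (‖w‖ + ‖e‖ / ‖d‖) := by
  have hfactor : 1 - d⁻¹ * ((v + e) * w) = -(w * (w + e / d)) := by
    have hw : d * (w ^ 2 + 1) = v * w := h
    field_simp
    linear_combination hw
  rw [hfactor, norm_neg, norm_mul, ← norm_div]
  gcongr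
  exact norm_add_le _ _

theorem IsJoukowskiPreimage.norm_one_sub_le_of_norm_le (h : IsJoukowskiPreimage d v w)
    (hd : d ≠ 0) {e : ℂ} {T m : ℝ} (he : ‖e‖ ≤ T * ‖d‖) (hw : ‖w‖ ≤ m) :
    ‖1 - d⁻¹ * ((v + e) * w)‖ ≤ m * (m + T) := by
  have hm : 0 ≤ m := (norm_nonneg w).trans hw
  have hed : ‖e‖ / ‖d‖ ≤ T := (div_le_iff₀ (norm_pos_iff.2 hd)).2 he
  refine (h.norm_one_sub_le hd e).trans ?_
  gcongr

/-- Writing `s = √((z - a) / (z - b))`, the Joukowski preimage of `z - (a + b) / 2` is the Cayley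
transform `(s - 1) / (s + 1)`. -/
theorem isJoukowskiPreimage_of_sq_eq {a b z s : ℂ} (hab : b - a ≠ 0) (hzb : z - b ≠ 0)
    (hs : s ^ 2 = (z - a) / (z - b)) :
    IsJoukowskiPreimage ((b - a) / 4) (z - (a + b) / 2)
      (2 / (b - a) * (z - (a + b) / 2 - s * (z - b))) := by
  rw [eq_div_iff hzb] at hs
  unfold IsJoukowskiPreimage
  field_simp
  linear_combination 8 * (z - b) * hs

theorem norm_joukowskiPreimage_lt_one {a b z s : ℂ} (hab : b - a ≠ 0) (hzb : z - b ≠ 0)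
    (hs : s ^ 2 = (z - a) / (z - b)) (hre : 0 < s.re) :
    ‖2 / (b - a) * (z - (a + b) / 2 - s * (z - b))‖ < 1 := by
  have hs1 : 0 < ‖s + 1‖ := (norm_nonneg _).trans_lt (norm_sub_one_lt_norm_add_one hre)
  have hcayley : 2 / (b - a) * (z - (a + b) / 2 - s * (z - b)) = (s - 1) / (s + 1) := by
    rw [eq_div_iff hzb] at hs
    field_simp [norm_pos_iff.1 hs1]
    linear_combination (-2) * hs
  rw [hcayley, norm_div, div_lt_one hs1]
  exact norm_sub_one_lt_norm_add_one hre

end Complex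

variable {K : Set ℂ}

section Component

theorem frontier_connectedComponentIn_subset_compl {α : Type*} [TopologicalSpace α]
    [LocallyConnectedSpace α] {F : Set α} (hF : IsOpen F) (a : α) :
    frontier (connectedComponentIn F a) ⊆ Fᶜ := by
  intro p hp hpF
  obtain ⟨y, hyp, hya⟩ := mem_closure_iff.1 hp.1 _ hF.connectedComponentIn
    (mem_connectedComponentIn hpF)
  refine hp.2 ?_
  rw [hF.connectedComponentIn.interior_eq, connectedComponentIn_eq hya,
    ← connectedComponentIn_eq hyp]
  exact mem_connectedComponentIn hpF

theorem PolyConvex1.subset_of_frontier_subset (hK : PolyConvex1 K) (hKc : IsCompact K) {W : Set ℂ}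
    (hW : Bornology.IsBounded W) (hWK : frontier W ⊆ K) : W ⊆ K := fun w hw ↦
  hK w fun P ↦ norm_le_of_forall_mem_frontier_norm_le (f := fun z ↦ P.eval z) hW
    P.differentiable.diffContOnCl
    (fun z hz ↦ le_csSup (hKc.image P.continuous.norm).bddAbove ⟨z, hWK hz, rfl⟩)
    (subset_closure hw)

theorem PolyConvex1.exists_isPreconnected_of_mem_frontier (hK : PolyConvex1 K) (hKc : IsCompact K)
    {x : ℂ} (hx : x ∈ frontier K) {r : ℝ} (hr : 0 < r) :
    ∃ U, IsPreconnected U ∧ U ⊆ ball x r ∧ Disjoint U K ∧ ∃ a ∈ U, ∃ b ∈ U, r / 2 ≤ ‖b - a‖ := by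
  have hxc : x ∈ closure Kᶜ := by
    rw [frontier_eq_closure_inter_closure] at hx
    exact hx.2
  obtain ⟨a, haK, hax⟩ := Metric.mem_closure_iff.1 hxc (r / 4) (by positivity)
  rw [dist_comm] at hax
  set G : Set ℂ := ball x r ∩ Kᶜ
  have haG : a ∈ G := ⟨by rw [mem_ball]; linarith, haK⟩
  have hUG := connectedComponentIn_subset G a
  refine ⟨connectedComponentIn G a, isPreconnected_connectedComponentIn,
    hUG.trans inter_subset_left, disjoint_left.2 fun z hz ↦ (hUG hz).2,
    a, mem_connectedComponentIn haG, ?_⟩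
  by_contra! hsmall
  have hUball : closure (connectedComponentIn G a) ⊆ closedBall a (r / 2) :=
    closure_minimal (fun b hb ↦ by rw [mem_closedBall, dist_eq_norm]; exact (hsmall b hb).le)
      isClosed_closedBall
  refine haK (hK.subset_of_frontier_subset hKc
    (isBounded_closedBall.subset (subset_closure.trans hUball)) (fun p hp ↦ ?_)
    (mem_connectedComponentIn haG))
  have hpx : p ∈ ball x r := by
    have hpa : dist p a ≤ r / 2 := hUball hp.1
    rw [mem_ball]
    linarith [dist_triangle p a x]
  by_contra hpK
  exact frontier_connectedComponentIn_subset_compl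
    (isOpen_ball.inter hKc.isClosed.isOpen_compl) a hp ⟨hpx, hpK⟩

end Component

section LogRatio

/-- `L` is a logarithm of `(z - a) / (z - b)` on `K` which on `F` is the principal one, so that
`exp (L / 2)` is there the square root with positive real part. -/
def IsLogRatio (F : Set ℂ) (a b : ℂ) (L : C(K, ℂ)) : Prop :=
  ∀ z : K, exp (L z) = (z - a) / (z - b) ∧ ((z : ℂ) ∈ F → L z = log ((z - a) / (z - b)))

variable {F : Set ℂ} {a b c : ℂ}

theorem IsLogRatio.symm {L : C(K, ℂ)} (h : IsLogRatio F a b L)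
    (hF : ∀ z ∈ F, 0 < ((z - a) / (z - b)).re) : IsLogRatio F b a (-L) := fun z ↦ by
  refine ⟨?_, fun hz ↦ ?_⟩
  · rw [ContinuousMap.neg_apply, exp_neg, (h z).1, inv_div]
  · rw [ContinuousMap.neg_apply, (h z).2 hz, ← log_inv_of_re_pos (hF z hz), inv_div]

theorem IsLogRatio.trans {L₁ L₂ : C(K, ℂ)} (h₁ : IsLogRatio F a b L₁) (h₂ : IsLogRatio F b c L₂)
    (hb : b ∉ K) (hF₁ : ∀ z ∈ F, 0 < ((z - a) / (z - b)).re)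
    (hF₂ : ∀ z ∈ F, 0 < ((z - b) / (z - c)).re) : IsLogRatio F a c (L₁ + L₂) := fun z ↦ by
  have hzb : (z : ℂ) - b ≠ 0 := sub_ne_zero.2 fun h ↦ hb (h ▸ z.2)
  have hmul : (z - a) / (z - c) = (z - a) / (z - b) * ((z - b) / (z - c)) :=
    (div_mul_div_cancel₀ hzb).symm
  refine ⟨?_, fun hz ↦ ?_⟩
  · rw [ContinuousMap.add_apply, exp_add, (h₁ z).1, (h₂ z).1, hmul]
  · rw [ContinuousMap.add_apply, (h₁ z).2 hz, (h₂ z).2 hz, hmul,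
      log_mul_of_re_pos (hF₁ z hz) (hF₂ z hz)]

end LogRatio

section PolyAlg

variable [CompactSpace K] {F : Set ℂ} {a b : ℂ}

/-- The algebra `P(K)`: the uniform closure in `C(K, ℂ)` of the polynomials. -/
def polyAlg (K : Set ℂ) [CompactSpace K] : Subalgebra ℂ C(K, ℂ) :=
  (polynomialFunctions K).topologicalClosure

theorem isClosed_polyAlg : IsClosed (polyAlg K : Set C(K, ℂ)) :=
  (polynomialFunctions K).isClosed_topologicalClosure

theorem toContinuousMapOn_mem_polyAlg (P : Polynomial ℂ) : P.toContinuousMapOn K ∈ polyAlg K :=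
  (polynomialFunctions K).le_topologicalClosure ⟨P, trivial, rfl⟩

theorem memPolyAlg_of_domRestrict_eq {f : C(K, ℂ)} (hf : f ∈ polyAlg K) {g : ℂ → ℂ}
    (hg : K.domRestrict g = f) : MemPolyAlg K g := by
  refine ⟨by rw [continuousOn_iff_continuous_domRestrict, hg]; exact f.continuous, fun ε hε ↦ ?_⟩
  obtain ⟨_, ⟨P, -, rfl⟩, hP⟩ :=
    Metric.mem_closure_iff.1 (show f ∈ closure (polynomialFunctions K : Set C(K, ℂ)) from hf) ε hε
  refine ⟨P, fun z hz ↦ ?_⟩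
  calc ‖g z - P.eval z‖ = dist (f ⟨z, hz⟩) (P.toContinuousMapOn K ⟨z, hz⟩) := by
        rw [dist_eq_norm, ← hg]
        rfl
    _ ≤ dist f (P.toContinuousMapOn K) := ContinuousMap.dist_apply_le_dist _
    _ < ε := hP

/-- The coordinate function as an element of the Banach algebra `P(K)`; polynomial convexity of `K`
enters through its spectrum. -/
def coordinate (K : Set ℂ) [CompactSpace K] : polyAlg K :=
  ⟨Polynomial.X.toContinuousMapOn K, toContinuousMapOn_mem_polyAlg _⟩

theorem aeval_coordinate (P : Polynomial ℂ) :
    (Polynomial.aeval (coordinate K) P : C(K, ℂ)) = P.toContinuousMapOn K := by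
  ext z
  simp [coordinate, Polynomial.aeval_continuousMap_apply]

theorem norm_aeval_coordinate (P : Polynomial ℂ) :
    ‖Polynomial.aeval (coordinate K) P‖ = sSup ((fun w ↦ ‖P.eval w‖) '' K) := by
  change ‖(Polynomial.aeval (coordinate K) P : C(K, ℂ))‖ = _
  rw [sSup_image', aeval_coordinate, ContinuousMap.norm_eq_iSup_norm]
  rfl

instance : CompleteSpace (polyAlg K) := isClosed_polyAlg.completeSpace_coe

theorem PolyConvex1.spectrum_coordinate_subset (hK : PolyConvex1 K) :
    spectrum ℂ (coordinate K) ⊆ K := fun z hz ↦ hK z fun P ↦ by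
  have hmem : P.eval z ∈ spectrum ℂ (Polynomial.aeval (coordinate K) P) :=
    spectrum.subset_polynomial_aeval _ P ⟨z, hz, rfl⟩
  rw [← norm_aeval_coordinate]
  cases isEmpty_or_nonempty K
  · have : Subsingleton (polyAlg K) := ⟨fun f g ↦ Subtype.ext (ContinuousMap.ext isEmptyElim)⟩
    simp at hmem
  have : NormOneClass (polyAlg K) := ⟨norm_one (α := C(K, ℂ))⟩
  exact spectrum.norm_le_norm_of_mem (A := polyAlg K) (𝕜 := ℂ) hmem

theorem PolyConvex1.exists_mem_polyAlg_eq_inv_sub (hK : PolyConvex1 K) {b : ℂ} (hb : b ∉ K) :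
    ∃ R ∈ polyAlg K, ∀ z : K, R z = ((z : ℂ) - b)⁻¹ := by
  obtain ⟨R, hR⟩ := (spectrum.notMem_iff.1
    fun h ↦ hb (hK.spectrum_coordinate_subset h)).exists_right_inv
  refine ⟨-R, neg_mem R.2, fun z ↦ eq_inv_of_mul_eq_one_left ?_⟩
  have hRz : (b - z) * (R : C(K, ℂ)) z = 1 := by
    simpa [coordinate] using DFunLike.congr_fun (congrArg Subtype.val hR) z
  rw [ContinuousMap.neg_apply]
  linear_combination hRz

theorem PolyConvex1.eventually_exists_isLogRatio (hK : PolyConvex1 K) (hb : b ∉ K)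
    (F : Set ℂ) : ∀ᶠ a in 𝓝 b, ∃ L ∈ polyAlg K, IsLogRatio F a b L := by
  obtain ⟨R, hR, hRz⟩ := hK.exists_mem_polyAlg_eq_inv_sub hb
  have hsmall : ∀ᶠ a in 𝓝 b, ‖(b - a) • R‖ < 1 := by
    have hcont : Continuous fun a : ℂ ↦ ‖(b - a) • R‖ := by fun_prop
    exact hcont.continuousAt.eventually_lt continuousAt_const (by simp)
  have hbK : IsOpen (Kᶜ) := (isCompact_iff_compactSpace.2 ‹_›).isClosed.isOpen_compl
  filter_upwards [hsmall, hbK.mem_nhds hb] with a ha haK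
  obtain ⟨L, hL, hLz⟩ :=
    exists_mem_eq_log_one_add isClosed_polyAlg ((polyAlg K).smul_mem hR (b - a)) ha
  refine ⟨L, hL, fun z ↦ ?_⟩
  have hza : (z : ℂ) - a ≠ 0 := sub_ne_zero.2 fun h ↦ haK (h ▸ z.2)
  have hzb : (z : ℂ) - b ≠ 0 := sub_ne_zero.2 fun h ↦ hb (h ▸ z.2)
  have hratio : 1 + ((b - a) • R) z = (z - a) / (z - b) := by
    rw [ContinuousMap.smul_apply, hRz, smul_eq_mul]
    field_simp
    ring
  rw [hLz, hratio]
  exact ⟨exp_log (div_ne_zero hza hzb), fun _ ↦ rfl⟩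

theorem PolyConvex1.exists_isLogRatio (hK : PolyConvex1 K) {U : Set ℂ}
    (hU : IsPreconnected U) (hUK : Disjoint U K)
    (hF : ∀ z ∈ F, ∀ a ∈ U, ∀ b ∈ U, 0 < ((z - a) / (z - b)).re) (ha : a ∈ U) (hb : b ∈ U) :
    ∃ L ∈ polyAlg K, IsLogRatio F a b L := by
  have hUK' {p : ℂ} (hp : p ∈ U) : p ∉ K := disjoint_left.1 hUK hp
  refine hU.induction₂ (fun b a ↦ ∃ L ∈ polyAlg K, IsLogRatio F a b L) (fun p hp ↦ ?_) ?_ ?_ hb ha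
  · exact (hK.eventually_exists_isLogRatio (hUK' hp) F).filter_mono nhdsWithin_le_nhds
  · rintro p q s hp hq hs ⟨L₁, hL₁, h₁⟩ ⟨L₂, hL₂, h₂⟩
    exact ⟨L₂ + L₁, add_mem hL₂ hL₁,
      h₂.trans h₁ (hUK' hq) (fun z hz ↦ hF z hz s hs q hq) fun z hz ↦ hF z hz q hq p hp⟩
  · rintro p q hp hq ⟨L, hL, h⟩
    exact ⟨-L, neg_mem hL, h.symm fun z hz ↦ hF z hz q hq p hp⟩

theorem PolyConvex1.exists_isJoukowskiPreimage (hK : PolyConvex1 K) {U : Set ℂ}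
    (hU : IsPreconnected U) (hUK : Disjoint U K)
    (hF : ∀ z ∈ F, ∀ a ∈ U, ∀ b ∈ U, 0 < ((z - a) / (z - b)).re) (ha : a ∈ U) (hb : b ∈ U)
    (hab : b - a ≠ 0) :
    ∃ w ∈ polyAlg K, ∀ z : K, IsJoukowskiPreimage ((b - a) / 4) (z - (a + b) / 2) (w z) ∧
      ((z : ℂ) ∈ F → ‖w z‖ < 1) := by
  obtain ⟨L, hL, hLz⟩ := hK.exists_isLogRatio hU hUK hF ha hb
  obtain ⟨s, hs, hsz⟩ := exists_mem_eq_exp isClosed_polyAlg ((polyAlg K).smul_mem hL (1 / 2))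
  have hs_sq (z : K) : s z ^ 2 = (z - a) / (z - b) := by
    rw [← (hLz z).1, hsz, ← exp_nat_mul, ContinuousMap.smul_apply, smul_eq_mul]
    congr 1
    push_cast
    ring
  have hX (p : ℂ) : (Polynomial.X - Polynomial.C p).toContinuousMapOn K ∈ polyAlg K :=
    toContinuousMapOn_mem_polyAlg _
  have hzb (z : K) : (z : ℂ) - b ≠ 0 :=
    sub_ne_zero.2 fun h ↦ disjoint_left.1 hUK hb (h ▸ z.2)
  set w : C(K, ℂ) := (2 / (b - a)) •
    ((Polynomial.X - Polynomial.C ((a + b) / 2)).toContinuousMapOn K -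
      s * (Polynomial.X - Polynomial.C b).toContinuousMapOn K)
  have hwz (z : K) : w z = 2 / (b - a) * (z - (a + b) / 2 - s z * (z - b)) := by simp [w]
  refine ⟨w, (polyAlg K).smul_mem (sub_mem (hX _) (mul_mem hs (hX _))) _, fun z ↦ ?_⟩
  rw [hwz]
  refine ⟨isJoukowskiPreimage_of_sq_eq hab (hzb z) (hs_sq z), fun hz ↦ ?_⟩
  refine norm_joukowskiPreimage_lt_one hab (hzb z) (hs_sq z) ?_
  have hpos := hF z hz a ha b hb
  rw [hsz, ContinuousMap.smul_apply, smul_eq_mul, one_div_mul_eq_div, (hLz z).2 hz]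
  exact re_exp_log_div_two_pos (.inl hpos)

theorem PolyConvex1.exists_isJoukowskiPreimage_of_mem_frontier (hK : PolyConvex1 K)
    {x : ℂ} (hx : x ∈ frontier K) {r : ℝ} (hr : 0 < r) :
    ∃ d c : ℂ, r ≤ 8 * ‖d‖ ∧ 2 * ‖d‖ ≤ r ∧ dist c x ≤ r ∧ ∃ w ∈ polyAlg K, ∀ z : K,
      IsJoukowskiPreimage d (z - c) (w z) ∧ (3 * r ≤ dist (z : ℂ) x → ‖w z‖ < 1) := by
  obtain ⟨U, hU, hUx, hUK, a, ha, b, hb, hab⟩ :=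
    hK.exists_isPreconnected_of_mem_frontier (isCompact_iff_compactSpace.2 ‹_›) hx hr
  have hUdiam {p q : ℂ} (hp : p ∈ U) (hq : q ∈ U) : ‖q - p‖ < 2 * r := by
    have hpx : dist p x < r := hUx hp
    have hqx : dist q x < r := hUx hq
    rw [← dist_eq_norm]
    linarith [dist_triangle_right q p x]
  have hF : ∀ z ∈ {z : ℂ | 3 * r ≤ dist z x}, ∀ p ∈ U, ∀ q ∈ U, 0 < ((z - p) / (z - q)).re := by
    intro z (hz : 3 * r ≤ dist z x) p hp q hq
    refine re_sub_div_sub_pos ((hUdiam hp hq).trans_le ?_)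
    have hqx : dist q x < r := hUx hq
    rw [← dist_eq_norm]
    linarith [dist_triangle z q x]
  have hd : ‖(b - a) / 4‖ = ‖b - a‖ / 4 := by rw [norm_div, norm_ofNat]
  have hmid : dist ((a + b) / 2) x < r := by
    have hmem := (convex_ball x r).midpoint_mem (hUx ha) (hUx hb)
    rwa [midpoint_eq_smul_add, invOf_eq_inv, real_smul, ofReal_inv, ofReal_ofNat,
      inv_mul_eq_div] at hmem
  exact ⟨(b - a) / 4, (a + b) / 2, by linarith, by linarith [hUdiam ha hb], hmid.le,
    hK.exists_isJoukowskiPreimage hU hUK hF ha hb (norm_pos_iff.1 (by linarith))⟩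

-- `norm_one_sub_le_of_norm_le` with `T = 8`: the bounds `33` and `1 / 18` on `‖w‖` give
-- `33 * (33 + 8) = 1353` and `(1 / 18) * (1 / 18 + 8) ≤ 1 / 2`.
theorem PolyConvex1.exists_mem_polyAlg_norm_le_half (hK : PolyConvex1 K) {x : K}
    (hx : (x : ℂ) ∈ frontier K) {r : ℝ} (hr : 0 < r) :
    ∃ f ∈ polyAlg K, f x = 1 ∧ ‖f‖ ≤ 1353 ∧ ∀ z : K, 19 * r ≤ dist z x → ‖f z‖ ≤ 1 / 2 := by
  obtain ⟨d, c, hrd, hdr, hcx, w, hw, hwz⟩ :=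
    hK.exists_isJoukowskiPreimage_of_mem_frontier hx hr
  have hd : d ≠ 0 := norm_pos_iff.1 (by linarith)
  set f : C(K, ℂ) := 1 - d⁻¹ • ((Polynomial.X - Polynomial.C (x : ℂ)).toContinuousMapOn K * w)
  have hf_mem : f ∈ polyAlg K := sub_mem (one_mem _)
    ((polyAlg K).smul_mem (mul_mem (toContinuousMapOn_mem_polyAlg _) hw) _)
  have hf (z : K) : f z = 1 - d⁻¹ * ((z - c + (c - x)) * w z) := by simp [f]
  have hf_le {z : K} {m : ℝ} (hm : ‖w z‖ ≤ m) : ‖f z‖ ≤ m * (m + 8) := by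
    rw [hf]
    exact (hwz z).1.norm_one_sub_le_of_norm_le hd (by rw [← dist_eq_norm]; linarith) hm
  have hw_le (z : K) : ‖w z‖ ≤ 33 := by
    rcases le_or_gt (3 * r) (dist z x) with hfar | hnear
    · linarith [(hwz z).2 hfar]
    · have hzc : ‖(z : ℂ) - c‖ ≤ 32 * ‖d‖ := by
        rw [← dist_eq_norm]
        rw [Subtype.dist_eq] at hnear
        linarith [dist_triangle_right (z : ℂ) c x]
      linarith [(hwz z).1.norm_le hd hzc]
  have hw_far (z : K) (hz : 19 * r ≤ dist z x) : ‖w z‖ ≤ 1 / 18 := by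
    rw [Subtype.dist_eq] at hz
    have hzc : 18 * r ≤ ‖(z : ℂ) - c‖ := by
      rw [← dist_eq_norm]
      linarith [dist_triangle (z : ℂ) c x]
    have hwle := (hwz z).1.norm_mul_le ((hwz z).2 (by linarith)).le
    refine le_of_mul_le_mul_left ?_ hr
    nlinarith [norm_nonneg (w z)]
  refine ⟨f, hf_mem, by simp [f], (ContinuousMap.norm_le _ (by norm_num)).2 fun z ↦ ?_,
    fun z hz ↦ ?_⟩
  · linarith [hf_le (hw_le z)]
  · linarith [hf_le (hw_far z hz)]

theorem PolyConvex1.hasBoundedPeaking (hK : PolyConvex1 K) {x : K}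
    (hx : (x : ℂ) ∈ frontier K) : HasBoundedPeaking (polyAlg K : Set C(K, ℂ)) x 1353 (1 / 2) := by
  intro V hV
  obtain ⟨η, hη, hηV⟩ := Metric.mem_nhds_iff.1 hV
  obtain ⟨f, hf, hfx, hf_norm, hf_far⟩ :=
    hK.exists_mem_polyAlg_norm_le_half hx (r := η / 19) (by positivity)
  refine ⟨f, hf, hfx, hf_norm, fun z hz ↦ hf_far z ?_⟩
  have hzη : η ≤ dist z x := not_lt.1 fun h ↦ hz (hηV h)
  linarith

end PolyAlg

/-- Every boundary point of a compact polynomially convex set `K ⊆ ℂ`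
is a peak point for the algebra `P(K)`. -/
theorem stmt6 (K : Set ℂ) (hKc : IsCompact K) (hK : PolyConvex1 K)
    (x : ℂ) (hx : x ∈ frontier K) :
    ∃ f : ℂ → ℂ, MemPolyAlg K f ∧ f x = 1 ∧ ∀ y ∈ K, y ≠ x → ‖f y‖ < 1 := by
  have : CompactSpace K := isCompact_iff_compactSpace.1 hKc
  have hxK : x ∈ K := hKc.isClosed.frontier_subset hx
  obtain ⟨f, hf, hfx, hf_lt⟩ : IsPeakPoint (polyAlg K : Set C(K, ℂ)) ⟨x, hxK⟩ :=
    HasBoundedPeaking.isPeakPoint (A := (polyAlg K).toSubmodule) isClosed_polyAlg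
      (hK.hasBoundedPeaking hx) (by norm_num) (by norm_num)
  obtain ⟨g, hg⟩ : ∃ g : ℂ → ℂ, K.domRestrict g = f :=
    Subtype.val_injective.surjective_comp_right f
  refine ⟨g, memPolyAlg_of_domRestrict_eq hf hg, ?_, fun y hy hyx ↦ ?_⟩
  · exact (congrFun hg ⟨x, hxK⟩).trans hfx
  · have hgy : g y = f ⟨y, hy⟩ := congrFun hg ⟨y, hy⟩
    rw [hgy]
    exact hf_lt _ fun h ↦ hyx (congrArg Subtype.val h)
end
end
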